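/- Let Ω ⊂ ℂ be a bounded domain containing 0 whose boundary is an analytic Jordan curve, let u be a negative continuous subharmonic exhaustion of Ω with finite Monge–Ampère mass, and let f ∈ H^p_u(Ω), 1 ≤ p < ∞. Then f factors as f = I·F where I is Ω-inner and F is Ω-outer, and moreover both I ∈ H^p_u(Ω) and F ∈ H^p_u(Ω). -/

import Mathlib

open MeasureTheory Filter Metric Complex Set
open scoped Real ENNReal Topology

noncomputable section

/-- The Laplacian of a real-valued function on `ℂ ≅ ℝ²`. -/
def lap (φ : ℂ → ℝ) (z : ℂ) : ℝ :=
  fderiv ℝ (fun w => fderiv ℝ φ w 1) z 1 +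
    fderiv ℝ (fun w => fderiv ℝ φ w Complex.I) z Complex.I

/-- `h` is harmonic on `s`. -/
def HarmonicOn (h : ℂ → ℝ) (s : Set ℂ) : Prop :=
  ContDiffOn ℝ 2 h s ∧ ∀ z ∈ s, lap h z = 0

/-- `u` is subharmonic on `s` (continuous with the sub-mean-value property). -/
def SubharmonicOn (u : ℂ → ℝ) (s : Set ℂ) : Prop :=
  ContinuousOn u s ∧ ∀ z ∈ s, ∀ r : ℝ, 0 < r → closedBall z r ⊆ s →
    u z ≤ (2 * Real.pi)⁻¹ *
      ∫ t in (0:ℝ)..(2 * Real.pi), u (z + (r : ℂ) * Complex.exp ((t : ℂ) * Complex.I))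

/-- `u` is a negative continuous subharmonic exhaustion function for `Ω`:
sublevel sets `{u < c}`, `c < 0`, are relatively compact in `Ω`. -/
structure IsExhaustion (u : ℂ → ℝ) (Ω : Set ℂ) : Prop where
  neg : ∀ z ∈ Ω, u z < 0
  subh : SubharmonicOn u Ω
  exh : ∀ c : ℝ, c < 0 → IsCompact (closure {z | z ∈ Ω ∧ u z < c}) ∧
    closure {z | z ∈ Ω ∧ u z < c} ⊆ Ω

/-- `ν` is the Riesz measure `dd^c u = (1/4) Δu dA` of `u` on `Ω`, characterized
distributionally: `∫ φ dν = (1/4) ∫_Ω u Δφ dA` for test functions `φ`. -/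
def IsRieszMeasure (u : ℂ → ℝ) (Ω : Set ℂ) (ν : Measure ℂ) : Prop :=
  ν Ωᶜ = 0 ∧
  ∀ φ : ℂ → ℝ, ContDiff ℝ 2 φ → HasCompactSupport φ → tsupport φ ⊆ Ω →
    ∫ z, φ z ∂ν = (4 : ℝ)⁻¹ * ∫ z in Ω, u z * lap φ z

/-- `μ` is the Monge–Ampère measure `μ_{u,r} = dd^c max(u,r) - χ_{Ω∖{u<r}} dd^c u`,
where `ν = dd^c u`. -/
def IsMAMeasure (u : ℂ → ℝ) (Ω : Set ℂ) (ν : Measure ℂ) (r : ℝ) (μ : Measure ℂ) : Prop :=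
  ∃ νr : Measure ℂ, IsRieszMeasure (fun z => max (u z) r) Ω νr ∧
    μ = νr - ν.restrict {z | z ∈ Ω ∧ r ≤ u z}

/-- The `p`-th power of the Poletsky–Stessin Hardy "norm",
`limsup_{r→0⁻} ∫ |f|^p dμ_{u,r}`. -/
def psNormPow (p : ℝ) (μfam : ℝ → Measure ℂ) (f : ℂ → ℂ) : ℝ≥0∞ :=
  Filter.limsup (fun r => ∫⁻ z, ENNReal.ofReal (‖f z‖ ^ p) ∂(μfam r))
    (nhdsWithin 0 (Set.Iio 0))

/-- The Poletsky–Stessin Hardy norm. -/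
def psNorm (p : ℝ) (μfam : ℝ → Measure ℂ) (f : ℂ → ℂ) : ℝ≥0∞ :=
  psNormPow p μfam f ^ (1 / p)

/-- Membership in the Poletsky–Stessin Hardy space `H^p_u(Ω)`, where `μfam r = μ_{u,r}`. -/
def MemPS (p : ℝ) (Ω : Set ℂ) (μfam : ℝ → Measure ℂ) (f : ℂ → ℂ) : Prop :=
  DifferentiableOn ℂ f Ω ∧ psNormPow p μfam f < ⊤

/-- Membership in the classical Hardy space `H^p(Ω)`: `|f|^p` has a harmonic majorant. -/
def MemHClassical (p : ℝ) (Ω : Set ℂ) (f : ℂ → ℂ) : Prop :=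
  DifferentiableOn ℂ f Ω ∧
    ∃ h : ℂ → ℝ, HarmonicOn h Ω ∧ ∀ z ∈ Ω, ‖f z‖ ^ p ≤ h z

/-- A bounded domain in `ℂ` containing `0` whose boundary is an analytic Jordan curve:
there is a conformal map of the unit disc onto `Ω` extending analytically and injectively
across the closed disc, carrying the unit circle onto the boundary of `Ω`. -/
structure AnalyticJordanDomain (Ω : Set ℂ) : Prop where
  isOpen : IsOpen Ω
  isConnected : IsConnected Ω
  isBounded : Bornology.IsBounded Ω
  zero_mem : (0:ℂ) ∈ Ω
  analyticBoundary : ∃ (U : Set ℂ) (ψ : ℂ → ℂ), IsOpen U ∧ closedBall (0:ℂ) 1 ⊆ U ∧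
    DifferentiableOn ℂ ψ U ∧ Set.InjOn ψ U ∧ ψ '' ball (0:ℂ) 1 = Ω ∧
    ψ '' sphere (0:ℂ) 1 = frontier Ω

/-- `μ` is the boundary Monge–Ampère measure: the weak* limit of the measures
`μfam r = μ_{u,r}` as `r → 0⁻`. -/
def IsBoundaryMA (μfam : ℝ → Measure ℂ) (μ : Measure ℂ) : Prop :=
  ∀ φ : ℂ → ℝ, Continuous φ →
    Filter.Tendsto (fun r => ∫ z, φ z ∂(μfam r)) (nhdsWithin 0 (Set.Iio 0))
      (nhds (∫ z, φ z ∂μ))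

/-- `f` has nontangential limit `L` at the boundary point `ξ` of `Ω`. -/
def NTLim (Ω : Set ℂ) (f : ℂ → ℂ) (ξ : ℂ) (L : ℂ) : Prop :=
  ∀ C : ℝ, 1 < C →
    Filter.Tendsto f
      (nhdsWithin ξ {z | z ∈ Ω ∧ dist z ξ ≤ C * infDist z (frontier Ω)}) (nhds L)

/-- Arc length measure on the boundary of `Ω` (1-dimensional Hausdorff measure). -/
def arcLen (Ω : Set ℂ) : Measure ℂ := (μH[1] : Measure ℂ).restrict (frontier Ω)


/-- `ψ` is a conformal map of the unit disc onto `Ω` with `ψ 0 = 0`. -/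
def IsConformalOnto (ψ : ℂ → ℂ) (Ω : Set ℂ) : Prop :=
  DifferentiableOn ℂ ψ (ball (0:ℂ) 1) ∧ Set.InjOn ψ (ball (0:ℂ) 1) ∧
    ψ '' ball (0:ℂ) 1 = Ω ∧ ψ 0 = 0

/-- `h` is `Ω`-inner: `h ∘ ψ` has unimodular nontangential boundary values a.e. on the
unit circle. -/
def OmegaInner (Ω : Set ℂ) (ψ : ℂ → ℂ) (h : ℂ → ℂ) : Prop :=
  DifferentiableOn ℂ h Ω ∧
    ∀ᵐ ξ ∂(arcLen (ball (0:ℂ) 1)), ∃ L : ℂ,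
      NTLim (ball (0:ℂ) 1) (h ∘ ψ) ξ L ∧ ‖L‖ = 1

/-- `h` is `Ω`-outer: `h ∘ ψ` is outer, i.e.
`log|h(ψ 0)| = ∫_{∂𝔻} log|(h∘ψ)*| dσ` with `σ` normalized arc length. -/
def OmegaOuter (Ω : Set ℂ) (ψ : ℂ → ℂ) (h : ℂ → ℂ) : Prop :=
  DifferentiableOn ℂ h Ω ∧
    ∃ b : ℂ → ℂ,
      (∀ᵐ ξ ∂(arcLen (ball (0:ℂ) 1)), NTLim (ball (0:ℂ) 1) (h ∘ ψ) ξ (b ξ)) ∧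
      Real.log ‖h (ψ 0)‖ =
        (2 * Real.pi)⁻¹ * ∫ ξ, Real.log ‖b ξ‖ ∂(arcLen (ball (0:ℂ) 1))

theorem circleAverage_poisson_one {z : ℂ} (hz : z ∈ ball (0:ℂ) 1) :
    Real.circleAverage (fun ζ => poissonKernel 0 z ζ) 0 1 = 1 := by
  have h := InnerProductSpace.HarmonicOnNhd.circleAverage_poissonKernel_smul (f := fun _ => (1:ℝ))
    (c := 0) (R := 1) (w := z) (fun x _ => by
      constructor
      · fun_prop
      · simp) hz
  simpa [Pi.mul_def, smul_eq_mul] using h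

theorem norm_one_sub_conj {z ζ : ℂ} (hζ : ‖ζ‖ = 1) :
    ‖1 - (starRingEnd ℂ) z * ζ‖ = ‖ζ - z‖ := by
  have h1 : (1:ℂ) = ζ * (starRingEnd ℂ) ζ := by
    rw [Complex.mul_conj, Complex.normSq_eq_norm_sq, hζ]; simp
  have : 1 - (starRingEnd ℂ) z * ζ = ζ * (starRingEnd ℂ) (ζ - z) := by
    rw [map_sub]; nth_rw 1 [h1]; ring
  rw [this, norm_mul, hζ, Complex.norm_conj, one_mul]

theorem deriv_formula {E : ℂ → ℂ} (hE : DiffContOnCl ℂ E (ball 0 1)) {z : ℂ}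
    (hz : z ∈ ball (0:ℂ) 1) :
    deriv E z = Real.circleAverage (fun ζ => (ζ / (ζ - z) ^ 2 -
      ζ * (starRingEnd ℂ) z ^ 2 / (1 - (starRingEnd ℂ) z * ζ) ^ 2) * E ζ) 0 1 := by
  have hz' : ‖z‖ < 1 := by simpa using hz
  have hcont : ContinuousOn E (sphere 0 1) := hE.2.mono
    (sphere_subset_closedBall.trans_eq (closure_ball 0 one_ne_zero).symm)
  have hI : CircleIntegrable E 0 1 := ContinuousOn.circleIntegrable zero_le_one hcont
  have hne : ∀ ζ ∈ sphere (0:ℂ) 1, ζ - z ≠ 0 := by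
    intro ζ hζ h
    have h1 : ‖ζ‖ = 1 := by simpa using hζ
    rw [sub_eq_zero.1 h] at h1; linarith
  have hne2 : ∀ ζ ∈ closedBall (0:ℂ) 1, 1 - (starRingEnd ℂ) z * ζ ≠ 0 := by
    intro ζ hζ h
    have h1 : ‖ζ‖ ≤ 1 := by simpa using hζ
    have h2 : ‖(starRingEnd ℂ) z * ζ‖ = 1 := by rw [← sub_eq_zero.1 h]; simp
    rw [norm_mul, Complex.norm_conj] at h2
    nlinarith [norm_nonneg z, norm_nonneg ζ]
  have hH : ∀ w ∈ ball (0:ℂ) 1,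
      Real.circleAverage (fun ζ ↦ herglotzRieszKernel 0 w ζ • E ζ) 0 1 = 2 * E w - E 0 := by
    intro w hw
    have hw' : ‖w‖ < 1 := by simpa using hw
    have hne' : ∀ ζ ∈ sphere (0:ℂ) 1, ζ - w ≠ 0 := by
      intro ζ hζ h
      have h1 : ‖ζ‖ = 1 := by simpa using hζ
      rw [sub_eq_zero.1 h] at h1; linarith
    have e1 : Real.circleAverage (fun ζ ↦ (ζ / (ζ - w)) • E ζ) 0 1 = E w := by
      have := DiffContOnCl.circleAverage_smul_div (f := E) (c := 0) (R := 1) (w := w)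
        (by simpa using hE) (by simpa using hw)
      simpa using this
    have e2 : Real.circleAverage E 0 1 = E 0 := by
      have := DiffContOnCl.circleAverage (f := E) (c := 0) (R := 1) (by simpa using hE)
      simpa using this
    have e3 : Real.circleAverage (fun ζ ↦ herglotzRieszKernel 0 w ζ • E ζ) 0 1 =
        Real.circleAverage (fun ζ ↦ (2:ℂ) • ((ζ / (ζ - w)) • E ζ) - E ζ) 0 1 := by
      apply Real.circleAverage_congr_sphere
      intro ζ hζ
      have := hne' ζ (by simpa using hζ)
      simp only [herglotzRieszKernel_def, smul_eq_mul, sub_zero]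
      field_simp
      ring
    have hci : CircleIntegrable (fun ζ ↦ (ζ / (ζ - w)) • E ζ) 0 1 := by
      apply ContinuousOn.circleIntegrable zero_le_one
      fun_prop (disch := assumption)
    rw [e3, Real.circleAverage_fun_sub _ hI, Real.circleAverage_fun_smul, e1, e2]
    · simp
    · have := hci.const_smul (a := (2:ℂ))
      exact this
  have hd := hasDerivAt_circleAverage_herglotzRieszKernel_smul hI hz
  have hd2 : HasDerivAt (fun w => 2 * E w - E 0)
      (Real.circleAverage (fun ζ ↦ (2 * ζ / (ζ - z) ^ 2) • E ζ) 0 1) z := by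
    apply hd.congr_of_eventuallyEq
    filter_upwards [isOpen_ball.mem_nhds hz] with w hw
    exact (hH w hw).symm
  have hdE : HasDerivAt E (deriv E z) z :=
    (hE.1.differentiableAt (isOpen_ball.mem_nhds hz)).hasDerivAt
  have hd3 : HasDerivAt (fun w => 2 * E w - E 0) (2 * deriv E z) z :=
    (hdE.const_mul 2).sub_const _
  have h4 := hd3.unique hd2
  have h5 : Real.circleAverage (fun ζ => (ζ * (starRingEnd ℂ) z ^ 2 /
      (1 - (starRingEnd ℂ) z * ζ) ^ 2) * E ζ) 0 1 = 0 := by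
    have := DiffContOnCl.circleAverage (f := (fun ζ => (ζ * (starRingEnd ℂ) z ^ 2 /
      (1 - (starRingEnd ℂ) z * ζ) ^ 2) • E ζ)) (c := 0) (R := 1) (by
        rw [abs_one]
        apply DiffContOnCl.smul _ hE
        apply DifferentiableOn.diffContOnCl
        rw [closure_ball 0 one_ne_zero]
        fun_prop (disch := intro x hx; exact pow_ne_zero _ (hne2 x hx)))
    simpa using this
  have h6 : Real.circleAverage (fun ζ ↦ (2 * ζ / (ζ - z) ^ 2) • E ζ) 0 1 =
      2 * Real.circleAverage (fun ζ ↦ (ζ / (ζ - z) ^ 2) * E ζ) 0 1 := by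
    rw [← smul_eq_mul, ← Real.circleAverage_fun_smul]
    congr 1; ext ζ; simp; ring
  rw [h6] at h4
  have h7 : deriv E z = Real.circleAverage (fun ζ ↦ (ζ / (ζ - z) ^ 2) * E ζ) 0 1 :=
    mul_left_cancel₀ two_ne_zero h4
  simp_rw [sub_mul]
  rw [Real.circleAverage_fun_sub, h5, h7, sub_zero]
  · apply ContinuousOn.circleIntegrable zero_le_one
    fun_prop (disch := intro x hx; exact pow_ne_zero _ (hne x hx))
  · apply ContinuousOn.circleIntegrable zero_le_one
    have : ∀ ζ ∈ sphere (0:ℂ) 1, (1 - (starRingEnd ℂ) z * ζ) ^ 2 ≠ 0 := fun x hx =>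
      pow_ne_zero _ (hne2 x (sphere_subset_closedBall hx))
    fun_prop (disch := assumption)

theorem norm_deriv_le_of_bound {E : ℂ → ℂ} (hE : DiffContOnCl ℂ E (ball 0 1)) {z : ℂ}
    (hz : z ∈ ball (0:ℂ) 1) {a c : ℝ}
    (hb : ∀ ζ ∈ sphere (0:ℂ) 1, ‖E ζ‖ ≤ a * ‖ζ - z‖ + c * ‖ζ - z‖ ^ 3) :
    ‖deriv E z‖ ≤ 2 * a + 2 * c * (1 - ‖z‖ ^ 2) := by
  have hz' : ‖z‖ < 1 := by simpa using hz
  have hne : ∀ ζ ∈ sphere (0:ℂ) 1, ζ - z ≠ 0 := by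
    intro ζ hζ h
    have h1 : ‖ζ‖ = 1 := by simpa using hζ
    rw [sub_eq_zero.1 h] at h1; linarith
  have hpk : CircleIntegrable (fun ζ => poissonKernel 0 z ζ) 0 1 := by
    apply ContinuousOn.circleIntegrable zero_le_one
    simp only [poissonKernel_def, sub_zero]
    fun_prop (disch := intro x hx; exact pow_ne_zero _ (norm_ne_zero_iff.2 (hne x hx)))
  rw [deriv_formula hE hz]
  calc _ ≤ Real.circleAverage (fun ζ => 2 * a * poissonKernel 0 z ζ + 2 * c * (1 - ‖z‖^2)) 0 1 := by
        rw [Real.circleAverage, Real.circleAverage, norm_smul, smul_eq_mul]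
        have h2 : ‖(2 * π)⁻¹‖ = (2 * π)⁻¹ := by
          rw [Real.norm_of_nonneg]; positivity
        rw [h2]
        gcongr
        apply intervalIntegral.norm_integral_le_of_norm_le (by positivity)
        · refine Filter.Eventually.of_forall fun θ _ => ?_
          set ζ := circleMap 0 1 θ with hζdef
          have hζs : ζ ∈ sphere (0:ℂ) 1 := circleMap_mem_sphere _ zero_le_one _
          have hζ : ‖ζ‖ = 1 := by simpa using hζs
          have hn := hne ζ hζs
          have hn' : 0 < ‖ζ - z‖ := norm_pos_iff.2 hn
          have hn2 : 1 - (starRingEnd ℂ) z * ζ ≠ 0 := by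
            rw [← norm_pos_iff, norm_one_sub_conj hζ]; exact hn'
          have key : ζ / (ζ - z) ^ 2 - ζ * (starRingEnd ℂ) z ^ 2 / (1 - (starRingEnd ℂ) z * ζ) ^ 2
              = ζ * ((1 - (starRingEnd ℂ) z * ζ) + (starRingEnd ℂ) z * (z - ζ)) *
                ((1 - (‖z‖ ^ 2 : ℝ) : ℂ)) / ((ζ - z) ^ 2 * (1 - (starRingEnd ℂ) z * ζ) ^ 2) := by
            have : ((‖z‖ ^ 2 : ℝ) : ℂ) = (starRingEnd ℂ) z * z := by
              rw [← Complex.normSq_eq_norm_sq, mul_comm, Complex.mul_conj]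
            rw [this, div_sub_div _ _ (pow_ne_zero 2 hn) (pow_ne_zero 2 hn2)]
            congr 1
            ring
          have hk : ‖ζ / (ζ - z) ^ 2 - ζ * (starRingEnd ℂ) z ^ 2 /
              (1 - (starRingEnd ℂ) z * ζ) ^ 2‖ ≤ 2 * (1 - ‖z‖^2) / ‖ζ - z‖ ^ 3 := by
            rw [key, norm_div, norm_mul, norm_mul, norm_mul, norm_pow, norm_pow,
              norm_one_sub_conj hζ, hζ, one_mul]
            have e1 : ‖(1 - (‖z‖ ^ 2 : ℝ) : ℂ)‖ = 1 - ‖z‖^2 := by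
              rw [← Complex.ofReal_one, ← Complex.ofReal_sub, Complex.norm_real,
                Real.norm_of_nonneg]
              nlinarith [norm_nonneg z]
            have e2 : ‖(1 - (starRingEnd ℂ) z * ζ) + (starRingEnd ℂ) z * (z - ζ)‖ ≤
                2 * ‖ζ - z‖ := by
              refine (norm_add_le _ _).trans ?_
              rw [norm_one_sub_conj hζ, norm_mul, Complex.norm_conj, norm_sub_rev z ζ]
              nlinarith
            rw [e1, div_le_div_iff₀ (by positivity) (by positivity)]
            have : 0 ≤ 1 - ‖z‖^2 := by nlinarith [norm_nonneg z]
            calc _ ≤ (2 * ‖ζ - z‖) * (1 - ‖z‖^2) * ‖ζ - z‖^3 := by gcongr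
              _ = _ := by ring
          rw [norm_mul]
          have : 0 ≤ 2 * (1 - ‖z‖^2) / ‖ζ - z‖ ^ 3 := (norm_nonneg _).trans hk
          calc _ ≤ 2 * (1 - ‖z‖^2) / ‖ζ - z‖ ^ 3 * (a * ‖ζ - z‖ + c * ‖ζ - z‖ ^ 3) := by
                gcongr
                exact hb ζ hζs
            _ = _ := by
                simp only [poissonKernel_def, sub_zero, hζ]
                field_simp
        · have := ((hpk.const_smul (a := 2 * a)).add (circleIntegrable_const (2 * c * (1 - ‖z‖^2)) 0 1))
          exact this
    _ = _ := by
        rw [Real.circleAverage_fun_add, Real.circleAverage_const]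
        · have : Real.circleAverage (fun ζ => 2 * a * poissonKernel 0 z ζ) 0 1 = 2 * a := by
            simp_rw [← smul_eq_mul (2 * a)]
            rw [Real.circleAverage_fun_smul, circleAverage_poisson_one hz]; simp
          rw [this]
        · exact hpk.const_smul (a := 2 * a)
        · exact circleIntegrable_const _ _ _

theorem infDist_frontier_ball {z : ℂ} (hz : z ∈ ball (0:ℂ) 1) :
    infDist z (frontier (ball (0:ℂ) 1)) ≤ 1 - ‖z‖ := by
  have hz' : ‖z‖ < 1 := by simpa using hz
  rw [frontier_ball 0 one_ne_zero]
  by_cases h0 : z = 0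
  · subst h0
    refine (infDist_le_dist_of_mem (y := 1) (by simp)).trans ?_
    simp
  · have hn : 0 < ‖z‖ := norm_pos_iff.2 h0
    refine (infDist_le_dist_of_mem (y := (‖z‖⁻¹ : ℝ) • z) ?_).trans ?_
    · simp [hn.ne']
    · rw [dist_eq_norm]
      have : z - (‖z‖⁻¹:ℝ) • z = (1 - ‖z‖⁻¹ : ℝ) • z := by rw [sub_smul, one_smul]
      rw [this, norm_smul, Real.norm_eq_abs, abs_of_nonpos]
      · field_simp; linarith
      · have := (one_le_inv₀ hn).2 hz'.le
        linarith

theorem sphere_smallo {Bh : ℂ → ℂ} {θ0 : ℝ} {D : ℂ}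
    (hD : HasDerivAt (fun t : ℝ => Bh (circleMap 0 1 t)) D θ0) {ε : ℝ} (hε : 0 < ε) :
    ∃ δ > 0, ∀ ζ ∈ sphere (0:ℂ) 1, ‖ζ - circleMap 0 1 θ0‖ < δ →
      ‖Bh ζ - Bh (circleMap 0 1 θ0) - D / (circleMap 0 1 θ0 * I) * (ζ - circleMap 0 1 θ0)‖ ≤
        ε * ‖ζ - circleMap 0 1 θ0‖ := by
  set ζ0 := circleMap 0 1 θ0 with hζ0
  have hζ0n : ‖ζ0‖ = 1 := by simp [hζ0]
  have hζ00 : ζ0 ≠ 0 := by rw [← norm_pos_iff, hζ0n]; norm_num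
  have h1 : HasDerivAt (fun t : ℝ => Bh (circleMap 0 1 t) - Bh ζ0 -
      D / (ζ0 * I) * (circleMap 0 1 t - ζ0)) 0 θ0 := by
    have h2 := hasDerivAt_circleMap 0 1 θ0
    have h3 := (hD.sub_const (Bh ζ0)).sub ((h2.sub_const ζ0).const_mul (D / (ζ0 * I)))
    rw [← hζ0, div_mul_cancel₀ _ (by simp [hζ00]), sub_self] at h3
    exact h3
  have h2 := h1.isLittleO
  simp only [← hζ0, sub_self, mul_zero, smul_zero, sub_zero] at h2
  have hth : Tendsto (fun ζ : ℂ => θ0 + arg (ζ / ζ0)) (𝓝 ζ0) (𝓝 θ0) := by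
    have : ContinuousAt (fun ζ : ℂ => θ0 + arg (ζ / ζ0)) ζ0 := by
      apply ContinuousAt.add continuousAt_const
      apply ContinuousAt.comp (g := arg)
      · apply continuousAt_arg; rw [div_self hζ00]; simp
      · fun_prop
    have := this.tendsto
    simpa [div_self hζ00] using this
  have h3 := h2.comp_tendsto hth
  have h4 : (fun ζ : ℂ => (θ0 + arg (ζ / ζ0)) - θ0) =O[𝓝 ζ0] (fun ζ => ζ - ζ0) := by
    have hl : DifferentiableAt ℂ (fun ζ : ℂ => Complex.log (ζ / ζ0)) ζ0 := by
      apply DifferentiableAt.clog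
      · fun_prop
      · rw [div_self hζ00]; simp
    have h5 := hl.isBigO_sub
    simp only [div_self hζ00, Complex.log_one, sub_zero] at h5
    refine (Asymptotics.IsBigO.of_bound 1 ?_).trans h5
    refine Eventually.of_forall fun ζ => ?_
    rw [add_sub_cancel_left, one_mul, ← Complex.log_im]
    exact Complex.abs_im_le_norm _
  have h5 := (h3.trans_isBigO h4).def hε
  rw [Metric.eventually_nhds_iff] at h5
  obtain ⟨δ, hδ, h6⟩ := h5
  refine ⟨δ, hδ, fun ζ hζ hd => ?_⟩
  have h7 := h6 (y := ζ) (by rwa [dist_eq_norm])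
  have h8 : circleMap 0 1 (θ0 + arg (ζ / ζ0)) = ζ := by
    have hn : ‖ζ / ζ0‖ = 1 := by
      rw [norm_div, hζ0n]; simpa using hζ
    have := Complex.norm_mul_exp_arg_mul_I (ζ / ζ0)
    rw [hn] at this
    simp only [circleMap, ofReal_add, add_mul, Complex.exp_add] at hζ0 ⊢
    simp only [ofReal_one, one_mul, zero_add] at hζ0 this ⊢
    rw [this, ← hζ0]; field_simp
  simp only [Function.comp, h8] at h7
  exact h7

theorem fatou_bdd {b : ℂ → ℂ} (hb : DifferentiableOn ℂ b (ball 0 1))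
    (hb1 : ∀ z ∈ ball (0:ℂ) 1, ‖b z‖ ≤ 1) :
    ∀ᵐ θ : ℝ, ∃ L, NTLim (ball 0 1) b (circleMap 0 1 θ) L := by
  obtain ⟨B, hB⟩ := hb.isExactOn_ball
  have hLip : LipschitzOnWith 1 B (ball 0 1) :=
    (convex_ball (0:ℂ) 1).lipschitzOnWith_of_nnnorm_hasDerivWithin_le
      (fun x hx => (hB x hx).hasDerivWithinAt) (fun x hx => by exact_mod_cast hb1 x hx)
  obtain ⟨Bh, hBhL, hBh⟩ := hLip.extend_finite_dimension
  set K := lipschitzExtensionConstant ℂ * 1 with hK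
  have hae : ∀ᵐ θ : ℝ, DifferentiableAt ℝ (fun t : ℝ => Bh (circleMap 0 1 t)) θ := by
    have := (hBhL.comp (lipschitzWith_circleMap 0 1)).ae_differentiableAt_real
    exact this
  filter_upwards [hae] with θ0 hθ
  set ζ0 := circleMap 0 1 θ0 with hζ0
  have hζ0n : ‖ζ0‖ = 1 := by simp [hζ0]
  set c := deriv (fun t : ℝ => Bh (circleMap 0 1 t)) θ0 / (ζ0 * I) with hc
  refine ⟨c, fun C hC => ?_⟩
  rw [Metric.tendsto_nhds]
  intro η hη
  set ε := η / (8 * (1 + C)) with hε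
  have hε0 : 0 < ε := by positivity
  obtain ⟨δ, hδ, hsm⟩ := sphere_smallo hθ.hasDerivAt hε0
  simp only [← hζ0, ← hc] at hsm
  set M := ((K:ℝ) + ‖c‖) / δ ^ 2 with hM
  have hM0 : 0 ≤ M := by positivity
  have hbound : ∀ ζ ∈ sphere (0:ℂ) 1, ‖Bh ζ - Bh ζ0 - c * (ζ - ζ0)‖ ≤
      ε * ‖ζ - ζ0‖ + M * ‖ζ - ζ0‖ ^ 3 := by
    intro ζ hζ
    by_cases h : ‖ζ - ζ0‖ < δ
    · refine (hsm ζ hζ h).trans ?_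
      have : 0 ≤ M * ‖ζ - ζ0‖ ^ 3 := by positivity
      linarith
    · push Not at h
      have h1 : ‖Bh ζ - Bh ζ0 - c * (ζ - ζ0)‖ ≤ (K + ‖c‖) * ‖ζ - ζ0‖ := by
        refine (norm_sub_le _ _).trans ?_
        rw [norm_mul, add_mul]
        gcongr
        exact hBhL.norm_sub_le _ _
      have h2 : (K + ‖c‖) * ‖ζ - ζ0‖ ≤ M * ‖ζ - ζ0‖ ^ 3 := by
        rw [hM, div_mul_eq_mul_div, le_div_iff₀ (by positivity)]
        have : δ ^ 2 ≤ ‖ζ - ζ0‖ ^ 2 := by gcongr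
        calc _ ≤ ((K:ℝ) + ‖c‖) * ‖ζ - ζ0‖ * ‖ζ - ζ0‖ ^ 2 := by gcongr
          _ = _ := by ring
      have : 0 ≤ ε * ‖ζ - ζ0‖ := by positivity
      linarith
  have hlim : ∀ᶠ z in 𝓝[{z | z ∈ ball (0:ℂ) 1 ∧ dist z ζ0 ≤ C * infDist z (frontier (ball (0:ℂ) 1))}] ζ0,
      2 * (M * (1 + C)^3) * (1 - ‖z‖^2) < η / 4 := by
    apply nhdsWithin_le_nhds
    have : Tendsto (fun z : ℂ => 2 * (M * (1 + C)^3) * (1 - ‖z‖^2)) (𝓝 ζ0)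
        (𝓝 (2 * (M * (1 + C)^3) * (1 - ‖ζ0‖^2))) := Continuous.tendsto (by fun_prop) _
    rw [hζ0n] at this
    simp only [one_pow, sub_self, mul_zero] at this
    exact this.eventually_lt_const (by positivity)
  filter_upwards [hlim, self_mem_nhdsWithin] with z hz1 hz2
  obtain ⟨hz, hzd⟩ := hz2
  have hz' : ‖z‖ < 1 := by simpa using hz
  have hzd' : ‖z - ζ0‖ ≤ C * (1 - ‖z‖) := by
    rw [dist_eq_norm] at hzd
    exact hzd.trans (by gcongr; exact infDist_frontier_ball hz)
  have hcomp : ∀ ζ ∈ sphere (0:ℂ) 1, ‖ζ - ζ0‖ ≤ (1 + C) * ‖ζ - z‖ := by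
    intro ζ hζ
    have h1 : ‖ζ‖ = 1 := by simpa using hζ
    have h2 : 1 - ‖z‖ ≤ ‖ζ - z‖ := by rw [← h1]; exact norm_sub_norm_le _ _
    have h3 : ‖ζ - ζ0‖ ≤ ‖ζ - z‖ + ‖z - ζ0‖ := norm_sub_le_norm_sub_add_norm_sub _ _ _
    nlinarith
  have hE : DiffContOnCl ℂ (fun ζ => Bh ζ - Bh ζ0 - c * (ζ - ζ0)) (ball 0 1) := by
    constructor
    · have : DifferentiableOn ℂ Bh (ball 0 1) := by
        have h : DifferentiableOn ℂ B (ball 0 1) := fun x hx =>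
          (hB x hx).differentiableAt.differentiableWithinAt
        exact h.congr fun x hx => (hBh hx).symm
      fun_prop
    · have := hBhL.continuous
      fun_prop
  have hder : deriv (fun ζ => Bh ζ - Bh ζ0 - c * (ζ - ζ0)) z = b z - c := by
    have h1 : HasDerivAt Bh (b z) z := by
      apply (hB z hz).congr_of_eventuallyEq
      filter_upwards [isOpen_ball.mem_nhds hz] with w hw using (hBh hw).symm
    have h2 : HasDerivAt (fun ζ : ℂ => c * (ζ - ζ0)) c z := by
      simpa using ((hasDerivAt_id z).sub_const ζ0).const_mul c
    exact ((h1.sub_const _).sub h2).deriv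
  have hfinal := norm_deriv_le_of_bound hE hz (a := ε * (1 + C)) (c := M * (1 + C)^3) (by
    intro ζ hζ
    refine (hbound ζ hζ).trans ?_
    have h := hcomp ζ hζ
    calc _ ≤ ε * ((1 + C) * ‖ζ - z‖) + M * ((1 + C) * ‖ζ - z‖)^3 := by gcongr
      _ = _ := by ring)
  rw [hder] at hfinal
  rw [dist_eq_norm]
  have : 2 * (ε * (1 + C)) = η / 4 := by rw [hε]; field_simp; norm_num
  linarith

theorem trig_re {T : ℝ} (x : C(AddCircle T, ℂ)) (hx : x ∈ Submodule.span ℂ (range (@fourier T))) :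
    ∀ c : ℂ, ∃ Q : ℂ → ℂ, Differentiable ℂ Q ∧
      ∀ t, (c * x t).re = (Q (AddCircle.toCircle t : ℂ)).re := by
  induction hx using Submodule.span_induction with
  | mem x h =>
    obtain ⟨n, rfl⟩ := h
    intro c
    rcases n with n | n
    · refine ⟨fun z => c * z ^ n, by fun_prop, fun t => ?_⟩
      simp [fourier_apply, AddCircle.toCircle_nsmul]
    · refine ⟨fun z => (starRingEnd ℂ) c * z ^ (n+1), by fun_prop, fun t => ?_⟩
      have h1 : fourier (Int.negSucc n) t = (starRingEnd ℂ) ((AddCircle.toCircle t : ℂ) ^ (n+1)) := by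
        rw [Int.negSucc_eq, fourier_neg, ]
        have : fourier ((n:ℤ)+1) t = (AddCircle.toCircle t : ℂ) ^ (n+1) := by
          have : ((n:ℤ)+1) = ((n+1 : ℕ) : ℤ) := by push_cast; rfl
          rw [this, fourier_apply, natCast_zsmul, AddCircle.toCircle_nsmul]; simp
        rw [this]
      rw [h1, ← Complex.conj_re (_ * _)]
      simp
  | zero => intro c; exact ⟨fun _ => 0, by fun_prop, fun t => by simp⟩
  | add x y _ _ h1 h2 =>
    intro c
    obtain ⟨Q1, h1, h1'⟩ := h1 c
    obtain ⟨Q2, h2, h2'⟩ := h2 c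
    refine ⟨fun z => Q1 z + Q2 z, by fun_prop, fun t => ?_⟩
    rw [Complex.add_re (Q1 _), ← h1', ← h2', ← Complex.add_re]
    congr 1; simp; ring
  | smul a x _ h =>
    intro c
    obtain ⟨Q, h1, h2⟩ := h (c * a)
    refine ⟨Q, h1, fun t => ?_⟩
    rw [← h2]; congr 1; simp; ring

theorem trig_approx {φ : ℂ → ℝ} (hφ : ContinuousOn φ (sphere 0 1)) {ε : ℝ} (hε : 0 < ε) :
    ∃ Q : ℂ → ℂ, Differentiable ℂ Q ∧ ∀ ζ ∈ sphere (0:ℂ) 1, |(Q ζ).re - φ ζ| < ε := by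
  have : Fact (0 < 2 * π) := ⟨by positivity⟩
  let Φ : C(AddCircle (2 * π), ℂ) := ⟨fun t => (φ (AddCircle.toCircle t : ℂ) : ℂ), by
    apply Complex.continuous_ofReal.comp
    apply hφ.comp_continuous
    · exact continuous_subtype_val.comp AddCircle.continuous_toCircle
    · intro x; rw [mem_sphere_zero_iff_norm]; exact Circle.norm_coe _⟩
  have hmem : Φ ∈ (Submodule.span ℂ (range (@fourier (2*π)))).topologicalClosure := by
    rw [span_fourier_closure_eq_top]; trivial
  rw [← SetLike.mem_coe, Submodule.topologicalClosure_coe, Metric.mem_closure_iff] at hmem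
  obtain ⟨x, hx, hd⟩ := hmem ε hε
  obtain ⟨Q, hQ, hQ2⟩ := trig_re x hx 1
  refine ⟨Q, hQ, fun ζ hζ => ?_⟩
  have hc : ∃ t : AddCircle (2*π), (AddCircle.toCircle t : ℂ) = ζ := by
    refine ⟨((arg ζ : ℝ) : AddCircle (2*π)), ?_⟩
    have h1 : ‖ζ‖ = 1 := by simpa using hζ
    have := Complex.norm_mul_exp_arg_mul_I ζ
    rw [h1] at this
    rw [AddCircle.toCircle_apply_mk, Circle.coe_exp]
    have h2 : 2 * π / (2 * π) = 1 := div_self (by positivity)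
    rw [h2, one_mul]; simpa using this
  obtain ⟨t, rfl⟩ := hc
  rw [← hQ2]
  have h1 := ContinuousMap.dist_apply_le_dist (f := Φ) (g := x) t
  rw [dist_eq_norm] at h1
  have h2 : Φ t = (φ (AddCircle.toCircle t : ℂ) : ℂ) := rfl
  have h3 := Complex.abs_re_le_norm (Φ t - x t)
  rw [h2] at h3 h1
  simp only [one_mul]
  rw [Complex.sub_re, Complex.ofReal_re, abs_sub_comm] at h3
  linarith

theorem poisson_continuousOn {z : ℂ} (hz : z ∈ ball (0:ℂ) 1) :
    ContinuousOn (fun ζ => poissonKernel 0 z ζ) (sphere 0 1) := by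
  have hz' : ‖z‖ < 1 := by simpa using hz
  have hne : ∀ ζ ∈ sphere (0:ℂ) 1, ζ - z ≠ 0 := by
    intro ζ hζ h
    have h1 : ‖ζ‖ = 1 := by simpa using hζ
    rw [sub_eq_zero.1 h] at h1; linarith
  simp only [poissonKernel_def, sub_zero]
  fun_prop (disch := intro x hx; exact pow_ne_zero _ (norm_ne_zero_iff.2 (hne x hx)))

theorem poisson_pos {z ζ : ℂ} (hz : z ∈ ball (0:ℂ) 1) (hζ : ζ ∈ sphere (0:ℂ) 1) :
    0 < poissonKernel 0 z ζ := by
  have hz' : ‖z‖ < 1 := by simpa using hz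
  have h1 : ‖ζ‖ = 1 := by simpa using hζ
  have hne : ζ - z ≠ 0 := by
    intro h
    rw [sub_eq_zero.1 h] at h1; linarith
  simp only [poissonKernel_def, sub_zero, h1]
  have := norm_pos_iff.2 hne
  apply div_pos
  · nlinarith [norm_nonneg z]
  · positivity

theorem poisson_re_entire {Q : ℂ → ℂ} (hQ : DiffContOnCl ℂ Q (ball 0 1)) {z : ℂ} (hz : z ∈ ball (0:ℂ) 1) :
    Real.circleAverage (fun ζ => poissonKernel 0 z ζ * (Q ζ).re) 0 1 = (Q z).re := by
  have h := DiffContOnCl.circleAverage_poissonKernel_smul (f := Q) (c := 0) (R := 1) (w := z)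
    (by simpa using hQ) (by simpa using hz)
  have hc : ContinuousOn Q (sphere 0 1) := hQ.2.mono
    (sphere_subset_closedBall.trans_eq (closure_ball 0 one_ne_zero).symm)
  have hI : CircleIntegrable (fun ζ => poissonKernel 0 z ζ • Q ζ) 0 1 := by
    apply ContinuousOn.circleIntegrable zero_le_one
    exact (poisson_continuousOn hz).smul hc
  have h2 := congrArg Complex.re h
  rw [← h2, Real.circleAverage, Real.circleAverage]
  have := Complex.reCLM.intervalIntegral_comp_comm hI
  simp only [Complex.reCLM_apply] at this
  rw [Complex.smul_re]
  simp only [Pi.smul_apply'] 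
  rw [← this]
  simp

theorem norm_le_exp_poisson {g : ℂ → ℂ} (hg : DiffContOnCl ℂ g (ball 0 1)) {φ : ℂ → ℝ}
    (hφ : ContinuousOn φ (sphere 0 1)) (hle : ∀ ζ ∈ sphere (0:ℂ) 1, ‖g ζ‖ ≤ Real.exp (φ ζ))
    {z : ℂ} (hz : z ∈ ball (0:ℂ) 1) :
    ‖g z‖ ≤ Real.exp (Real.circleAverage (fun ζ => poissonKernel 0 z ζ * φ ζ) 0 1) := by
  have key : ∀ ε > 0, ‖g z‖ ≤ Real.exp (Real.circleAverage (fun ζ => poissonKernel 0 z ζ * φ ζ) 0 1 + 2 * ε) := by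
    intro ε hε
    obtain ⟨Q, hQ, hQ2⟩ := trig_approx hφ hε
    have h1 : DiffContOnCl ℂ (fun w => g w * Complex.exp (-Q w)) (ball 0 1) := by
      have : DiffContOnCl ℂ (fun w => Complex.exp (-Q w)) (ball 0 1) :=
        (Differentiable.diffContOnCl (by fun_prop))
      simpa using hg.smul this
    have h2 : ‖g z * Complex.exp (-Q z)‖ ≤ Real.exp ε := by
      apply Complex.norm_le_of_forall_mem_frontier_norm_le isBounded_ball h1 _ (subset_closure hz)
      intro ζ hζ
      rw [frontier_ball 0 one_ne_zero] at hζ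
      rw [norm_mul, Complex.norm_exp, Complex.neg_re]
      calc _ ≤ Real.exp (φ ζ) * Real.exp (-(Q ζ).re) := by gcongr; exact hle ζ hζ
        _ = Real.exp (φ ζ - (Q ζ).re) := by rw [← Real.exp_add]; ring_nf
        _ ≤ _ := by
          apply Real.exp_le_exp.2
          have := abs_lt.1 (hQ2 ζ hζ)
          linarith
    have h3 : (Q z).re ≤ Real.circleAverage (fun ζ => poissonKernel 0 z ζ * φ ζ) 0 1 + ε := by
      rw [← poisson_re_entire hQ.diffContOnCl hz]
      have hp := poisson_continuousOn hz
      have hI : CircleIntegrable (fun ζ => poissonKernel 0 z ζ * φ ζ) 0 1 :=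
        ContinuousOn.circleIntegrable zero_le_one (hp.mul hφ)
      have hI2 : CircleIntegrable (fun ζ => ε * poissonKernel 0 z ζ) 0 1 :=
        ContinuousOn.circleIntegrable zero_le_one (by fun_prop)
      have : Real.circleAverage (fun ζ => poissonKernel 0 z ζ * φ ζ + ε * poissonKernel 0 z ζ) 0 1
          = Real.circleAverage (fun ζ => poissonKernel 0 z ζ * φ ζ) 0 1 + ε := by
        rw [Real.circleAverage_fun_add hI hI2]
        congr 1
        simp_rw [← smul_eq_mul ε]
        rw [Real.circleAverage_fun_smul, circleAverage_poisson_one hz]; simp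
      rw [← this]
      apply Real.circleAverage_mono
      · exact ContinuousOn.circleIntegrable zero_le_one (hp.mul (Complex.continuous_re.comp hQ.continuous).continuousOn)
      · exact hI.add hI2
      · intro ζ hζ
        have hζ' : ζ ∈ sphere (0:ℂ) 1 := by simpa using hζ
        have h5 := poisson_pos hz hζ'
        have := abs_lt.1 (hQ2 ζ hζ')
        nlinarith
    rw [norm_mul, Complex.norm_exp, Complex.neg_re, Real.exp_neg, ← div_eq_mul_inv,
      div_le_iff₀ (Real.exp_pos _), ← Real.exp_add] at h2
    exact h2.trans (Real.exp_le_exp.2 (by linarith))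
  have ht : Tendsto (fun ε : ℝ => Real.exp (Real.circleAverage (fun ζ => poissonKernel 0 z ζ * φ ζ) 0 1 + 2 * ε)) (𝓝[>] 0)
      (𝓝 (Real.exp (Real.circleAverage (fun ζ => poissonKernel 0 z ζ * φ ζ) 0 1 + 2 * 0))) :=
    (Continuous.tendsto (by fun_prop) _).mono_left nhdsWithin_le_nhds
  rw [mul_zero, add_zero] at ht
  exact ge_of_tendsto ht (by filter_upwards [self_mem_nhdsWithin] with ε hε using key ε hε)

noncomputable abbrev mC : Measure ℝ := volume.restrict (Ioc 0 (2 * π))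

theorem cAvg_eq (f : ℂ → ℝ) :
    Real.circleAverage f 0 1 = (2 * π)⁻¹ * ∫ θ, f (circleMap 0 1 θ) ∂mC := by
  rw [Real.circleAverage, intervalIntegral.integral_of_le (by positivity), smul_eq_mul]

theorem cInt_iff {E : Type*} [NormedAddCommGroup E] (f : ℂ → E) :
    CircleIntegrable f 0 1 ↔ Integrable (fun θ => f (circleMap 0 1 θ)) mC := by
  rw [CircleIntegrable, intervalIntegrable_iff_integrableOn_Ioc_of_le (by positivity)]; rfl

theorem fatou_real {α : Type*} [MeasurableSpace α] {μ : Measure α} {f : ℕ → α → ℝ} {F : α → ℝ}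
    {b : ℕ → ℝ} {B : ℝ} (hi : ∀ᶠ n in atTop, Integrable (f n) μ)
    (h0 : ∀ᶠ n in atTop, ∀ᵐ x ∂μ, 0 ≤ f n x)
    (hm : ∀ n, AEStronglyMeasurable (f n) μ)
    (hlim : ∀ᵐ x ∂μ, Tendsto (fun n => f n x) atTop (𝓝 (F x)))
    (hb : ∀ᶠ n in atTop, ∫ x, f n x ∂μ ≤ b n) (hbB : Tendsto b atTop (𝓝 B)) :
    Integrable F μ ∧ ∫ x, F x ∂μ ≤ B ∧ ∀ᵐ x ∂μ, 0 ≤ F x := by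
  obtain ⟨N, hN⟩ := eventually_atTop.1 h0
  have h0' : ∀ᵐ x ∂μ, ∀ n ≥ N, 0 ≤ f n x := by
    rw [ae_all_iff]; intro n
    by_cases h : n ≥ N
    · filter_upwards [hN n h] with x hx _ using hx
    · exact Eventually.of_forall fun x hx => absurd hx h
  have hF0 : ∀ᵐ x ∂μ, 0 ≤ F x := by
    filter_upwards [hlim, h0'] with x hx hx0
    exact ge_of_tendsto hx (eventually_atTop.2 ⟨N, hx0⟩)
  have hFm : AEStronglyMeasurable F μ := aestronglyMeasurable_of_tendsto_ae atTop hm hlim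
  have hB0 : 0 ≤ B := by
    apply ge_of_tendsto hbB
    filter_upwards [hb, h0] with n h1 h2
    exact (integral_nonneg_of_ae h2).trans h1
  have key : ∫⁻ x, ENNReal.ofReal (F x) ∂μ ≤ ENNReal.ofReal B := by
    calc ∫⁻ x, ENNReal.ofReal (F x) ∂μ
        = ∫⁻ x, liminf (fun n => ENNReal.ofReal (f n x)) atTop ∂μ := by
          apply lintegral_congr_ae
          filter_upwards [hlim] with x hx
          exact (((ENNReal.continuous_ofReal.tendsto _).comp hx).liminf_eq).symm
      _ ≤ liminf (fun n => ∫⁻ x, ENNReal.ofReal (f n x) ∂μ) atTop :=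
          lintegral_liminf_le' fun n => (hm n).aemeasurable.ennreal_ofReal
      _ ≤ liminf (fun n => ENNReal.ofReal (b n)) atTop := by
          refine liminf_le_liminf ?_
          filter_upwards [hb, h0, hi] with n h1 h2 h3
          rw [← ofReal_integral_eq_lintegral_ofReal h3 h2]
          exact ENNReal.ofReal_le_ofReal h1
      _ = _ := ((ENNReal.continuous_ofReal.tendsto _).comp hbB).liminf_eq
  have hint : Integrable F μ := by
    refine ⟨hFm, ?_⟩
    rw [hasFiniteIntegral_iff_ofReal hF0]
    exact key.trans_lt ENNReal.ofReal_lt_top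
  refine ⟨hint, ?_, hF0⟩
  rw [← ofReal_integral_eq_lintegral_ofReal hint hF0] at key
  exact (ENNReal.ofReal_le_ofReal_iff hB0).1 key

theorem fatou_inf {α : Type*} [MeasurableSpace α] {μ : Measure α} {f : ℕ → α → ℝ} 
    {b : ℕ → ℝ} {B : ℝ} (hi : ∀ᶠ n in atTop, Integrable (f n) μ)
    (h0 : ∀ᶠ n in atTop, ∀ᵐ x ∂μ, 0 ≤ f n x)
    (hm : ∀ n, Measurable (f n))
    (hb : ∀ᶠ n in atTop, ∫ x, f n x ∂μ ≤ b n) (hbB : Tendsto b atTop (𝓝 B)) :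
    ∀ᵐ x ∂μ, ¬ Tendsto (fun n => f n x) atTop atTop := by
  have key : ∫⁻ x, liminf (fun n => ENNReal.ofReal (f n x)) atTop ∂μ ≤ ENNReal.ofReal B := by
    calc _ ≤ liminf (fun n => ∫⁻ x, ENNReal.ofReal (f n x) ∂μ) atTop :=
          lintegral_liminf_le fun n => (hm n).ennreal_ofReal
      _ ≤ liminf (fun n => ENNReal.ofReal (b n)) atTop := by
          refine liminf_le_liminf ?_
          filter_upwards [hb, h0, hi] with n h1 h2 h3
          rw [← ofReal_integral_eq_lintegral_ofReal h3 h2]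
          exact ENNReal.ofReal_le_ofReal h1
      _ = _ := ((ENNReal.continuous_ofReal.tendsto _).comp hbB).liminf_eq
  have hm' : Measurable (fun x => liminf (fun n => ENNReal.ofReal (f n x)) atTop) :=
    Measurable.liminf fun n => (hm n).ennreal_ofReal
  filter_upwards [ae_lt_top hm' (key.trans_lt ENNReal.ofReal_lt_top).ne] with x hx ht
  have := (ENNReal.tendsto_ofReal_atTop.comp ht).liminf_eq
  simp only [Function.comp_def] at this
  rw [this] at hx
  exact lt_irrefl _ hx

/-- scaled function -/
theorem scaled_diffCont {g : ℂ → ℂ} (hg : DifferentiableOn ℂ g (ball 0 1)) {s : ℝ}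
    (hs0 : 0 ≤ s) (hs : s < 1) : DiffContOnCl ℂ (fun w => g (s * w)) (ball 0 1) := by
  apply DifferentiableOn.diffContOnCl
  rw [closure_ball 0 one_ne_zero]
  apply hg.comp (by fun_prop)
  intro w hw
  have : ‖w‖ ≤ 1 := by simpa using hw
  simp only [mem_ball, dist_zero_right, norm_mul, Complex.norm_real, Real.norm_eq_abs, abs_of_nonneg hs0]
  nlinarith [norm_nonneg w]

theorem scaled_cont {g : ℂ → ℂ} (hg : DifferentiableOn ℂ g (ball 0 1)) {s : ℝ}
    (hs0 : 0 ≤ s) (hs : s < 1) : ContinuousOn (fun w => g (s * w)) (sphere 0 1) :=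
  (scaled_diffCont hg hs0 hs).2.mono
    (sphere_subset_closedBall.trans_eq (closure_ball 0 one_ne_zero).symm)

theorem poisson_bounds {z : ℂ} (hz : z ∈ ball (0:ℂ) 1) :
    ∃ k K : ℝ, 0 < k ∧ ∀ ζ ∈ sphere (0:ℂ) 1, k ≤ poissonKernel 0 z ζ ∧ poissonKernel 0 z ζ ≤ K := by
  have hc := poisson_continuousOn hz
  have hne : (sphere (0:ℂ) 1).Nonempty := ⟨1, by simp⟩
  obtain ⟨a, ha, ha'⟩ := (isCompact_sphere (0:ℂ) 1).exists_isMinOn hne hc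
  obtain ⟨b, hb, hb'⟩ := (isCompact_sphere (0:ℂ) 1).exists_isMaxOn hne hc
  exact ⟨_, _, poisson_pos hz ha, fun ζ hζ => ⟨ha' hζ, hb' hζ⟩⟩

theorem log_boundary {g : ℂ → ℂ} (hg : DifferentiableOn ℂ g (ball 0 1)) {s : ℕ → ℝ}
    (hs0 : ∀ n, 0 ≤ s n) (hs1 : ∀ n, s n < 1) (hs : Tendsto s atTop (𝓝 1)) {C : ℝ}
    (hC : ∀ n, Real.circleAverage (fun ζ => ‖g (s n * ζ)‖) 0 1 ≤ C) {G : ℂ → ℂ}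
    (hG : ∀ᵐ θ ∂mC, Tendsto (fun n => g (s n * circleMap 0 1 θ)) atTop (𝓝 (G (circleMap 0 1 θ))))
    {z : ℂ} (hz : z ∈ ball (0:ℂ) 1) (hgz : g z ≠ 0) :
    (∀ᵐ θ ∂mC, G (circleMap 0 1 θ) ≠ 0) ∧ CircleIntegrable (fun ζ => Real.log ‖G ζ‖) 0 1 ∧
    CircleIntegrable (fun ζ => ‖G ζ‖) 0 1 ∧
    Real.log ‖g z‖ ≤ Real.circleAverage (fun ζ => poissonKernel 0 z ζ * Real.log ‖G ζ‖) 0 1 := by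
  obtain ⟨k, K, hk, hkK⟩ := poisson_bounds hz
  have hsph : ∀ θ, circleMap 0 1 θ ∈ sphere (0:ℂ) 1 := fun θ => circleMap_mem_sphere _ zero_le_one _
  have hcomp : ∀ {f : ℂ → ℝ}, ContinuousOn f (sphere 0 1) → Continuous (fun θ => f (circleMap 0 1 θ)) :=
    fun hf => hf.comp_continuous (continuous_circleMap 0 1) hsph
  have hIm : ∀ {f : ℝ → ℝ}, Continuous f → Integrable f mC := fun hf =>
    (hf.integrableOn_Icc (μ := volume) (a := 0) (b := 2 * π)).mono_set Ioc_subset_Icc_self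
  set x : ℕ → ℝ → ℝ := fun n θ => ‖g (s n * circleMap 0 1 θ)‖ with hx
  set κ : ℝ → ℝ := fun θ => poissonKernel 0 z (circleMap 0 1 θ) with hκ
  have hκc : Continuous κ := hcomp (poisson_continuousOn hz)
  have hκ1 : ∫ θ, κ θ ∂mC = 2 * π := by
    have := circleAverage_poisson_one hz
    rw [cAvg_eq] at this
    field_simp at this
    linarith
  have hK0 : 0 ≤ K := by
    have := hkK 1 (by simp); linarith
  have hxc : ∀ n, Continuous (x n) := fun n => hcomp (scaled_cont hg (hs0 n) (hs1 n)).norm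
  have hxC : ∀ n, ∫ θ, x n θ ∂mC ≤ 2 * π * C := by
    intro n
    have := hC n
    rw [cAvg_eq, inv_mul_le_iff₀ (by positivity)] at this
    exact this
  set X : ℝ → ℝ := fun θ => ‖G (circleMap 0 1 θ)‖ with hX
  have hxX : ∀ᵐ θ ∂mC, Tendsto (fun n => x n θ) atTop (𝓝 (X θ)) := by
    filter_upwards [hG] with θ hθ using hθ.norm
  obtain ⟨hXi, -, -⟩ := fatou_real (μ := mC) (f := x) (F := X) (b := fun _ => 2 * π * C)
    (Eventually.of_forall fun n => hIm (hxc n)) 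
    (Eventually.of_forall fun n => Eventually.of_forall fun θ => norm_nonneg _)
    (fun n => (hxc n).aestronglyMeasurable) hxX (Eventually.of_forall hxC) tendsto_const_nhds
  set δ : ℕ → ℝ := fun n => 1 / ((n:ℝ) + 1) with hδ
  have hδ0 : ∀ n, 0 < δ n := fun n => by positivity
  have hδ1 : ∀ n, δ n ≤ 1 := fun n => by
    rw [hδ]; simp only; rw [div_le_one (by positivity)]; linarith [n.cast_nonneg (α := ℝ)]
  have hδl : Tendsto δ atTop (𝓝 0) := tendsto_one_div_add_atTop_nhds_zero_nat
  set l : ℕ → ℝ → ℝ := fun n θ => Real.log (x n θ + δ n) with hl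
  have hx0 : ∀ n θ, 0 ≤ x n θ := fun n θ => norm_nonneg _
  have hlc : ∀ n, Continuous (l n) := fun n => 
    Continuous.log ((hxc n).add continuous_const) (fun θ => by have := hx0 n θ; have := hδ0 n; positivity)
  have hgl : Tendsto (fun n => g (s n * z)) atTop (𝓝 (g z)) := by
    have h1 : ContinuousAt g z := (hg.differentiableAt (isOpen_ball.mem_nhds hz)).continuousAt
    have h2 : Tendsto (fun n => (s n : ℂ) * z) atTop (𝓝 z) := by
      have := ((Complex.continuous_ofReal.tendsto 1).comp hs).mul_const z
      simpa using this
    exact h1.tendsto.comp h2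
  have hlow : ∀ᶠ n in atTop, Real.log ‖g (s n * z)‖ ≤ (2 * π)⁻¹ * ∫ θ, κ θ * l n θ ∂mC := by
    filter_upwards [hgl.eventually_ne hgz] with n hn
    have hcn := scaled_cont hg (hs0 n) (hs1 n)
    have := norm_le_exp_poisson (scaled_diffCont hg (hs0 n) (hs1 n))
      (φ := fun ζ => Real.log (‖g (s n * ζ)‖ + δ n))
      (ContinuousOn.log (hcn.norm.add continuousOn_const) (fun ζ _ => by have := hδ0 n; positivity))
      (fun ζ _ => by
        have := hδ0 n
        rw [Real.exp_log (by positivity)]; linarith) hz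
    rw [cAvg_eq] at this
    rw [Real.log_le_iff_le_exp (norm_pos_iff.2 hn)]
    exact this
  have hup : ∀ ε > 0, ∀ y > 0, Real.log y ≤ ε * y - Real.log ε := by
    intro ε hε y hy
    have := Real.log_le_sub_one_of_pos (mul_pos hε hy)
    rw [Real.log_mul hε.ne' hy.ne'] at this; linarith
  -- main functions
  have main : ∀ ε > 0, (∀ᵐ θ ∂mC, X θ ≠ 0) ∧
      (Integrable (fun θ => κ θ * (ε * X θ + (ε - Real.log ε) - Real.log (X θ))) mC ∧ 
      ∫ θ, κ θ * (ε * X θ + (ε - Real.log ε) - Real.log (X θ)) ∂mC ≤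
       2 * π * (ε * K * C + (ε - Real.log ε) - Real.log ‖g z‖)) := by
    intro ε hε
    set A : ℕ → ℝ → ℝ := fun n θ => κ θ * (ε * x n θ + (ε - Real.log ε) - l n θ) with hA
    have hAc : ∀ n, Continuous (A n) := fun n => by
      have := hxc n; have := hlc n; fun_prop
    have hA0 : ∀ n θ, 0 ≤ A n θ := by
      intro n θ
      apply mul_nonneg (hk.le.trans (hkK _ (hsph θ)).1)
      have h1 := hx0 n θ
      have h2 := hδ0 n
      have := hup ε hε (x n θ + δ n) (by positivity)
      have := hδ1 n
      simp only [hl]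
      nlinarith
    have hAb : ∀ᶠ n in atTop, ∫ θ, A n θ ∂mC ≤
        2 * π * (ε * K * C + (ε - Real.log ε) - Real.log ‖g (s n * z)‖) := by
      filter_upwards [hlow] with n hn
      have e1 : ∫ θ, A n θ ∂mC = ε * (∫ θ, κ θ * x n θ ∂mC) + (ε - Real.log ε) * (2 * π)
          - ∫ θ, κ θ * l n θ ∂mC := by
        rw [← hκ1, ← integral_const_mul, ← integral_const_mul, ← integral_add, ← integral_sub]
        · congr 1; ext θ; simp only [hA]; ring
        · apply hIm; have := hxc n; fun_prop
        · apply hIm; have := hlc n; fun_prop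
        · apply hIm; have := hxc n; fun_prop
        · apply hIm; fun_prop
      have e2 : ∫ θ, κ θ * x n θ ∂mC ≤ K * (2 * π * C) := by
        calc _ ≤ ∫ θ, K * x n θ ∂mC := by
              apply integral_mono
              · apply hIm; have := hxc n; fun_prop
              · apply hIm; have := hxc n; fun_prop
              · intro θ
                exact mul_le_mul_of_nonneg_right (hkK _ (hsph θ)).2 (hx0 n θ)
          _ ≤ _ := by rw [integral_const_mul]; gcongr; exact hxC n
      rw [e1]
      rw [le_inv_mul_iff₀ (by positivity)] at hn
      nlinarith
    have hAl : Tendsto (fun n => 2 * π * (ε * K * C + (ε - Real.log ε) - Real.log ‖g (s n * z)‖))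
        atTop (𝓝 (2 * π * (ε * K * C + (ε - Real.log ε) - Real.log ‖g z‖))) := by
      apply Tendsto.const_mul
      apply Tendsto.const_sub
      exact hgl.norm.log (norm_ne_zero_iff.2 hgz)
    have hne : ∀ᵐ θ ∂mC, X θ ≠ 0 := by
      filter_upwards [hxX, fatou_inf (Eventually.of_forall fun n => hIm (hAc n))
        (Eventually.of_forall fun n => Eventually.of_forall (hA0 n))
        (fun n => (hAc n).measurable) hAb hAl] with θ h1 h2 h3
      apply h2
      rw [h3] at h1
      have hkθ : 0 < κ θ := hk.trans_le (hkK _ (hsph θ)).1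
      apply Tendsto.const_mul_atTop hkθ
      have h4 : Tendsto (fun n => x n θ + δ n) atTop (𝓝[>] 0) := by
        rw [tendsto_nhdsWithin_iff]
        constructor
        · simpa using h1.add hδl
        · refine Eventually.of_forall fun n => ?_
          have := hx0 n θ; have := hδ0 n
          simp only [mem_Ioi]; linarith
      have h5 : Tendsto (fun n => - l n θ) atTop atTop :=
        tendsto_neg_atBot_atTop.comp (Real.tendsto_log_nhdsGT_zero.comp h4)
      refine tendsto_atTop_mono (fun n => ?_) (tendsto_atTop_add_const_left _ (ε - Real.log ε) h5)
      have := mul_nonneg hε.le (hx0 n θ)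
      linarith
    refine ⟨hne, ?_⟩
    have := fatou_real (μ := mC) (f := A)
      (F := fun θ => κ θ * (ε * X θ + (ε - Real.log ε) - Real.log (X θ)))
      (Eventually.of_forall fun n => hIm (hAc n))
        (Eventually.of_forall fun n => Eventually.of_forall (hA0 n))
        (fun n => (hAc n).aestronglyMeasurable) (by
          filter_upwards [hxX, hne] with θ h1 h2
          apply Tendsto.const_mul
          apply Tendsto.sub
          · exact (h1.const_mul ε).add_const _
          · have : Tendsto (fun n => x n θ + δ n) atTop (𝓝 (X θ)) := by simpa using h1.add hδl
            exact this.log h2) hAb hAl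
    exact ⟨this.1, this.2.1⟩
  have hne := (main 1 one_pos).1
  have hκX : Integrable (fun θ => κ θ * X θ) mC := by
    refine hXi.bdd_mul (c := K) hκc.aestronglyMeasurable (Eventually.of_forall fun θ => ?_)
    rw [Real.norm_of_nonneg (hk.le.trans (hkK _ (hsph θ)).1)]
    exact (hkK _ (hsph θ)).2
  have hlogi : Integrable (fun θ => Real.log (X θ)) mC := by
    have h1 := (main 1 one_pos).2.1
    have h2 : Integrable (fun θ => (κ θ)⁻¹ * (κ θ * (1 * X θ + (1 - Real.log 1) - Real.log (X θ)))) mC := by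
      refine h1.bdd_mul (c := k⁻¹) ?_ (Eventually.of_forall fun θ => ?_)
      · exact (hκc.inv₀ fun θ => (hk.trans_le (hkK _ (hsph θ)).1).ne').aestronglyMeasurable
      · rw [norm_inv, Real.norm_of_nonneg (hk.le.trans (hkK _ (hsph θ)).1)]
        exact inv_anti₀ hk (hkK _ (hsph θ)).1
    have h3 := (hXi.add (integrable_const (1:ℝ))).sub h2
    refine h3.congr (Eventually.of_forall fun θ => ?_)
    have : κ θ ≠ 0 := (hk.trans_le (hkK _ (hsph θ)).1).ne'
    simp only [Pi.sub_apply, Pi.add_apply, Real.log_one]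
    field_simp
    ring
  have hκl : Integrable (fun θ => κ θ * Real.log (X θ)) mC := by
    refine hlogi.bdd_mul (c := K) hκc.aestronglyMeasurable (Eventually.of_forall fun θ => ?_)
    rw [Real.norm_of_nonneg (hk.le.trans (hkK _ (hsph θ)).1)]
    exact (hkK _ (hsph θ)).2
  refine ⟨?_, (cInt_iff _).2 hlogi, (cInt_iff _).2 hXi, ?_⟩
  · filter_upwards [hne] with θ h1 h2
    apply h1; simp [hX, h2]
  · rw [cAvg_eq, le_inv_mul_iff₀ (by positivity)]
    have key : ∀ ε > 0, 2 * π * Real.log ‖g z‖ - 2 * π * (ε * K * C) ≤ ∫ θ, κ θ * Real.log (X θ) ∂mC := by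
      intro ε hε
      have h1 := (main ε hε).2.2
      have e1 : ∫ θ, κ θ * (ε * X θ + (ε - Real.log ε) - Real.log (X θ)) ∂mC =
          ε * (∫ θ, κ θ * X θ ∂mC) + (ε - Real.log ε) * (2 * π) - ∫ θ, κ θ * Real.log (X θ) ∂mC := by
        rw [← hκ1, ← integral_const_mul, ← integral_const_mul, ← integral_add, ← integral_sub]
        · congr 1; ext θ; ring
        · exact (hκX.const_mul _).add ((hIm hκc).const_mul _)
        · exact hκl
        · exact hκX.const_mul _
        · exact (hIm hκc).const_mul _
      have e2 : 0 ≤ ∫ θ, κ θ * X θ ∂mC := integral_nonneg fun θ => 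
        mul_nonneg (hk.le.trans (hkK _ (hsph θ)).1) (norm_nonneg _)
      rw [e1] at h1
      nlinarith [mul_nonneg hε.le e2]
    have ht : Tendsto (fun ε : ℝ => 2 * π * Real.log ‖g z‖ - 2 * π * (ε * K * C)) (𝓝[>] 0)
        (𝓝 (2 * π * Real.log ‖g z‖ - 2 * π * (0 * K * C))) :=
      (Continuous.tendsto (by fun_prop) _).mono_left nhdsWithin_le_nhds
    simp only [zero_mul, mul_zero, sub_zero] at ht
    exact le_of_tendsto ht (by filter_upwards [self_mem_nhdsWithin] with ε hε using key ε hε)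

theorem montel_lite {Φ : ℕ → ℂ → ℂ} (hΦ : ∀ n, DifferentiableOn ℂ (Φ n) (ball 0 1)) {M : ℝ → ℝ}
    (hM : ∀ ρ, 0 < ρ → ρ < 1 → ∀ n, ∀ z ∈ sphere (0:ℂ) ρ, ‖Φ n z‖ ≤ M ρ) :
    ∃ (U : Ultrafilter ℕ) (P : ℂ → ℂ), (U : Filter ℕ) ≤ atTop ∧ DifferentiableOn ℂ P (ball 0 1) ∧
      ∀ z ∈ ball (0:ℂ) 1, Tendsto (fun n => Φ n z) U (𝓝 (P z)) := by
  set a : ℕ → ℕ → ℂ := fun n k => ((k.factorial : ℂ))⁻¹ * iteratedDeriv k (Φ n) 0 with ha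
  have hab : ∀ ρ, 0 < ρ → ρ < 1 → ∀ n k, ‖a n k‖ ≤ M ρ / ρ ^ k := by
    intro ρ h0 h1 n k
    have := Complex.norm_iteratedDeriv_le_of_forall_mem_sphere_norm_le (c := 0) (f := Φ n) k h0
      (by
        apply DifferentiableOn.diffContOnCl
        rw [closure_ball _ h0.ne']
        exact (hΦ n).mono (closedBall_subset_ball h1)) (hM ρ h0 h1 n)
    simp only [ha, norm_mul, norm_inv, Complex.norm_natCast]
    rw [inv_mul_le_iff₀ (by positivity)]
    calc _ ≤ _ := this
      _ = _ := by ring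
  have hsum : ∀ n, ∀ z ∈ ball (0:ℂ) 1, ∑' k, a n k * z ^ k = Φ n z := by
    intro n z hz
    have := Complex.taylorSeries_eq_on_ball' hz (hΦ n)
    simpa using this
  set U : Ultrafilter ℕ := Ultrafilter.of atTop with hU
  have hUle : (U : Filter ℕ) ≤ atTop := Ultrafilter.of_le _
  have hlim : ∀ k, ∃ c : ℂ, Tendsto (fun n => a n k) U (𝓝 c) := by
    intro k
    have hc : IsCompact (closedBall (0:ℂ) (M (1/2) / (1/2) ^ k)) := isCompact_closedBall _ _
    obtain ⟨c, -, hc⟩ := isCompact_iff_ultrafilter_le_nhds.1 hc (U.map fun n => a n k) (by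
      rw [le_principal_iff]
      change ∀ᶠ n in (U : Filter ℕ), _
      refine Eventually.of_forall fun n => ?_
      simpa using hab (1/2) (by norm_num) (by norm_num) n k)
    exact ⟨c, hc⟩
  choose c hc using hlim
  have hcb : ∀ ρ, 0 < ρ → ρ < 1 → ∀ k, ‖c k‖ ≤ M ρ / ρ ^ k := fun ρ h0 h1 k =>
    le_of_tendsto (hc k).norm (Eventually.of_forall fun n => hab ρ h0 h1 n k)
  have hMnn : ∀ ρ, 0 < ρ → ρ < 1 → 0 ≤ M ρ := by
    intro ρ h0 h1
    have := (norm_nonneg _).trans (hab ρ h0 h1 0 0)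
    simpa using this
  refine ⟨U, fun z => ∑' k, c k * z ^ k, hUle, ?_, ?_⟩
  · intro z hz
    have hz' : ‖z‖ < 1 := by simpa using hz
    set ρ1 := (‖z‖ + 1) / 2 with hρ1
    set ρ := (ρ1 + 1) / 2 with hρ
    have := norm_nonneg z
    have h10 : 0 < ρ1 := by linarith
    have h1 : ρ1 < ρ := by linarith
    have h2 : ρ < 1 := by linarith
    have hd := Complex.differentiableOn_tsum_of_summable_norm (F := fun k z => c k * z ^ k)
      (u := fun k => M ρ * (ρ1 / ρ) ^ k) (U := ball 0 ρ1)
      ((summable_geometric_of_lt_one (by positivity) ((div_lt_one (by linarith)).2 h1)).mul_left _)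
      (fun k => by fun_prop) isOpen_ball (by
        intro k w hw
        have hw' : ‖w‖ < ρ1 := by simpa using hw
        rw [norm_mul, norm_pow]
        calc _ ≤ M ρ / ρ ^ k * ρ1 ^ k := by
              have := hcb ρ (by linarith) h2 k
              have h0 := (norm_nonneg _).trans this
              gcongr
          _ = _ := by rw [div_pow ρ1 ρ, div_mul_eq_mul_div, mul_div_assoc])
    exact (hd.differentiableAt (isOpen_ball.mem_nhds (by simp; linarith))).differentiableWithinAt
  · intro z hz
    have hz' : ‖z‖ < 1 := by simpa using hz
    set ρ := (‖z‖ + 1) / 2 with hρ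
    have := norm_nonneg z
    have h1 : ‖z‖ < ρ := by linarith
    have h2 : ρ < 1 := by linarith
    simp_rw [← hsum _ z hz]
    apply tendsto_tsum_of_dominated_convergence (bound := fun k => M ρ * (‖z‖ / ρ) ^ k)
    · exact (summable_geometric_of_lt_one (by positivity) ((div_lt_one (by linarith)).2 h1)).mul_left _
    · intro k; exact (hc k).mul_const _
    · refine Eventually.of_forall fun n k => ?_
      rw [norm_mul, norm_pow]
      calc _ ≤ M ρ / ρ ^ k * ‖z‖ ^ k := by
            have := hab ρ (by linarith) h2 n k
            gcongr
        _ = _ := by rw [div_pow ‖z‖ ρ, div_mul_eq_mul_div, mul_div_assoc]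

noncomputable def Herg (φ : ℂ → ℝ) (z : ℂ) : ℂ :=
  Real.circleAverage (fun ζ => herglotzRieszKernel 0 z ζ • (φ ζ : ℂ)) 0 1

theorem Herg_diff {φ : ℂ → ℝ} (hφ : CircleIntegrable φ 0 1) :
    DifferentiableOn ℂ (Herg φ) (ball 0 1) := by
  apply differentiableOn_circleAverage_herglotzRieszKernel_smul
  rw [cInt_iff] at hφ ⊢
  exact hφ.ofReal

theorem Herg_re {φ : ℂ → ℝ} (hφ : CircleIntegrable φ 0 1) {z : ℂ} (hz : z ∈ ball (0:ℂ) 1) :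
    (Herg φ z).re = Real.circleAverage (fun ζ => poissonKernel 0 z ζ * φ ζ) 0 1 := by
  rw [Herg, re_circleAverage_herglotzRieszKernel_smul hφ hz, ← poissonKernel_eq_re_herglotzRieszKernel]
  rfl

theorem Herg_norm_le {φ : ℂ → ℝ} (hφ : CircleIntegrable φ 0 1) (h0 : ∀ ζ ∈ sphere (0:ℂ) 1, 0 ≤ φ ζ)
    {z : ℂ} (hz : z ∈ ball (0:ℂ) 1) :
    ‖Herg φ z‖ ≤ 2 / (1 - ‖z‖) * Real.circleAverage φ 0 1 := by
  have hz' : ‖z‖ < 1 := by simpa using hz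
  rw [Herg, Real.circleAverage, Real.circleAverage, norm_smul, smul_eq_mul]
  have h2 : ‖(2 * π)⁻¹‖ = (2 * π)⁻¹ := by
    rw [Real.norm_of_nonneg]; positivity
  rw [h2, mul_left_comm, ← intervalIntegral.integral_const_mul]
  gcongr
  apply intervalIntegral.norm_integral_le_of_norm_le (by positivity)
  · refine Filter.Eventually.of_forall fun θ _ => ?_
    set ζ := circleMap 0 1 θ with hζdef
    have hζs : ζ ∈ sphere (0:ℂ) 1 := circleMap_mem_sphere _ zero_le_one _
    have hζ : ‖ζ‖ = 1 := by simpa using hζs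
    rw [norm_smul, Complex.norm_real, Real.norm_of_nonneg (h0 ζ hζs)]
    apply mul_le_mul_of_nonneg_right _ (h0 ζ hζs)
    rw [herglotzRieszKernel_def, sub_zero, sub_zero, norm_div]
    have h1 : 1 - ‖z‖ ≤ ‖ζ - z‖ := by rw [← hζ]; exact norm_sub_norm_le _ _
    have h3 : ‖ζ + z‖ ≤ 2 := by
      refine (norm_add_le _ _).trans ?_; linarith
    gcongr
  · have := hφ.const_smul (a := 2 / (1 - ‖z‖))
    exact this

theorem norm_le_poisson {g : ℂ → ℂ} (hg : DiffContOnCl ℂ g (ball 0 1)) {z : ℂ} (hz : z ∈ ball (0:ℂ) 1) :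
    ‖g z‖ ≤ Real.circleAverage (fun ζ => poissonKernel 0 z ζ * ‖g ζ‖) 0 1 := by
  have h := DiffContOnCl.circleAverage_poissonKernel_smul (f := g) (c := 0) (R := 1) (w := z)
    (by simpa using hg) (by simpa using hz)
  rw [← h, Real.circleAverage, Real.circleAverage, norm_smul, smul_eq_mul]
  have h2 : ‖(2 * π)⁻¹‖ = (2 * π)⁻¹ := by
    rw [Real.norm_of_nonneg]; positivity
  have hc : ContinuousOn g (sphere 0 1) := hg.2.mono
    (sphere_subset_closedBall.trans_eq (closure_ball 0 one_ne_zero).symm)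
  rw [h2]
  gcongr
  apply intervalIntegral.norm_integral_le_of_norm_le (by positivity)
  · refine Filter.Eventually.of_forall fun θ _ => ?_
    have hζs : circleMap 0 1 θ ∈ sphere (0:ℂ) 1 := circleMap_mem_sphere _ zero_le_one _
    rw [Pi.smul_apply', norm_smul, Real.norm_of_nonneg (poisson_pos hz hζs).le]
  · exact ContinuousOn.circleIntegrable zero_le_one ((poisson_continuousOn hz).mul hc.norm)

theorem exists_majorant {g : ℂ → ℂ} (hg : DifferentiableOn ℂ g (ball 0 1)) {s : ℕ → ℝ}
    (hs0 : ∀ n, 0 ≤ s n) (hs1 : ∀ n, s n < 1) (hs : Tendsto s atTop (𝓝 1)) {C : ℝ}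
    (hC : ∀ n, Real.circleAverage (fun ζ => ‖g (s n * ζ)‖) 0 1 ≤ C) :
    ∃ P : ℂ → ℂ, DifferentiableOn ℂ P (ball 0 1) ∧ ∀ z ∈ ball (0:ℂ) 1, ‖g z‖ ≤ (P z).re := by
  have hci : ∀ n, CircleIntegrable (fun ζ => ‖g (s n * ζ)‖) 0 1 := fun n =>
    ContinuousOn.circleIntegrable zero_le_one (scaled_cont hg (hs0 n) (hs1 n)).norm
  obtain ⟨U, P, hU, hP, hl⟩ := montel_lite (Φ := fun n => Herg (fun ζ => ‖g (s n * ζ)‖))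
    (fun n => Herg_diff (hci n)) (M := fun ρ => 2 / (1 - ρ) * C) (by
      intro ρ h0 h1 n z hz
      have hz1 : ‖z‖ = ρ := by simpa using hz
      have hz : z ∈ ball (0:ℂ) 1 := by simpa [hz1] using h1
      refine (Herg_norm_le (hci n) (fun _ _ => norm_nonneg _) hz).trans ?_
      rw [hz1]
      have : 0 < 1 - ρ := by linarith
      gcongr
      exact hC n)
  refine ⟨P, hP, fun z hz => ?_⟩
  have h1 : Tendsto (fun n => ‖g (s n * z)‖) U (𝓝 ‖g z‖) := by
    have h1 : ContinuousAt g z := (hg.differentiableAt (isOpen_ball.mem_nhds hz)).continuousAt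
    have h2 : Tendsto (fun n => (s n : ℂ) * z) U (𝓝 z) := by
      have := (((Complex.continuous_ofReal.tendsto 1).comp hs).mul_const z).mono_left hU
      simpa using this
    exact (h1.tendsto.comp h2).norm
  have h2 := (Complex.continuous_re.tendsto _).comp (hl z hz)
  refine le_of_tendsto_of_tendsto h1 h2 (Eventually.of_forall fun n => ?_)
  simp only [Function.comp]
  rw [Herg_re (hci n) hz]
  exact norm_le_poisson (scaled_diffCont hg (hs0 n) (hs1 n)) hz

theorem le_infDist_frontier_ball {z : ℂ} : 1 - ‖z‖ ≤ infDist z (frontier (ball (0:ℂ) 1)) := by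
  rw [frontier_ball 0 one_ne_zero, le_infDist ⟨1, by simp⟩]
  intro ζ hζ
  have h1 : ‖ζ‖ = 1 := by simpa using hζ
  rw [← h1, dist_comm, dist_eq_norm]
  exact norm_sub_norm_le _ _

theorem NTLim.radial {g : ℂ → ℂ} {θ : ℝ} {L : ℂ} (h : NTLim (ball 0 1) g (circleMap 0 1 θ) L)
    {s : ℕ → ℝ} (hs0 : ∀ n, 0 ≤ s n) (hs1 : ∀ n, s n < 1) (hs : Tendsto s atTop (𝓝 1)) :
    Tendsto (fun n => g (s n * circleMap 0 1 θ)) atTop (𝓝 L) := by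
  refine (h 2 (by norm_num)).comp ?_
  rw [tendsto_nhdsWithin_iff]
  have hn : ‖circleMap 0 1 θ‖ = 1 := by simp
  constructor
  · have := ((Complex.continuous_ofReal.tendsto 1).comp hs).mul_const (circleMap 0 1 θ)
    simpa using this
  · refine Eventually.of_forall fun n => ?_
    have h1 : ‖(s n : ℂ) * circleMap 0 1 θ‖ = s n := by
      rw [norm_mul, hn, Complex.norm_real, Real.norm_of_nonneg (hs0 n), mul_one]
    refine ⟨by rw [mem_ball_zero_iff, h1]; exact hs1 n, ?_⟩
    have h2 := le_infDist_frontier_ball (z := (s n : ℂ) * circleMap 0 1 θ)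
    rw [h1] at h2
    have h3 : dist ((s n : ℂ) * circleMap 0 1 θ) (circleMap 0 1 θ) = 1 - s n := by
      rw [dist_eq_norm, norm_sub_rev]
      have : circleMap 0 1 θ - s n * circleMap 0 1 θ = ((1 - s n : ℝ) : ℂ) * circleMap 0 1 θ := by
        push_cast; ring
      rw [this, norm_mul, hn, Complex.norm_real, Real.norm_of_nonneg (by linarith [hs1 n]), mul_one]
    rw [h3]; linarith [hs1 n]

theorem NTLim.congr {g h : ℂ → ℂ} {ξ L : ℂ} (H : NTLim (ball 0 1) g ξ L)
    (he : ∀ z ∈ ball (0:ℂ) 1, g z = h z) : NTLim (ball 0 1) h ξ L := by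
  intro C hC
  refine (H C hC).congr' ?_
  filter_upwards [self_mem_nhdsWithin] with z hz using he z hz.1

theorem NTLim.div {g h : ℂ → ℂ} {ξ L M : ℂ} (H : NTLim (ball 0 1) g ξ L)
    (H2 : NTLim (ball 0 1) h ξ M) (hM : M ≠ 0) : NTLim (ball 0 1) (fun z => g z / h z) ξ (L / M) :=
  fun C hC => (H C hC).div (H2 C hC) hM

noncomputable def bv (g : ℂ → ℂ) (ξ : ℂ) : ℂ :=
  open Classical in if h : ∃ L, NTLim (ball 0 1) g ξ L then h.choose else 0

theorem bv_spec {g : ℂ → ℂ} {ξ : ℂ} (h : ∃ L, NTLim (ball 0 1) g ξ L) :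
    NTLim (ball 0 1) g ξ (bv g ξ) := by
  rw [bv, dif_pos h]; exact h.choose_spec

noncomputable def sqn (n : ℕ) : ℝ := 1 - 1 / ((n:ℝ) + 1)
theorem sqn0 (n : ℕ) : 0 ≤ sqn n := by
  have : 1 / ((n:ℝ) + 1) ≤ 1 := by
    rw [div_le_one (by positivity)]; linarith [n.cast_nonneg (α := ℝ)]
  simp only [sqn]; linarith
theorem sqn1 (n : ℕ) : sqn n < 1 := by
  have : 0 < 1 / ((n:ℝ) + 1) := by positivity
  simp only [sqn]; linarith
theorem sqnl : Tendsto sqn atTop (𝓝 1) := by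
  have := tendsto_one_div_add_atTop_nhds_zero_nat (𝕜 := ℝ)
  have h2 := this.const_sub 1
  rw [sub_zero] at h2
  exact h2

theorem cAvg_mono {f g : ℂ → ℝ} (hf : CircleIntegrable f 0 1) (hg : CircleIntegrable g 0 1)
    (h : ∀ ζ ∈ sphere (0:ℂ) 1, f ζ ≤ g ζ) : Real.circleAverage f 0 1 ≤ Real.circleAverage g 0 1 :=
  Real.circleAverage_mono hf hg (fun ζ hζ => h ζ (by simpa using hζ))

theorem smul_mem_ball {s : ℝ} (h0 : 0 ≤ s) (h1 : s < 1) {ζ : ℂ} (hζ : ζ ∈ sphere (0:ℂ) 1) :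
    (s : ℂ) * ζ ∈ ball (0:ℂ) 1 := by
  have h : ‖ζ‖ = 1 := by simpa using hζ
  rw [mem_ball_zero_iff, norm_mul, h, Complex.norm_real, Real.norm_of_nonneg h0]; linarith

theorem fatou_majorant {g P : ℂ → ℂ} (hg : DifferentiableOn ℂ g (ball 0 1))
    (hP : DifferentiableOn ℂ P (ball 0 1)) (hgP : ∀ z ∈ ball (0:ℂ) 1, ‖g z‖ ≤ (P z).re) :
    ∀ᵐ θ ∂mC, NTLim (ball 0 1) g (circleMap 0 1 θ) (bv g (circleMap 0 1 θ)) := by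
  have hn : ∀ z ∈ ball (0:ℂ) 1, 1 + (P z).re ≤ ‖1 + P z‖ := fun z _ => by
    simpa using Complex.re_le_norm (1 + P z)
  have hP0 : ∀ z ∈ ball (0:ℂ) 1, 0 ≤ (P z).re := fun z hz => (norm_nonneg _).trans (hgP z hz)
  have hne : ∀ z ∈ ball (0:ℂ) 1, 1 + P z ≠ 0 := fun z hz => by
    rw [← norm_pos_iff]; linarith [hn z hz, hP0 z hz]
  have d1 : DifferentiableOn ℂ (fun z => g z / (1 + P z)) (ball 0 1) :=
    hg.div (hP.const_add 1) hne
  have d2 : DifferentiableOn ℂ (fun z => 1 / (1 + P z)) (ball 0 1) :=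
    (differentiableOn_const 1).div (hP.const_add 1) hne
  have n1 : ∀ z ∈ ball (0:ℂ) 1, ‖g z / (1 + P z)‖ ≤ 1 := fun z hz => by
    rw [norm_div, div_le_one (norm_pos_iff.2 (hne z hz))]; linarith [hn z hz, hgP z hz]
  have n2 : ∀ z ∈ ball (0:ℂ) 1, ‖1 / (1 + P z)‖ ≤ 1 := fun z hz => by
    rw [norm_div, div_le_one (norm_pos_iff.2 (hne z hz)), norm_one]; linarith [hn z hz, hP0 z hz]
  have f1 := ae_restrict_of_ae (s := Ioc 0 (2 * π)) (fatou_bdd d1 n1)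
  have f2 : ∀ᵐ θ ∂mC, _ := ae_restrict_of_ae (s := Ioc 0 (2 * π)) (fatou_bdd d2 n2)
  have hz0 : (0:ℂ) ∈ ball (0:ℂ) 1 := by simp
  have f3 := (log_boundary d2 sqn0 sqn1 sqnl (C := 1) (G := bv (fun z => 1 / (1 + P z))) (by
    intro n
    refine le_trans (cAvg_mono (g := fun _ => (1:ℝ)) ?_ ?_ ?_) (Real.circleAverage_const _ _ _).le
    · exact ContinuousOn.circleIntegrable zero_le_one (scaled_cont d2 (sqn0 n) (sqn1 n)).norm
    · exact circleIntegrable_const _ _ _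
    · intro ζ hζ; exact n2 _ (smul_mem_ball (sqn0 n) (sqn1 n) hζ)) (by
      filter_upwards [f2] with θ hθ
      exact (bv_spec hθ).radial sqn0 sqn1 sqnl) hz0 (div_ne_zero one_ne_zero (hne 0 hz0))).1
  filter_upwards [f1, f2, f3] with θ h1 h2 h3
  obtain ⟨L, hL⟩ := h1
  refine bv_spec ⟨_, (hL.div (bv_spec h2) h3).congr fun z hz => ?_⟩
  have := hne z hz
  field_simp

structure DiscFact (g G Fd Fb : ℂ → ℂ) : Prop where
  NTg : ∀ᵐ θ ∂mC, NTLim (ball 0 1) g (circleMap 0 1 θ) (G (circleMap 0 1 θ))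
  G0 : ∀ᵐ θ ∂mC, G (circleMap 0 1 θ) ≠ 0
  Gint : CircleIntegrable (fun ζ => ‖G ζ‖) 0 1
  Glog : CircleIntegrable (fun ζ => Real.log ‖G ζ‖) 0 1
  Fd_def : ∀ z, Fd z = Complex.exp (Herg (fun ζ => Real.log ‖G ζ‖) z)
  le : ∀ z ∈ ball (0:ℂ) 1, ‖g z‖ ≤ ‖Fd z‖
  NTF : ∀ᵐ θ ∂mC, NTLim (ball 0 1) Fd (circleMap 0 1 θ) (Fb (circleMap 0 1 θ))
  eq : ∀ᵐ θ ∂mC, ‖Fb (circleMap 0 1 θ)‖ = ‖G (circleMap 0 1 θ)‖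

theorem poisson_mul_int {φ : ℂ → ℝ} (hφ : CircleIntegrable φ 0 1) {z : ℂ} (hz : z ∈ ball (0:ℂ) 1) :
    CircleIntegrable (fun ζ => poissonKernel 0 z ζ * φ ζ) 0 1 := by
  obtain ⟨k, K, hk, hkK⟩ := poisson_bounds hz
  have hsph : ∀ θ, circleMap 0 1 θ ∈ sphere (0:ℂ) 1 := fun θ => circleMap_mem_sphere _ zero_le_one _
  rw [cInt_iff] at hφ ⊢
  refine hφ.bdd_mul (c := K) ?_ (Eventually.of_forall fun θ => ?_)
  · exact ((poisson_continuousOn hz).comp_continuous (continuous_circleMap 0 1) hsph).aestronglyMeasurable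
  · rw [Real.norm_of_nonneg (hk.le.trans (hkK _ (hsph θ)).1)]
    exact (hkK _ (hsph θ)).2

/-- Jensen -/
theorem exp_poisson_le {φ ψ : ℂ → ℝ} (hφ : CircleIntegrable φ 0 1) (hψ : CircleIntegrable ψ 0 1)
    (h : ∀ᵐ θ ∂mC, Real.exp (φ (circleMap 0 1 θ)) = ψ (circleMap 0 1 θ)) {z : ℂ} (hz : z ∈ ball (0:ℂ) 1) :
    Real.exp (Real.circleAverage (fun ζ => poissonKernel 0 z ζ * φ ζ) 0 1) ≤
      Real.circleAverage (fun ζ => poissonKernel 0 z ζ * ψ ζ) 0 1 := by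
  have hsph : ∀ θ, circleMap 0 1 θ ∈ sphere (0:ℂ) 1 := fun θ => circleMap_mem_sphere _ zero_le_one _
  set a := Real.circleAverage (fun ζ => poissonKernel 0 z ζ * φ ζ) 0 1 with ha
  have h1 := circleAverage_poisson_one hz
  have hk : CircleIntegrable (fun ζ => poissonKernel 0 z ζ) 0 1 :=
    ContinuousOn.circleIntegrable zero_le_one (poisson_continuousOn hz)
  have hφ' := poisson_mul_int hφ hz
  have hψ' := poisson_mul_int hψ hz
  rw [cAvg_eq] at h1 ha ⊢
  rw [cInt_iff] at hφ' hψ' hk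
  have : Real.exp a = (2 * π)⁻¹ * ∫ θ, (Real.exp a * (1 - a)) * poissonKernel 0 z (circleMap 0 1 θ) +
      Real.exp a * (poissonKernel 0 z (circleMap 0 1 θ) * φ (circleMap 0 1 θ)) ∂mC := by
    rw [integral_add (hk.const_mul _) (hφ'.const_mul _), integral_const_mul, integral_const_mul]
    rw [mul_add, mul_left_comm, h1, mul_left_comm, ← ha]; ring
  rw [this]
  apply mul_le_mul_of_nonneg_left _ (by positivity)
  refine integral_mono_ae ((hk.const_mul _).add (hφ'.const_mul _)) hψ' ?_
  filter_upwards [h] with θ hθ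
  rw [← hθ]
  have e1 := (poisson_pos hz (hsph θ)).le
  have e2 : Real.exp a * (1 + (φ (circleMap 0 1 θ) - a)) ≤ Real.exp (φ (circleMap 0 1 θ)) := by
    have := Real.add_one_le_exp (φ (circleMap 0 1 θ) - a)
    rw [Real.exp_sub, le_div_iff₀ (Real.exp_pos _)] at this
    linarith
  nlinarith [mul_le_mul_of_nonneg_left e2 e1]

theorem DiscFact.pow {g G Fd Fb : ℂ → ℂ} (h : DiscFact g G Fd Fb) {p : ℝ} 
    (hp : CircleIntegrable (fun ζ => ‖G ζ‖ ^ p) 0 1) {z : ℂ} (hz : z ∈ ball (0:ℂ) 1) :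
    ‖Fd z‖ ^ p ≤ (Herg (fun ζ => ‖G ζ‖ ^ p) z).re := by
  rw [Herg_re hp hz, h.Fd_def, Complex.norm_exp, ← Real.exp_mul, Herg_re h.Glog hz]
  have hl : CircleIntegrable (fun ζ => p * Real.log ‖G ζ‖) 0 1 := h.Glog.const_smul (a := p)
  refine le_trans (le_of_eq ?_) (exp_poisson_le hl hp ?_ hz)
  · rw [mul_comm, ← smul_eq_mul, ← Real.circleAverage_fun_smul]
    congr 2; ext ζ; simp only [smul_eq_mul]; ring
  · filter_upwards [h.G0] with θ hθ
    rw [Real.rpow_def_of_pos (norm_pos_iff.2 hθ), mul_comm]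

theorem disc_fact {g : ℂ → ℂ} (hg : DifferentiableOn ℂ g (ball 0 1)) {s : ℕ → ℝ}
    (hs0 : ∀ n, 0 ≤ s n) (hs1 : ∀ n, s n < 1) (hs : Tendsto s atTop (𝓝 1)) {C : ℝ}
    (hC : ∀ n, Real.circleAverage (fun ζ => ‖g (s n * ζ)‖) 0 1 ≤ C) 
    (hne : ∃ z ∈ ball (0:ℂ) 1, g z ≠ 0) :
    ∃ G Fd Fb, DiscFact g G Fd Fb := by
  obtain ⟨P, hP, hgP⟩ := exists_majorant hg hs0 hs1 hs hC
  have hNT := fatou_majorant hg hP hgP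
  have hlim : ∀ᵐ θ ∂mC, Tendsto (fun n => g (s n * circleMap 0 1 θ)) atTop (𝓝 (bv g (circleMap 0 1 θ))) := by
    filter_upwards [hNT] with θ hθ using hθ.radial hs0 hs1 hs
  obtain ⟨z0, hz0, hgz0⟩ := hne
  obtain ⟨h1, h2, h3, -⟩ := log_boundary hg hs0 hs1 hs hC hlim hz0 hgz0
  set Fd : ℂ → ℂ := fun z => Complex.exp (Herg (fun ζ => Real.log ‖bv g ζ‖) z) with hFd
  have hFdd : DifferentiableOn ℂ Fd (ball 0 1) := (Herg_diff h2).cexp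
  have hFdn : ∀ z ∈ ball (0:ℂ) 1, ‖Fd z‖ = Real.exp (Real.circleAverage (fun ζ => poissonKernel 0 z ζ * Real.log ‖bv g ζ‖) 0 1) := by
    intro z hz; rw [hFd, Complex.norm_exp, Herg_re h2 hz]
  have hle : ∀ z ∈ ball (0:ℂ) 1, ‖g z‖ ≤ ‖Fd z‖ := by
    intro z hz
    by_cases h : g z = 0
    · rw [h, norm_zero]; exact norm_nonneg _
    · rw [hFdn z hz, ← Real.log_le_iff_le_exp (norm_pos_iff.2 h)]
      exact (log_boundary hg hs0 hs1 hs hC hlim hz h).2.2.2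
  have hFdP : ∀ z ∈ ball (0:ℂ) 1, ‖Fd z‖ ≤ (Herg (fun ζ => ‖bv g ζ‖) z).re := by
    intro z hz
    rw [hFdn z hz, Herg_re h3 hz]
    apply exp_poisson_le h2 h3 _ hz
    filter_upwards [h1] with θ hθ
    rw [Real.exp_log (norm_pos_iff.2 hθ)]
  have hNTF := fatou_majorant hFdd (Herg_diff h3) hFdP
  have hge : ∀ᵐ θ ∂mC, ‖bv g (circleMap 0 1 θ)‖ ≤ ‖bv Fd (circleMap 0 1 θ)‖ := by
    filter_upwards [hNT, hNTF] with θ ha hb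
    refine le_of_tendsto_of_tendsto (ha.radial hs0 hs1 hs).norm (hb.radial hs0 hs1 hs).norm ?_
    exact Eventually.of_forall fun n => hle _ (smul_mem_ball (hs0 n) (hs1 n) (circleMap_mem_sphere _ zero_le_one _))
  have hcFd : ∀ n, CircleIntegrable (fun ζ => ‖Fd (s n * ζ)‖) 0 1 := fun n => 
    ContinuousOn.circleIntegrable zero_le_one (scaled_cont hFdd (hs0 n) (hs1 n)).norm
  have hmean : ∀ n, Real.circleAverage (fun ζ => ‖Fd (s n * ζ)‖) 0 1 ≤ 
      Real.circleAverage (fun ζ => ‖bv g ζ‖) 0 1 := by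
    intro n
    have hd := scaled_diffCont (Herg_diff h3) (hs0 n) (hs1 n)
    have e1 := poisson_re_entire hd (z := 0) (by simp)
    have e2 : ∀ ψ : ℂ → ℝ, Real.circleAverage (fun ζ => poissonKernel 0 0 ζ * ψ ζ) 0 1 = Real.circleAverage ψ 0 1 := by
      intro ψ
      apply Real.circleAverage_congr_sphere
      intro ζ hζ
      have : ‖ζ‖ = 1 := by simpa using hζ
      simp [poissonKernel_def, this]
    rw [e2, mul_zero, Herg_re h3 (by simp), e2] at e1
    rw [← e1]
    apply cAvg_mono (hcFd n)
    · apply ContinuousOn.circleIntegrable zero_le_one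
      exact Complex.continuous_re.comp_continuousOn (scaled_cont (Herg_diff h3) (hs0 n) (hs1 n))
    · intro ζ hζ; exact hFdP _ (smul_mem_ball (hs0 n) (hs1 n) hζ)
  have hFat := fatou_real (μ := mC) (f := fun n θ => ‖Fd (s n * circleMap 0 1 θ)‖)
    (F := fun θ => ‖bv Fd (circleMap 0 1 θ)‖) (b := fun _ => ∫ θ, ‖bv g (circleMap 0 1 θ)‖ ∂mC)
    (Eventually.of_forall fun n => (cInt_iff _).1 (hcFd n))
    (Eventually.of_forall fun n => Eventually.of_forall fun θ => norm_nonneg _)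
    (fun n => ((cInt_iff _).1 (hcFd n)).aestronglyMeasurable)
    (by filter_upwards [hNTF] with θ ha using (ha.radial hs0 hs1 hs).norm)
    (Eventually.of_forall fun n => by
      have := hmean n
      rw [cAvg_eq, cAvg_eq] at this
      exact le_of_mul_le_mul_left this (by positivity)) tendsto_const_nhds
  have heq : ∀ᵐ θ ∂mC, ‖bv Fd (circleMap 0 1 θ)‖ - ‖bv g (circleMap 0 1 θ)‖ = 0 := by
    have h3' := (cInt_iff _).1 h3
    have hnn : 0 ≤ᵐ[mC] fun θ => ‖bv Fd (circleMap 0 1 θ)‖ - ‖bv g (circleMap 0 1 θ)‖ := by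
      filter_upwards [hge] with θ hθ using sub_nonneg.2 hθ
    have := (integral_eq_zero_iff_of_nonneg_ae hnn (hFat.1.sub h3')).1 (by
      apply le_antisymm
      · rw [integral_sub hFat.1 h3']; linarith [hFat.2.1]
      · exact integral_nonneg_of_ae hnn)
    exact this
  exact ⟨bv g, Fd, bv Fd, hNT, h1, h3, h2, fun z => rfl, hle, hNTF, by
    filter_upwards [heq] with θ hθ using sub_eq_zero.1 hθ⟩

theorem circleMap_injOn_Ioc : InjOn (circleMap 0 1) (Ioc 0 (2 * π)) := by
  have := injOn_circleMap_of_abs_sub_le (a := 0) (b := 2 * π) (R := 1) (c := 0) one_ne_zero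
    (by rw [zero_sub, abs_neg, abs_of_pos (by positivity)])
  rwa [uIoc_of_le (by positivity)] at this

theorem circleMap_image_Ioc : circleMap 0 1 '' Ioc 0 (2 * π) = sphere (0:ℂ) 1 := by
  simp

theorem arc_ge {a d : ℝ} (hd : 0 < d) :
    ENNReal.ofReal (2 * Real.sin d) ≤ μH[1] (circleMap 0 1 '' Ioc (a - d) (a + d)) := by
  set T : Set ℂ := circleMap 0 1 '' Ioc (a - d) (a + d)
  let π1 : ℂ → ℝ := fun z => (Complex.exp (-(a * I)) * z).im
  have hL : LipschitzWith 1 π1 := by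
    apply LipschitzWith.of_dist_le_mul
    intro x y
    rw [Real.dist_eq, dist_eq_norm, NNReal.coe_one, one_mul, ← Complex.sub_im, ← mul_sub]
    refine (Complex.abs_im_le_norm _).trans ?_
    rw [norm_mul]
    have : ‖Complex.exp (-(a * I))‖ = 1 := by
      rw [Complex.norm_exp]; simp
    rw [this, one_mul]
  have h1 := (hL.lipschitzOnWith (s := T)).hausdorffMeasure_image_le (d := 1) zero_le_one
  simp only [ENNReal.coe_one, ENNReal.one_rpow, one_mul] at h1
  rw [hausdorffMeasure_real] at h1
  refine le_trans ?_ h1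
  have h2 : Ioc (-Real.sin d) (Real.sin d) ⊆ π1 '' T := by
    have := intermediate_value_Ioc (a := -d) (b := d) (by linarith) (Real.continuous_sin.continuousOn (s := Icc (-d) d))
    rw [Real.sin_neg] at this
    refine this.trans ?_
    rintro _ ⟨t, ht, rfl⟩
    refine ⟨_, ⟨a + t, ⟨by linarith [ht.1], by linarith [ht.2]⟩, rfl⟩, ?_⟩
    simp only [π1, circleMap, ofReal_one, one_mul, zero_add]
    rw [← Complex.exp_add]
    have : -(a * I) + ((a + t : ℝ) : ℂ) * I = (t : ℂ) * I := by push_cast; ring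
    rw [this, Complex.exp_ofReal_mul_I_im]
  refine le_trans ?_ (measure_mono h2)
  rw [Real.volume_Ioc]
  apply ENNReal.ofReal_le_ofReal; linarith

theorem arcLen_ball : arcLen (ball (0:ℂ) 1) = Measure.map (circleMap 0 1) mC := by
  have hm : Measurable (circleMap 0 1) := (continuous_circleMap 0 1).measurable
  have hfr : frontier (ball (0:ℂ) 1) = sphere 0 1 := frontier_ball 0 one_ne_zero
  have hle : arcLen (ball (0:ℂ) 1) ≤ Measure.map (circleMap 0 1) mC := by
    rw [Measure.le_iff]
    intro s hs
    rw [arcLen, hfr, Measure.restrict_apply hs, Measure.map_apply hm hs, Measure.restrict_apply (hm hs)]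
    have h1 := ((lipschitzWith_circleMap 0 1).lipschitzOnWith (s := circleMap 0 1 ⁻¹' s ∩ Ioc 0 (2 * π))).hausdorffMeasure_image_le (d := 1) zero_le_one
    rw [hausdorffMeasure_real] at h1
    simp at h1
    refine le_trans (measure_mono ?_) h1
    rintro z ⟨hz, hz2⟩
    rw [← circleMap_image_Ioc] at hz2
    obtain ⟨t, ht, rfl⟩ := hz2
    exact ⟨t, ⟨hz, ht⟩, rfl⟩
  have hB : Measure.map (circleMap 0 1) mC univ = ENNReal.ofReal (2 * π) := by
    rw [Measure.map_apply hm MeasurableSet.univ]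
    simp
  have hfinB : IsFiniteMeasure (Measure.map (circleMap 0 1) mC) := ⟨by rw [hB]; exact ENNReal.ofReal_lt_top⟩
  have hfinA : IsFiniteMeasure (arcLen (ball (0:ℂ) 1)) := isFiniteMeasure_of_le _ hle
  have key : ∀ n : ℕ, 4 ≤ n → ENNReal.ofReal (n * (2 * Real.sin (π / n))) ≤ arcLen (ball (0:ℂ) 1) univ := by
    intro n hn
    have hn0 : (0:ℝ) < n := by positivity
    have hn4 : (4:ℝ) ≤ n := by exact_mod_cast hn
    let A : ℕ → Set ℝ := fun k => Ioc (((2 * k + 1) * (π / n)) - π / n) (((2 * k + 1) * (π / n)) + π / n)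
    have hA : ∀ k : ℕ, A k = Ioc ((2 * k) * (π / n)) ((2 * (k + 1 : ℕ)) * (π / n)) := by
      intro k; simp only [A]; congr 1 <;> push_cast <;> ring
    have hpos : 0 < π / n := by positivity
    have hAsub : ∀ k ∈ Finset.range n, A k ⊆ Ioc 0 (2 * π) := by
      intro k hk
      rw [hA]
      apply Ioc_subset_Ioc
      · positivity
      · have : ((k + 1 : ℕ) : ℝ) ≤ n := by exact_mod_cast Finset.mem_range.1 hk
        calc 2 * ((k + 1 : ℕ):ℝ) * (π / n) ≤ 2 * n * (π / n) := by gcongr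
          _ = 2 * π := by field_simp
    have hdis : Pairwise (Function.onFun Disjoint A) := by
      have hmono : Monotone (fun k : ℕ => (2 * (k:ℝ)) * (π / n)) := by
        intro a b hab
        have : (a:ℝ) ≤ b := by exact_mod_cast hab
        simp only; gcongr
      have := hmono.pairwise_disjoint_on_Ioc_succ
      convert this using 2
      ext1 k
      rw [hA]; rfl
    have hdis2 : (↑(Finset.range n) : Set ℕ).Pairwise (Function.onFun Disjoint fun k => circleMap 0 1 '' A k) := by
      intro i hi j hj hij
      have := hdis hij
      simp only [Function.onFun] at this ⊢
      rw [Set.disjoint_left] at this ⊢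
      rintro _ ⟨x, hx, rfl⟩ ⟨y, hy, hxy⟩
      have := circleMap_injOn_Ioc (hAsub j hj hy) (hAsub i hi hx) hxy
      subst this
      exact (by assumption : ∀ ⦃a⦄, a ∈ A i → a ∉ A j) hx hy
    have hmeas : ∀ k ∈ Finset.range n, MeasurableSet (circleMap 0 1 '' A k) := fun k hk =>
      MeasurableSet.image_of_continuousOn_injOn measurableSet_Ioc (continuous_circleMap 0 1).continuousOn
        (circleMap_injOn_Ioc.mono (hAsub k hk))
    calc ENNReal.ofReal (n * (2 * Real.sin (π / n))) = ∑ k ∈ Finset.range n, ENNReal.ofReal (2 * Real.sin (π / n)) := by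
          rw [Finset.sum_const, Finset.card_range, nsmul_eq_mul, ENNReal.ofReal_mul hn0.le, ENNReal.ofReal_natCast]
      _ ≤ ∑ k ∈ Finset.range n, μH[1] (circleMap 0 1 '' A k) := Finset.sum_le_sum fun k _ => arc_ge hpos
      _ = μH[1] (⋃ k ∈ Finset.range n, circleMap 0 1 '' A k) := (measure_biUnion_finset hdis2 hmeas).symm
      _ ≤ μH[1] (sphere (0:ℂ) 1) := by
          apply measure_mono
          simp only [iUnion_subset_iff]
          intro k hk
          rw [← circleMap_image_Ioc]
          exact image_mono (hAsub k hk)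
      _ = arcLen (ball (0:ℂ) 1) univ := by rw [arcLen, hfr, Measure.restrict_apply_univ]
  have hge : ENNReal.ofReal (2 * π) ≤ arcLen (ball (0:ℂ) 1) univ := by
    have ht : Tendsto (fun n : ℕ => 2 * π - (π ^ 3 / 3) * ((1 / (n:ℝ)) * (1 / (n:ℝ)))) atTop (𝓝 (2 * π)) := by
      have h0 := tendsto_one_div_atTop_nhds_zero_nat (𝕜 := ℝ)
      simpa using (((h0.mul h0).const_mul (π ^ 3 / 3)).const_sub (2 * π))
    refine le_of_tendsto ((ENNReal.continuous_ofReal.tendsto _).comp ht) ?_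
    filter_upwards [eventually_ge_atTop 4] with n hn
    refine le_trans (ENNReal.ofReal_le_ofReal ?_) (key n hn)
    have hn4 : (4:ℝ) ≤ n := by exact_mod_cast hn
    have hn0 : (0:ℝ) < n := by linarith
    have hpos : 0 < π / n := by positivity
    have := Real.sin_gt_sub_cube hpos
    calc 2 * π - (π ^ 3 / 3) * ((1 / (n:ℝ)) * (1 / (n:ℝ))) = n * (2 * (π / n - (π / n) ^ 3 / 6)) := by
          field_simp; ring
      _ ≤ _ := by gcongr
  ext s hs
  refine le_antisymm (hle s) ?_
  have h1 := measure_add_measure_compl (μ := arcLen (ball (0:ℂ) 1)) hs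
  have h2 := measure_add_measure_compl (μ := Measure.map (circleMap 0 1) mC) hs
  have h3 := hle sᶜ
  have hne : Measure.map (circleMap 0 1) mC sᶜ ≠ ⊤ := measure_ne_top _ _
  refine (ENNReal.add_le_add_iff_right hne).1 ?_
  rw [h2, hB]
  refine hge.trans ?_
  rw [← h1]
  gcongr

structure InvPack (Ω : Set ℂ) (ψ κ : ℂ → ℂ) : Prop where
  maps : ∀ w ∈ Ω, κ w ∈ ball (0:ℂ) 1
  left : ∀ z ∈ ball (0:ℂ) 1, κ (ψ z) = z
  right : ∀ w ∈ Ω, ψ (κ w) = w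
  mapsψ : ∀ z ∈ ball (0:ℂ) 1, ψ z ∈ Ω
  diff : DifferentiableOn ℂ κ Ω
  diffψ : DifferentiableOn ℂ ψ (ball (0:ℂ) 1)

theorem exists_inv {Ω : Set ℂ} (hΩ : IsOpen Ω) {ψ : ℂ → ℂ} (hψ : IsConformalOnto ψ Ω) :
    ∃ κ, InvPack Ω ψ κ := by
  obtain ⟨hd, hinj, himg, -⟩ := hψ
  set κ := Function.invFunOn ψ (ball (0:ℂ) 1)
  have left : ∀ z ∈ ball (0:ℂ) 1, κ (ψ z) = z := fun z hz => hinj.leftInvOn_invFunOn hz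
  have maps : ∀ w ∈ Ω, κ w ∈ ball (0:ℂ) 1 := fun w hw => Function.invFunOn_mem (by rw [← himg] at hw; exact hw)
  have right : ∀ w ∈ Ω, ψ (κ w) = w := fun w hw => Function.invFunOn_eq (by rw [← himg] at hw; exact hw)
  have mapsψ : ∀ z ∈ ball (0:ℂ) 1, ψ z ∈ Ω := fun z hz => himg ▸ mem_image_of_mem _ hz
  have han : AnalyticOnNhd ℂ ψ (ball 0 1) := hd.analyticOnNhd isOpen_ball
  have hnc : ∀ z ∈ ball (0:ℂ) 1, ¬ ∀ᶠ w in 𝓝 z, ψ w = ψ z := by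
    intro z hz h
    have h2 : ∀ᶠ w in 𝓝 z, w = z := by
      filter_upwards [h, isOpen_ball.mem_nhds hz] with w hw hw2 using hinj hw2 hz hw
    have : (𝓝[≠] z).NeBot := inferInstance
    have h3 : ∀ᶠ w in 𝓝[≠] z, False := by
      filter_upwards [h2.filter_mono nhdsWithin_le_nhds, self_mem_nhdsWithin] with w a b using b a
    exact (this.ne (by rwa [eventually_false_iff_eq_bot] at h3))
  have hopen : ∀ z ∈ ball (0:ℂ) 1, 𝓝 (ψ z) ≤ map ψ (𝓝 z) := fun z hz =>
    ((han z hz).eventually_constant_or_nhds_le_map_nhds).resolve_left (hnc z hz)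
  have hcont : ∀ w ∈ Ω, ContinuousAt κ w := by
    intro w hw
    have hz := maps w hw
    rw [ContinuousAt, tendsto_def]
    intro s hs
    have h1 := hopen _ hz
    rw [right w hw] at h1
    have h2 : s ∩ ball 0 1 ∈ 𝓝 (κ w) := inter_mem hs (isOpen_ball.mem_nhds hz)
    have h3 : ψ '' (s ∩ ball 0 1) ∈ 𝓝 w := h1 (image_mem_map h2)
    filter_upwards [h3]
    rintro _ ⟨z, ⟨hzs, hzb⟩, rfl⟩
    simpa [left z hzb] using hzs
  have hdiff1 : ∀ w ∈ Ω, deriv ψ (κ w) ≠ 0 → DifferentiableAt ℂ κ w := by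
    intro w hw hne
    have h1 : HasDerivAt ψ (deriv ψ (κ w)) (κ w) :=
      (hd.differentiableAt (isOpen_ball.mem_nhds (maps w hw))).hasDerivAt
    exact (HasDerivAt.of_local_left_inverse (hcont w hw) h1 hne (by
      filter_upwards [hΩ.mem_nhds hw] with v hv using right v hv)).differentiableAt
  refine ⟨κ, maps, left, right, mapsψ, fun w hw => DifferentiableAt.differentiableWithinAt ?_, hd⟩
  have hz := maps w hw
  have hev : ∀ᶠ z in 𝓝[≠] (κ w), deriv ψ z ≠ 0 := by
    refine ((han _ hz).deriv.eventually_eq_zero_or_eventually_ne_zero).resolve_left fun h => ?_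
    obtain ⟨ε, hε, hb⟩ := Metric.eventually_nhds_iff_ball.1 (h.and (isOpen_ball.eventually_mem hz))
    refine hnc _ hz ?_
    filter_upwards [ball_mem_nhds _ hε] with v hv
    exact (isOpen_ball.is_const_of_deriv_eq_zero (convex_ball (κ w) ε).isPreconnected
      (hd.mono fun x hx => (hb x hx).2) (fun x hx => (hb x hx).1) hv (mem_ball_self hε))
  have hev2 : ∀ᶠ v in 𝓝[≠] w, deriv ψ (κ v) ≠ 0 := by
    have : Tendsto κ (𝓝[≠] w) (𝓝[≠] (κ w)) := by
      apply tendsto_nhdsWithin_of_tendsto_nhds_of_eventually_within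
      · exact (hcont w hw).mono_left nhdsWithin_le_nhds
      · filter_upwards [self_mem_nhdsWithin, mem_nhdsWithin_of_mem_nhds (hΩ.mem_nhds hw)] with v hv hvΩ h
        apply hv
        rw [mem_singleton_iff] at h ⊢
        rw [← right v hvΩ, h, right w hw]
    exact this.eventually hev
  apply (analyticAt_of_differentiable_on_punctured_nhds_of_continuousAt ?_ (hcont w hw)).differentiableAt
  filter_upwards [hev2, mem_nhdsWithin_of_mem_nhds (hΩ.mem_nhds hw)] with v hv hvΩ using hdiff1 v hvΩ hv

theorem lap_congr {φ ψ : ℂ → ℝ} {z : ℂ} (h : φ =ᶠ[𝓝 z] ψ) : lap φ z = lap ψ z := by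
  have h1 : ∀ v : ℂ, (fun w => fderiv ℝ φ w v) =ᶠ[𝓝 z] (fun w => fderiv ℝ ψ w v) := fun v => by
    filter_upwards [h.fderiv (𝕜 := ℝ)] with w hw; rw [hw]
  simp only [lap, (h1 1).fderiv_eq, (h1 I).fderiv_eq]

theorem cd2_diff {φ : ℂ → ℝ} {z : ℂ} (h : ContDiffAt ℝ 2 φ z) : ∀ᶠ w in 𝓝 z, DifferentiableAt ℝ φ w := by
  filter_upwards [h.eventually (by simp)] with w hw using hw.differentiableAt (by simp)

theorem cd2_diff2 {φ : ℂ → ℝ} {z : ℂ} (h : ContDiffAt ℝ 2 φ z) (v : ℂ) :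
    DifferentiableAt ℝ (fun w => fderiv ℝ φ w v) z := by
  have : ContDiffAt ℝ 1 (fderiv ℝ φ) z := h.fderiv_right (m := 1) (by norm_num)
  exact (this.differentiableAt (by simp)).clm_apply (differentiableAt_const v)

theorem lap_add {φ ψ : ℂ → ℝ} {z : ℂ} (h1 : ContDiffAt ℝ 2 φ z) (h2 : ContDiffAt ℝ 2 ψ z) :
    lap (fun w => φ w + ψ w) z = lap φ z + lap ψ z := by
  have h : ∀ v : ℂ, (fun w => fderiv ℝ (fun w => φ w + ψ w) w v) =ᶠ[𝓝 z]
      (fun w => fderiv ℝ φ w v + fderiv ℝ ψ w v) := fun v => by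
    filter_upwards [cd2_diff h1, cd2_diff h2] with w a b
    rw [fderiv_fun_add a b]; rfl
  simp only [lap, (h 1).fderiv_eq, (h I).fderiv_eq]
  rw [fderiv_fun_add (cd2_diff2 h1 1) (cd2_diff2 h2 1), fderiv_fun_add (cd2_diff2 h1 I) (cd2_diff2 h2 I)]
  simp only [add_apply]; ring

theorem lap_sub {φ ψ : ℂ → ℝ} {z : ℂ} (h1 : ContDiffAt ℝ 2 φ z) (h2 : ContDiffAt ℝ 2 ψ z) :
    lap (fun w => φ w - ψ w) z = lap φ z - lap ψ z := by
  have h : ∀ v : ℂ, (fun w => fderiv ℝ (fun w => φ w - ψ w) w v) =ᶠ[𝓝 z]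
      (fun w => fderiv ℝ φ w v - fderiv ℝ ψ w v) := fun v => by
    filter_upwards [cd2_diff h1, cd2_diff h2] with w a b
    rw [fderiv_fun_sub a b]; rfl
  simp only [lap, (h 1).fderiv_eq, (h I).fderiv_eq]
  rw [fderiv_fun_sub (cd2_diff2 h1 1) (cd2_diff2 h2 1), fderiv_fun_sub (cd2_diff2 h1 I) (cd2_diff2 h2 I)]
  simp only [sub_apply]; ring

theorem lap_const (c : ℝ) (z : ℂ) : lap (fun _ => c) z = 0 := by
  simp [lap]

theorem fderiv_comp_real {Λ : ℝ → ℝ} {g : ℂ → ℝ} {z : ℂ} (h1 : DifferentiableAt ℝ Λ (g z))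
    (h2 : DifferentiableAt ℝ g z) (v : ℂ) :
    fderiv ℝ (fun w => Λ (g w)) z v = deriv Λ (g z) * fderiv ℝ g z v := by
  have := (h1.hasDerivAt.comp_hasFDerivAt z h2.hasFDerivAt).fderiv
  simp only [Function.comp_def] at this
  rw [this]; simp

theorem lap_comp {Λ : ℝ → ℝ} {g : ℂ → ℝ} {z : ℂ} (h1 : ContDiffAt ℝ 2 Λ (g z)) (h2 : ContDiffAt ℝ 2 g z) :
    lap (fun w => Λ (g w)) z = deriv (deriv Λ) (g z) * ((fderiv ℝ g z 1) ^ 2 + (fderiv ℝ g z I) ^ 2) +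
      deriv Λ (g z) * lap g z := by
  have hd : ∀ᶠ x in 𝓝 (g z), DifferentiableAt ℝ Λ x := by
    filter_upwards [h1.eventually (by simp)] with w hw using hw.differentiableAt (by simp)
  have hd2 : DifferentiableAt ℝ (deriv Λ) (g z) := by
    have : ContDiffAt ℝ 1 (deriv Λ) (g z) := h1.derivWithin (m := 1) (by norm_num)
    exact this.differentiableAt (by simp)
  have hgz : DifferentiableAt ℝ g z := h2.differentiableAt (by simp)
  have h : ∀ v : ℂ, (fun w => fderiv ℝ (fun w => Λ (g w)) w v) =ᶠ[𝓝 z]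
      (fun w => deriv Λ (g w) * fderiv ℝ g w v) := fun v => by
    filter_upwards [cd2_diff h2, h2.continuousAt.eventually hd] with w a b
    exact fderiv_comp_real b a v
  have hv : ∀ v : ℂ, fderiv ℝ (fun w => fderiv ℝ (fun w => Λ (g w)) w v) z v =
      deriv (deriv Λ) (g z) * (fderiv ℝ g z v) ^ 2 + deriv Λ (g z) * fderiv ℝ (fun w => fderiv ℝ g w v) z v := by
    intro v
    rw [(h v).fderiv_eq]
    have e : DifferentiableAt ℝ (fun w => deriv Λ (g w)) z := hd2.comp z hgz
    rw [fderiv_fun_mul e (cd2_diff2 h2 v)]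
    simp only [add_apply, smul_apply, smul_eq_mul]
    rw [fderiv_comp_real hd2 hgz]; ring
  simp only [lap, hv]; ring

theorem holo_cd {Q : ℂ → ℂ} {U : Set ℂ} (hU : IsOpen U) (hQ : DifferentiableOn ℂ Q U) {z : ℂ} (hz : z ∈ U) :
    ContDiffAt ℝ 2 Q z := 
  ((hQ.analyticOnNhd hU) z hz).contDiffAt.restrict_scalars ℝ

theorem re_cd {Q : ℂ → ℂ} {U : Set ℂ} (hU : IsOpen U) (hQ : DifferentiableOn ℂ Q U) {z : ℂ} (hz : z ∈ U) :
    ContDiffAt ℝ 2 (fun w => (Q w).re) z := 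
  Complex.reCLM.contDiff.contDiffAt.comp z (holo_cd hU hQ hz)

theorem fderiv_re {Q : ℂ → ℂ} {z : ℂ} (h : DifferentiableAt ℂ Q z) (v : ℂ) :
    fderiv ℝ (fun w => (Q w).re) z v = (deriv Q z * v).re := by
  have h1 := (h.hasDerivAt.hasFDerivAt).restrictScalars ℝ
  have h2 := (Complex.reCLM.hasFDerivAt.comp z h1).fderiv
  have h3 : (⇑reCLM ∘ Q) = fun w => (Q w).re := rfl
  rw [h3] at h2
  rw [h2]
  simp [mul_comm]

theorem lap_re {Q : ℂ → ℂ} {U : Set ℂ} (hU : IsOpen U) (hQ : DifferentiableOn ℂ Q U) {z : ℂ} (hz : z ∈ U) :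
    lap (fun w => (Q w).re) z = 0 := by
  have hQ' : DifferentiableOn ℂ (deriv Q) U := hQ.deriv hU
  have h : ∀ v : ℂ, (fun w => fderiv ℝ (fun w => (Q w).re) w v) =ᶠ[𝓝 z] (fun w => (deriv Q w * v).re) := fun v => by
    filter_upwards [hU.mem_nhds hz] with w hw
    exact fderiv_re (hQ.differentiableAt (hU.mem_nhds hw)) v
  have hd : ∀ v, DifferentiableAt ℂ (fun w => deriv Q w * v) z := fun v =>
    (hQ'.differentiableAt (hU.mem_nhds hz)).mul_const v
  simp only [lap, (h 1).fderiv_eq, (h I).fderiv_eq]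
  rw [fderiv_re (hd 1), fderiv_re (hd I)]
  have : deriv (fun w => deriv Q w * I) z = deriv (deriv Q) z * I := 
    deriv_mul_const (hQ'.differentiableAt (hU.mem_nhds hz)) I
  rw [this]
  simp [mul_assoc]

/-- smooth majorant of `‖f‖^p` -/
noncomputable def wf (p : ℝ) (f : ℂ → ℂ) (z : ℂ) : ℝ := ((f z).re ^ 2 + (f z).im ^ 2 + 1) ^ (p / 2)

theorem wf_cd {p : ℝ} {f : ℂ → ℂ} {U : Set ℂ} (hU : IsOpen U) (hf : DifferentiableOn ℂ f U) {z : ℂ} (hz : z ∈ U) :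
    ContDiffAt ℝ 2 (wf p f) z := by
  have h1 := re_cd hU hf hz
  have h2 : ContDiffAt ℝ 2 (fun w => (f w).im) z := 
    Complex.imCLM.contDiff.contDiffAt.comp z (holo_cd hU hf hz)
  refine ContDiffAt.rpow_const_of_ne (((h1.pow 2).add (h2.pow 2)).add contDiffAt_const) ?_
  positivity

theorem wf_lap {p : ℝ} (hp : 0 ≤ p) {f : ℂ → ℂ} {U : Set ℂ} (hU : IsOpen U) (hf : DifferentiableOn ℂ f U) {z : ℂ} (hz : z ∈ U) :
    0 ≤ lap (wf p f) z := by
  have hfz := hf.differentiableAt (hU.mem_nhds hz)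
  have hIf : DifferentiableOn ℂ (fun w => -I * f w) U := hf.const_mul _
  have him : (fun w => (f w).im) = fun w => (-I * f w).re := by ext w; simp
  have h1 := re_cd hU hf hz
  have h2 : ContDiffAt ℝ 2 (fun w => (f w).im) z := by rw [him]; exact re_cd hU hIf hz
  have hx : ∀ v, fderiv ℝ (fun w => (f w).re) z v = (deriv f z * v).re := fderiv_re hfz
  have hy : ∀ v, fderiv ℝ (fun w => (f w).im) z v = (deriv f z * v).im := by
    intro v
    rw [him, fderiv_re (hfz.const_mul _), deriv_const_mul _ hfz]; simp [mul_assoc]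
  have lx : lap (fun w => (f w).re) z = 0 := lap_re hU hf hz
  have ly : lap (fun w => (f w).im) z = 0 := by rw [him]; exact lap_re hU hIf hz
  set g : ℂ → ℝ := fun w => ((f w).re ^ 2 + (f w).im ^ 2) + 1 with hg
  have c1 : ContDiffAt ℝ 2 (fun w => (f w).re ^ 2) z := h1.pow 2
  have c2 : ContDiffAt ℝ 2 (fun w => (f w).im ^ 2) z := h2.pow 2
  have dd : deriv (deriv fun x : ℝ => x ^ 2) = fun _ => 2 := by
    have : (deriv fun x : ℝ => x ^ 2) = fun x => 2 * x := by ext x; simp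
    rw [this]; ext x; simp
  have d1 : ∀ x : ℝ, deriv (fun x : ℝ => x ^ 2) x = 2 * x := by intro x; simp
  have cq : ∀ x : ℝ, ContDiffAt ℝ 2 (fun x : ℝ => x ^ 2) x := fun x => contDiffAt_id.pow 2
  have lx2 : lap (fun w => (f w).re ^ 2) z = 2 * (((deriv f z).re) ^ 2 + ((deriv f z).im) ^ 2) := by
    rw [lap_comp (Λ := fun x => x ^ 2) (cq _) h1, dd, lx, hx, hx]; simp
  have ly2 : lap (fun w => (f w).im ^ 2) z = 2 * (((deriv f z).re) ^ 2 + ((deriv f z).im) ^ 2) := by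
    rw [lap_comp (Λ := fun x => x ^ 2) (cq _) h2, dd, ly, hy, hy]; simp; ring
  have lg : lap g z = 4 * (((deriv f z).re) ^ 2 + ((deriv f z).im) ^ 2) := by
    rw [hg, lap_add (c1.add c2) contDiffAt_const, lap_const, lap_add c1 c2, lx2, ly2]; ring
  have fg : ∀ v, fderiv ℝ g z v = 2 * (f z).re * (deriv f z * v).re + 2 * (f z).im * (deriv f z * v).im := by
    intro v
    have e1 := c1.differentiableAt (by simp)
    have e2 := c2.differentiableAt (by simp)
    rw [hg, fderiv_add_const, fderiv_fun_add e1 e2, add_apply,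
      fderiv_comp_real (Λ := fun x => x ^ 2) (by fun_prop) (h1.differentiableAt (by simp)),
      fderiv_comp_real (Λ := fun x => x ^ 2) (by fun_prop) (h2.differentiableAt (by simp)), hx, hy, d1, d1]
  have gpos : 0 < g z := by simp only [hg]; positivity
  have cg : ContDiffAt ℝ 2 g z := (c1.add c2).add contDiffAt_const
  have hw : wf p f = fun w => (fun x : ℝ => x ^ (p / 2)) (g w) := rfl
  have D1 : ∀ x : ℝ, 0 < x → deriv (fun x : ℝ => x ^ (p / 2)) x = p / 2 * x ^ (p / 2 - 1) := fun x hx =>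
    (Real.hasDerivAt_rpow_const (Or.inl hx.ne')).deriv
  have D2 : deriv (deriv fun x : ℝ => x ^ (p / 2)) (g z) = p / 2 * ((p / 2 - 1) * (g z) ^ (p / 2 - 1 - 1)) := by
    have : (deriv fun x : ℝ => x ^ (p / 2)) =ᶠ[𝓝 (g z)] fun x => p / 2 * x ^ (p / 2 - 1) := by
      filter_upwards [lt_mem_nhds gpos] with x hx using D1 x hx
    rw [this.deriv_eq]
    exact ((Real.hasDerivAt_rpow_const (Or.inl gpos.ne')).const_mul _).deriv
  rw [hw, lap_comp (Real.contDiffAt_rpow_const_of_ne gpos.ne') cg, D2, D1 _ gpos, lg, fg, fg]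
  have e : (g z) ^ (p / 2 - 1) = (g z) ^ (p / 2 - 1 - 1) * g z := by
    rw [Real.rpow_sub_one gpos.ne' (p / 2 - 1)]; field_simp
  rw [e]
  set A := (g z) ^ (p / 2 - 1 - 1)
  have hA : 0 < A := Real.rpow_pos_of_pos gpos _
  have hgz : g z = (f z).re ^ 2 + (f z).im ^ 2 + 1 := rfl
  have hI1 : (deriv f z * I).re = - (deriv f z).im := by simp
  have hI2 : (deriv f z * I).im = (deriv f z).re := by simp
  rw [hI1, hI2, mul_one, hgz]
  have : p / 2 * ((p / 2 - 1) * A) * ((2 * (f z).re * (deriv f z).re + 2 * (f z).im * (deriv f z).im) ^ 2 +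
      (2 * (f z).re * -(deriv f z).im + 2 * (f z).im * (deriv f z).re) ^ 2) +
      p / 2 * (A * ((f z).re ^ 2 + (f z).im ^ 2 + 1)) * (4 * ((deriv f z).re ^ 2 + (deriv f z).im ^ 2)) =
      2 * p * A * ((deriv f z).re ^ 2 + (deriv f z).im ^ 2) * (p / 2 * ((f z).re ^ 2 + (f z).im ^ 2) + 1) := by ring
  rw [this]
  positivity

structure IsTest (Ω : Set ℂ) (φ : ℂ → ℝ) : Prop where
  cd : ContDiff ℝ 2 φ
  cpt : HasCompactSupport φ
  sub : tsupport φ ⊆ Ω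

structure IsCut (Ω K : Set ℂ) (χ : ℂ → ℝ) : Prop extends IsTest Ω χ where
  one : ∀ᶠ x in 𝓝ˢ K, χ x = 1
  nn : ∀ x, 0 ≤ χ x
  le1 : ∀ x, χ x ≤ 1

open scoped Manifold in
theorem exists_cut {Ω K : Set ℂ} (hΩ : IsOpen Ω) (hK : IsCompact K) (hKΩ : K ⊆ Ω) : ∃ χ, IsCut Ω K χ := by
  obtain ⟨L, hL, hKL, hLΩ⟩ := exists_compact_between hK hΩ hKΩ
  obtain ⟨χ, h1, h0, h01⟩ := exists_contMDiffMap_one_nhds_of_subset_interior (n := 2) 𝓘(ℝ, ℂ) hK.isClosed hKL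
  have hs : tsupport χ ⊆ L := closure_minimal (fun x hx => by
    by_contra h; exact hx (h0 x h)) hL.isClosed
  exact ⟨χ, ⟨χ.contMDiff.contDiff, HasCompactSupport.intro hL h0, hs.trans hLΩ⟩, h1, fun x => (h01 x).1, fun x => (h01 x).2⟩

theorem IsTest.mul {Ω : Set ℂ} {χ φ : ℂ → ℝ} (h : IsTest Ω χ) (hφ : ∀ z ∈ Ω, ContDiffAt ℝ 2 φ z) :
    IsTest Ω (fun z => χ z * φ z) := by
  refine ⟨?_, h.cpt.mul_right, (closure_mono (Function.support_mul_subset_left _ _)).trans h.sub⟩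
  rw [contDiff_iff_contDiffAt]
  intro z
  by_cases hz : z ∈ tsupport χ
  · exact h.cd.contDiffAt.mul (hφ z (h.sub hz))
  · have : (fun z => χ z * φ z) =ᶠ[𝓝 z] fun _ => 0 := by
      filter_upwards [(isClosed_tsupport χ).isOpen_compl.mem_nhds hz] with w hw
      rw [image_eq_zero_of_notMem_tsupport hw, zero_mul]
    exact contDiffAt_const.congr_of_eventuallyEq this

theorem IsTest.lap_cont {Ω : Set ℂ} {φ : ℂ → ℝ} (h : IsTest Ω φ) : Continuous (lap φ) := by
  have h1 : ∀ v : ℂ, Continuous fun z => fderiv ℝ (fun w => fderiv ℝ φ w v) z v := by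
    intro v
    have a : ContDiff ℝ 1 (fderiv ℝ φ) := h.cd.fderiv_right (m := 1) (by norm_num)
    have b : ContDiff ℝ 1 (fun w => fderiv ℝ φ w v) := a.clm_apply contDiff_const
    exact (b.continuous_fderiv (by simp)).clm_apply continuous_const
  exact (h1 1).add (h1 I)

theorem lap_zero_off {φ : ℂ → ℝ} {z : ℂ} (hz : z ∉ tsupport φ) : lap φ z = 0 := by
  have : φ =ᶠ[𝓝 z] fun _ => 0 := by
    filter_upwards [(isClosed_tsupport φ).isOpen_compl.mem_nhds hz] with w hw
    exact image_eq_zero_of_notMem_tsupport hw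
  rw [lap_congr this, lap_const]

theorem IsTest.int_lap {Ω : Set ℂ} {φ u : ℂ → ℝ} (h : IsTest Ω φ) (hu : ContinuousOn u Ω) :
    Integrable (fun z => u z * lap φ z) := by
  have hs : Function.support (fun z => u z * lap φ z) ⊆ tsupport φ := by
    intro z hz
    by_contra hc
    exact hz (by simp [lap_zero_off hc])
  rw [← integrableOn_iff_integrable_of_support_subset hs]
  exact ((hu.mono h.sub).mul h.lap_cont.continuousOn).integrableOn_compact h.cpt

structure Ctx (Ω : Set ℂ) (u : ℂ → ℝ) (ν : Measure ℂ) (r : ℝ) (νr : Measure ℂ) : Prop where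
  op : IsOpen Ω
  cont : ContinuousOn u Ω
  cpt : IsCompact (closure {z | z ∈ Ω ∧ u z < r})
  sub : closure {z | z ∈ Ω ∧ u z < r} ⊆ Ω
  hν : IsRieszMeasure u Ω ν
  fin : ν univ < ⊤
  hνr : IsRieszMeasure (fun z => max (u z) r) Ω νr
  ne : ∃ z ∈ Ω, u z < r

section
variable {Ω : Set ℂ} {u : ℂ → ℝ} {ν νr : Measure ℂ} {r : ℝ}

theorem Ctx.open_sub (C : Ctx Ω u ν r νr) : IsOpen {z | z ∈ Ω ∧ u z < r} :=
  C.cont.isOpen_inter_preimage C.op isOpen_Iio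

theorem Ctx.maxcont (C : Ctx Ω u ν r νr) : ContinuousOn (fun z => max (u z) r) Ω :=
  C.cont.sup continuousOn_const

theorem Ctx.riesz_diff (C : Ctx Ω u ν r νr) {φ : ℂ → ℝ} (h : IsTest Ω φ) :
    ∫ z, φ z ∂νr = ∫ z, φ z ∂ν + (4:ℝ)⁻¹ * ∫ z in Ω, (max (u z) r - u z) * lap φ z := by
  rw [C.hν.2 φ h.cd h.cpt h.sub, C.hνr.2 φ h.cd h.cpt h.sub, ← mul_add,
    ← integral_add (h.int_lap C.cont).integrableOn]
  · congr 2; ext z; ring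
  · exact (h.int_lap (C.maxcont.sub C.cont)).integrableOn

theorem Ctx.cut_lap (C : Ctx Ω u ν r νr) {χ φ : ℂ → ℝ} {K : Set ℂ} 
    (h : IsCut Ω (closure {z | z ∈ Ω ∧ u z < r} ∪ K) χ) {z : ℂ} (hz : z ∈ Ω) :
    (max (u z) r - u z) * lap (fun z => χ z * φ z) z = (max (u z) r - u z) * lap φ z := by
  by_cases hr : u z < r
  · congr 1
    apply lap_congr
    have := (eventually_nhdsSet_iff_forall.1 h.one) z (Or.inl (subset_closure ⟨hz, hr⟩))
    filter_upwards [this] with w hw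
    rw [hw, one_mul]
  · rw [max_eq_left (not_lt.1 hr), sub_self, zero_mul, zero_mul]

theorem Ctx.riesz_cut (C : Ctx Ω u ν r νr) {χ φ : ℂ → ℝ} {K : Set ℂ} 
    (h : IsCut Ω (closure {z | z ∈ Ω ∧ u z < r} ∪ K) χ) (hφ : ∀ z ∈ Ω, ContDiffAt ℝ 2 φ z) :
    ∫ z, χ z * φ z ∂νr = ∫ z, χ z * φ z ∂ν + (4:ℝ)⁻¹ * ∫ z in Ω, (max (u z) r - u z) * lap φ z := by
  rw [C.riesz_diff (h.toIsTest.mul hφ)]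
  congr 2
  exact setIntegral_congr_fun C.op.measurableSet fun z hz => C.cut_lap h hz

theorem IsTest.int_fin {φ : ℂ → ℝ} (h : IsTest Ω φ) (fin : ν univ < ⊤) : Integrable φ ν := by
  have : IsFiniteMeasure ν := ⟨fin⟩
  exact h.cd.continuous.integrable_of_hasCompactSupport h.cpt

theorem q_cd (z : ℂ) : ContDiffAt ℝ 2 (fun w : ℂ => (w.re ^ 2 + w.im ^ 2) + 1) z := by
  have h1 : ContDiff ℝ 2 (fun w : ℂ => w.re) := Complex.reCLM.contDiff
  have h2 : ContDiff ℝ 2 (fun w : ℂ => w.im) := Complex.imCLM.contDiff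
  exact (((h1.pow 2).add (h2.pow 2)).add contDiff_const).contDiffAt

theorem q_lap (z : ℂ) : lap (fun w : ℂ => (w.re ^ 2 + w.im ^ 2) + 1) z = 4 := by
  have h1 : ContDiff ℝ 2 (fun w : ℂ => w.re) := Complex.reCLM.contDiff
  have h2 : ContDiff ℝ 2 (fun w : ℂ => w.im) := Complex.imCLM.contDiff
  have f1 : ∀ w v : ℂ, fderiv ℝ (fun w : ℂ => w.re) w v = v.re := fun w v => by
    have := Complex.reCLM.hasFDerivAt (x := w) |>.fderiv
    change fderiv ℝ (fun w : ℂ => w.re) w = reCLM at this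
    rw [this]; simp
  have f2 : ∀ w v : ℂ, fderiv ℝ (fun w : ℂ => w.im) w v = v.im := fun w v => by
    have := Complex.imCLM.hasFDerivAt (x := w) |>.fderiv
    change fderiv ℝ (fun w : ℂ => w.im) w = imCLM at this
    rw [this]; simp
  have e : ∀ v : ℂ, (fun w => fderiv ℝ (fun w : ℂ => (w.re ^ 2 + w.im ^ 2) + 1) w v) = 
      fun w => 2 * (w * (starRingEnd ℂ v)).re := by
    intro v
    ext w
    have e1 : DifferentiableAt ℝ (fun w : ℂ => w.re ^ 2) w := ((h1.pow 2).differentiable (by simp)) w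
    have e2 : DifferentiableAt ℝ (fun w : ℂ => w.im ^ 2) w := ((h2.pow 2).differentiable (by simp)) w
    rw [fderiv_add_const, fderiv_fun_add e1 e2, add_apply,
      fderiv_comp_real (Λ := fun x => x ^ 2) (by fun_prop) ((h1.differentiable (by simp)) w),
      fderiv_comp_real (Λ := fun x => x ^ 2) (by fun_prop) ((h2.differentiable (by simp)) w), f1, f2]
    simp; ring
  have e' : ∀ v : ℂ, fderiv ℝ (fun w : ℂ => 2 * (w * (starRingEnd ℂ v)).re) z v = 2 * (v * starRingEnd ℂ v).re := by
    intro v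
    have d : DifferentiableAt ℂ (fun w : ℂ => w * (starRingEnd ℂ v)) z := by fun_prop
    have d2 : DifferentiableAt ℝ (fun w : ℂ => (w * (starRingEnd ℂ v)).re) z := 
      (re_cd isOpen_univ (fun w _ => (by fun_prop : DifferentiableWithinAt ℂ (fun w : ℂ => w * (starRingEnd ℂ v)) univ w)) (mem_univ z)).differentiableAt (by simp)
    rw [fderiv_const_mul d2]
    simp only [smul_apply, smul_eq_mul]
    rw [fderiv_re d, deriv_mul_const (by fun_prop)]
    simp [mul_comm]
  rw [lap, e, e, e', e']
  simp; norm_num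

theorem Ctx.qint_pos (C : Ctx Ω u ν r νr) :
    0 < ∫ z in Ω, (max (u z) r - u z) * lap (fun w : ℂ => (w.re ^ 2 + w.im ^ 2) + 1) z := by
  obtain ⟨z0, hz0, hz0r⟩ := C.ne
  simp only [q_lap]
  rw [integral_mul_const]
  refine mul_pos ?_ (by norm_num)
  have hc : ContinuousOn (fun z => max (u z) r - u z) Ω := C.maxcont.sub C.cont
  have hnn : ∀ z, 0 ≤ max (u z) r - u z := fun z => sub_nonneg.2 (le_max_left _ _)
  have hz : ∀ z ∈ Ω, z ∉ closure {z | z ∈ Ω ∧ u z < r} → max (u z) r - u z = 0 := by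
    intro z hz h
    have : ¬ u z < r := fun h2 => h (subset_closure ⟨hz, h2⟩)
    rw [max_eq_left (not_lt.1 this), sub_self]
  have hi : IntegrableOn (fun z => max (u z) r - u z) Ω := by
    have h1 : IntegrableOn (fun z => max (u z) r - u z) (closure {z | z ∈ Ω ∧ u z < r}) :=
      (hc.mono C.sub).integrableOn_compact C.cpt
    exact h1.of_forall_sdiff_eq_zero C.op.measurableSet (fun z hz' => hz z hz'.1 hz'.2)
  rw [setIntegral_pos_iff_support_of_nonneg_ae (Eventually.of_forall hnn) hi]
  refine lt_of_lt_of_le (C.open_sub.measure_pos volume ⟨z0, hz0, hz0r⟩) (measure_mono ?_)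
  rintro z ⟨h1, h2⟩
  refine ⟨?_, h1⟩
  rw [Function.mem_support, max_eq_right h2.le]
  linarith

theorem Ctx.cut_int (C : Ctx Ω u ν r νr) {χ : ℂ → ℝ} {K : Set ℂ} 
    (h : IsCut Ω (closure {z | z ∈ Ω ∧ u z < r} ∪ K) χ) : Integrable χ νr := by
  have hq := C.riesz_cut h (fun z _ => q_cd z)
  have hpos := C.qint_pos
  have h1 : 0 ≤ ∫ z, χ z * ((z.re ^ 2 + z.im ^ 2) + 1) ∂ν := 
    integral_nonneg fun z => mul_nonneg (h.nn z) (by positivity)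
  have h2 : Integrable (fun z => χ z * ((z.re ^ 2 + z.im ^ 2) + 1)) νr := by
    by_contra hc
    rw [integral_undef hc] at hq
    linarith
  refine h2.mono' h.cd.continuous.aestronglyMeasurable (Eventually.of_forall fun z => ?_)
  rw [Real.norm_of_nonneg (h.nn z)]
  have := mul_nonneg (h.nn z) (by positivity : 0 ≤ z.re ^ 2 + z.im ^ 2)
  linarith

theorem Ctx.lt_top (C : Ctx Ω u ν r νr) {K : Set ℂ} (hK : IsCompact K) (hKΩ : K ⊆ Ω) : νr K < ⊤ := by
  obtain ⟨χ, h⟩ := exists_cut C.op (C.cpt.union hK) (union_subset C.sub hKΩ)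
  have h1 := (C.cut_int h).measure_norm_ge_lt_top (ε := 1) one_pos
  refine lt_of_le_of_lt (measure_mono ?_) h1
  intro z hz
  have := h.one.self_of_nhdsSet z (Or.inr hz)
  simp [this]

theorem Ctx.int_test (C : Ctx Ω u ν r νr) {φ : ℂ → ℝ} (h : IsTest Ω φ) : Integrable φ νr := by
  have : IntegrableOn φ (tsupport φ) νr := by
    obtain ⟨B, hB⟩ := h.cpt.exists_bound_of_continuousOn h.cd.continuous.continuousOn
    exact IntegrableOn.of_bound (C.lt_top h.cpt h.sub) h.cd.continuous.aestronglyMeasurable B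
      ((ae_restrict_iff' (isClosed_tsupport φ).measurableSet).2 (Eventually.of_forall hB))
  exact (integrableOn_iff_integrable_of_support_subset (subset_tsupport φ)).1 this

end

section
variable {Ω : Set ℂ} {u : ℂ → ℝ} {ν νr : Measure ℂ} {r : ℝ}

structure Exh (Ω : Set ℂ) (K : ℕ → Set ℂ) : Prop where
  mono : Monotone K
  cpt : ∀ n, IsCompact (K n)
  un : ⋃ n, K n = Ω

theorem Exh.sub {K : ℕ → Set ℂ} (E : Exh Ω K) (n : ℕ) : K n ⊆ Ω := by
  rw [← E.un]; exact subset_iUnion K n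

theorem ae_mem_of_compl {μ : Measure ℂ} (h : μ Ωᶜ = 0) : ∀ᵐ z ∂μ, z ∈ Ω := h

theorem Ctx.harm_le (C : Ctx Ω u ν r νr) {K : ℕ → Set ℂ} (E : Exh Ω K) {H : ℂ → ℝ}
    (h2 : ∀ z ∈ Ω, ContDiffAt ℝ 2 H z) (h0 : ∀ z ∈ Ω, 0 ≤ H z) (hl : ∀ z ∈ Ω, lap H z = 0) :
    ∫⁻ z, ENNReal.ofReal (H z) ∂νr ≤ ∫⁻ z, ENNReal.ofReal (H z) ∂ν := by
  have e1 : ∫⁻ z, ENNReal.ofReal (H z) ∂νr = ∫⁻ z in ⋃ n, K n, ENNReal.ofReal (H z) ∂νr := by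
    rw [E.un, Measure.restrict_eq_self_of_ae_mem (ae_mem_of_compl C.hνr.1)]
  rw [e1, setLIntegral_iUnion_of_directed _ (E.mono.directed_le)]
  apply iSup_le
  intro n
  obtain ⟨χ, h⟩ := exists_cut C.op (C.cpt.union (E.cpt n)) (union_subset C.sub (E.sub n))
  have ht := h.toIsTest.mul h2
  have hnn : ∀ z, 0 ≤ χ z * H z := fun z => by
    by_cases hz : z ∈ tsupport χ
    · exact mul_nonneg (h.nn z) (h0 z (h.sub hz))
    · rw [image_eq_zero_of_notMem_tsupport hz, zero_mul]
  have e2 : ∫ z, χ z * H z ∂νr = ∫ z, χ z * H z ∂ν := by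
    rw [C.riesz_cut h h2, setIntegral_congr_fun (g := fun _ => (0:ℝ)) C.op.measurableSet]
    · simp
    · intro z hz; simp only [hl z hz, mul_zero]
  calc ∫⁻ z in K n, ENNReal.ofReal (H z) ∂νr ≤ ∫⁻ z in K n, ENNReal.ofReal (χ z * H z) ∂νr := by
        apply setLIntegral_mono' (E.cpt n).measurableSet
        intro z hz
        rw [h.one.self_of_nhdsSet z (Or.inr hz), one_mul]
    _ ≤ ∫⁻ z, ENNReal.ofReal (χ z * H z) ∂νr := setLIntegral_le_lintegral _ _
    _ = ENNReal.ofReal (∫ z, χ z * H z ∂νr) := 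
        (ofReal_integral_eq_lintegral_ofReal (C.int_test ht) (Eventually.of_forall hnn)).symm
    _ = ENNReal.ofReal (∫ z, χ z * H z ∂ν) := by rw [e2]
    _ = ∫⁻ z, ENNReal.ofReal (χ z * H z) ∂ν := 
        ofReal_integral_eq_lintegral_ofReal (ht.int_fin C.fin) (Eventually.of_forall hnn)
    _ ≤ ∫⁻ z, ENNReal.ofReal (H z) ∂ν := by
        apply lintegral_mono_ae
        filter_upwards [ae_mem_of_compl C.hν.1] with z hz
        apply ENNReal.ofReal_le_ofReal
        nlinarith [h0 z hz, h.le1 z]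

theorem Ctx.mass (C : Ctx Ω u ν r νr) {K : ℕ → Set ℂ} (E : Exh Ω K) : νr univ ≤ ν univ := by
  have := C.harm_le E (H := fun _ => 1) (fun z _ => contDiffAt_const) (fun _ _ => zero_le_one) (fun z _ => lap_const 1 z)
  simpa using this

theorem Ctx.ν_ne (C : Ctx Ω u ν r νr) {K : ℕ → Set ℂ} (E : Exh Ω K) : ν univ ≠ 0 := by
  intro h
  have h1 : νr univ = 0 := le_antisymm (h ▸ C.mass E) bot_le
  rw [Measure.measure_univ_eq_zero] at h h1
  obtain ⟨χ, hχ⟩ := exists_cut C.op (C.cpt.union (E.cpt 0)) (union_subset C.sub (E.sub 0))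
  have := C.riesz_cut hχ (fun z _ => q_cd z)
  rw [h, h1] at this
  simp only [integral_zero_measure, zero_add] at this
  have := C.qint_pos
  linarith

theorem int_fderiv_zero {φ : ℂ → ℝ} (hφ : ContDiff ℝ 1 φ) (hc : HasCompactSupport φ) (v : ℂ) :
    ∫ z, fderiv ℝ φ z v = 0 := by
  have hi : Integrable φ := hφ.continuous.integrable_of_hasCompactSupport hc
  have hi2 : Integrable (fun z => fderiv ℝ φ z v) := 
    ((hφ.continuous_fderiv (by simp)).clm_apply continuous_const).integrable_of_hasCompactSupport
      (hc.fderiv_apply (𝕜 := ℝ) v)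
  have := integral_mul_fderiv_eq_neg_fderiv_mul_of_integrable (μ := (volume : Measure ℂ)) (𝕜 := ℝ) (f := fun _ => (1:ℝ)) (g := φ) (v := v)
    (by simp) (by simpa using hi2) (by simpa using hi) (fun x _ => by fun_prop) (fun x _ => hφ.differentiable (by simp) x)
  simpa using this

theorem int_lap_zero {φ : ℂ → ℝ} (h : IsTest Ω φ) : ∫ z, lap φ z = 0 := by
  have hc : ∀ v : ℂ, ContDiff ℝ 1 (fun w => fderiv ℝ φ w v) := fun v =>
    (h.cd.fderiv_right (m := 1) (by norm_num)).clm_apply contDiff_const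
  have hs : ∀ v : ℂ, HasCompactSupport (fun w => fderiv ℝ φ w v) := fun v => h.cpt.fderiv_apply (𝕜 := ℝ) v
  have hi : ∀ v : ℂ, Integrable (fun z => fderiv ℝ (fun w => fderiv ℝ φ w v) z v) := fun v =>
    (((hc v).continuous_fderiv (by simp)).clm_apply continuous_const).integrable_of_hasCompactSupport
      ((hs v).fderiv_apply (𝕜 := ℝ) v)
  simp only [lap]
  rw [integral_add (hi 1) (hi I), int_fderiv_zero (hc 1) (hs 1), int_fderiv_zero (hc I) (hs I), add_zero]

theorem Ctx.null (C : Ctx Ω u ν r νr) : νr {z | z ∈ Ω ∧ u z < r} = 0 := by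
  set V := {z | z ∈ Ω ∧ u z < r}
  have hV : V ⊆ Ω := fun z hz => hz.1
  refine measure_null_of_locally_null _ fun z hz => ?_
  obtain ⟨L, hL, hzL, hLV⟩ := exists_compact_between isCompact_singleton C.open_sub (singleton_subset_iff.2 hz)
  refine ⟨L, mem_nhdsWithin_of_mem_nhds (mem_interior_iff_mem_nhds.1 (hzL rfl)), ?_⟩
  obtain ⟨χ, h⟩ := exists_cut C.open_sub hL hLV
  have ht : IsTest Ω χ := ⟨h.cd, h.cpt, h.sub.trans hV⟩
  have h1 := C.hνr.2 χ ht.cd ht.cpt ht.sub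
  have h2 : ∫ z in Ω, max (u z) r * lap χ z = ∫ z in Ω, r * lap χ z := by
    apply setIntegral_congr_fun C.op.measurableSet
    intro z _
    by_cases hz : z ∈ tsupport χ
    · simp only [max_eq_right (h.sub hz).2.le]
    · simp only [lap_zero_off hz, mul_zero]
  have h3 : ∫ z in Ω, r * lap χ z = 0 := by
    rw [setIntegral_eq_integral_of_forall_compl_eq_zero, integral_const_mul, int_lap_zero ht, mul_zero]
    intro z hz
    rw [lap_zero_off (fun h => hz (ht.sub h)), mul_zero]
  rw [h2, h3, mul_zero] at h1
  have h4 := (integral_eq_zero_iff_of_nonneg h.nn (C.int_test ht)).1 h1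
  refine measure_mono_null ?_ (ae_iff.1 h4)
  intro w hw
  simp [h.one.self_of_nhdsSet w hw]

theorem le_sub_add' (μ ν : Measure ℂ) [IsFiniteMeasure μ] [IsFiniteMeasure ν] : μ ≤ (μ - ν) + ν := by
  obtain ⟨s, hs, h1, h2⟩ := hahn_decomposition μ ν
  have a : ν.restrict s ≤ μ.restrict s := by
    rw [Measure.le_iff]; intro t ht
    rw [Measure.restrict_apply ht, Measure.restrict_apply ht]
    exact h1 _ (ht.inter hs) inter_subset_right
  have b : μ.restrict sᶜ ≤ ν.restrict sᶜ := by
    rw [Measure.le_iff]; intro t ht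
    rw [Measure.restrict_apply ht, Measure.restrict_apply ht]
    exact h2 _ (ht.inter hs.compl) inter_subset_right
  have c : (μ - ν).restrict s + ν.restrict s = μ.restrict s := by
    rw [Measure.restrict_sub_eq_restrict_sub_restrict hs, Measure.sub_add_cancel_of_le a]
  calc μ = μ.restrict s + μ.restrict sᶜ := (Measure.restrict_add_restrict_compl hs).symm
    _ ≤ ((μ - ν).restrict s + ν.restrict s) + ((μ - ν).restrict sᶜ + ν.restrict sᶜ) := by
        rw [c]; exact add_le_add le_rfl (b.trans (Measure.le_add_left le_rfl))
    _ = ((μ - ν).restrict s + (μ - ν).restrict sᶜ) + (ν.restrict s + ν.restrict sᶜ) := by abel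
    _ = _ := by rw [Measure.restrict_add_restrict_compl hs, Measure.restrict_add_restrict_compl hs]

theorem Ctx.meas_ge (C : Ctx Ω u ν r νr) : MeasurableSet {z | z ∈ Ω ∧ r ≤ u z} := by
  have : {z | z ∈ Ω ∧ r ≤ u z} = Ω \ {z | z ∈ Ω ∧ u z < r} := by
    ext z; constructor
    · rintro ⟨a, b⟩; exact ⟨a, fun h => absurd h.2 (not_lt.2 b)⟩
    · rintro ⟨a, b⟩; exact ⟨a, not_lt.1 fun h => b ⟨a, h⟩⟩
  rw [this]; exact C.op.measurableSet.diff C.open_sub.measurableSet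

theorem Ctx.sub_le (C : Ctx Ω u ν r νr) {K : ℕ → Set ℂ} (E : Exh Ω K) {v : ℂ → ℝ}
    (h2 : ∀ z ∈ Ω, ContDiffAt ℝ 2 v z) (h0 : ∀ z ∈ Ω, 0 ≤ v z) (hl : ∀ z ∈ Ω, 0 ≤ lap v z) :
    ∫⁻ z in {z | z ∈ Ω ∧ u z < r}, ENNReal.ofReal (v z) ∂ν ≤ 
      ∫⁻ z, ENNReal.ofReal (v z) ∂(νr - ν.restrict {z | z ∈ Ω ∧ r ≤ u z}) := by
  have : IsFiniteMeasure ν := ⟨C.fin⟩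
  have : IsFiniteMeasure νr := ⟨(C.mass E).trans_lt C.fin⟩
  set S := {z | z ∈ Ω ∧ r ≤ u z} with hS
  set V := {z | z ∈ Ω ∧ u z < r} with hV
  set μ := νr - ν.restrict S with hμ
  obtain ⟨χ, h⟩ := exists_cut C.op (C.cpt.union (E.cpt 0)) (union_subset C.sub (E.sub 0))
  have ht := h.toIsTest.mul h2
  have hnn : ∀ z, 0 ≤ χ z * v z := fun z => by
    by_cases hz : z ∈ tsupport χ
    · exact mul_nonneg (h.nn z) (h0 z (h.sub hz))
    · rw [image_eq_zero_of_notMem_tsupport hz, zero_mul]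
  have e2 : ∫ z, χ z * v z ∂ν ≤ ∫ z, χ z * v z ∂νr := by
    rw [C.riesz_cut h h2]
    have : 0 ≤ ∫ z in Ω, (max (u z) r - u z) * lap v z := 
      setIntegral_nonneg C.op.measurableSet fun z hz => mul_nonneg (sub_nonneg.2 (le_max_left _ _)) (hl z hz)
    linarith
  have e3 : ∫⁻ z, ENNReal.ofReal (χ z * v z) ∂ν ≤ ∫⁻ z, ENNReal.ofReal (χ z * v z) ∂νr := by
    rw [← ofReal_integral_eq_lintegral_ofReal (C.int_test ht) (Eventually.of_forall hnn),
      ← ofReal_integral_eq_lintegral_ofReal (ht.int_fin C.fin) (Eventually.of_forall hnn)]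
    exact ENNReal.ofReal_le_ofReal e2
  have e4 : ∫⁻ z, ENNReal.ofReal (χ z * v z) ∂νr ≤ ∫⁻ z, ENNReal.ofReal (χ z * v z) ∂μ + 
      ∫⁻ z in S, ENNReal.ofReal (χ z * v z) ∂ν := by
    rw [← lintegral_add_measure]
    exact lintegral_mono' (le_sub_add' _ _) le_rfl
  have e5 : ∫⁻ z in V, ENNReal.ofReal (χ z * v z) ∂ν + ∫⁻ z in S, ENNReal.ofReal (χ z * v z) ∂ν ≤ 
      ∫⁻ z, ENNReal.ofReal (χ z * v z) ∂ν := by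
    rw [← lintegral_union C.meas_ge]
    · exact setLIntegral_le_lintegral _ _
    · exact Set.disjoint_left.2 fun z a b => absurd a.2 (not_lt.2 b.2)
  have hfin : ∫⁻ z in S, ENNReal.ofReal (χ z * v z) ∂ν ≠ ⊤ := 
    ((setLIntegral_le_lintegral _ _).trans_lt ((ht.int_fin C.fin).lintegral_lt_top)).ne
  have e6 := (ENNReal.add_le_add_iff_right hfin).1 (e5.trans (e3.trans e4))
  calc ∫⁻ z in V, ENNReal.ofReal (v z) ∂ν ≤ ∫⁻ z in V, ENNReal.ofReal (χ z * v z) ∂ν := by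
        apply setLIntegral_mono' C.open_sub.measurableSet
        intro z hz
        rw [h.one.self_of_nhdsSet z (Or.inl (subset_closure hz)), one_mul]
    _ ≤ _ := e6
    _ ≤ _ := by
        apply lintegral_mono_ae
        have : μ Ωᶜ = 0 := le_antisymm ((Measure.sub_le Ωᶜ).trans C.hνr.1.le) bot_le
        filter_upwards [ae_mem_of_compl this] with z hz
        apply ENNReal.ofReal_le_ofReal
        nlinarith [h0 z hz, h.le1 z]
end

noncomputable def etaf (t : ℝ) : ℝ := ∫ x in (0:ℝ)..t, Real.smoothTransition x

theorem etaf_hasDeriv (t : ℝ) : HasDerivAt etaf (Real.smoothTransition t) t :=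
  intervalIntegral.integral_hasDerivAt_right (Real.smoothTransition.continuous.intervalIntegrable _ _)
    (Real.smoothTransition.continuous.stronglyMeasurableAtFilter _ _) Real.smoothTransition.continuousAt

theorem etaf_deriv : deriv etaf = Real.smoothTransition := funext fun t => (etaf_hasDeriv t).deriv

theorem etaf_cd : ContDiff ℝ 2 etaf := by
  have : (2 : WithTop ℕ∞) = 1 + 1 := by norm_num
  rw [this, contDiff_succ_iff_deriv]
  refine ⟨fun t => (etaf_hasDeriv t).differentiableAt, by simp, ?_⟩
  rw [etaf_deriv]
  exact Real.smoothTransition.contDiff (n := 1)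

theorem etaf_zero {t : ℝ} (ht : t ≤ 0) : etaf t = 0 := by
  rw [etaf, intervalIntegral.integral_congr (g := fun _ => (0:ℝ))]
  · simp
  · intro x hx
    rw [uIcc_of_ge ht] at hx
    exact Real.smoothTransition.zero_of_nonpos hx.2

theorem etaf_nonneg (t : ℝ) : 0 ≤ etaf t := by
  rcases le_total t 0 with h | h
  · exact (etaf_zero h).ge
  · exact intervalIntegral.integral_nonneg h fun x _ => Real.smoothTransition.nonneg x

theorem etaf_ge (t : ℝ) : t - 1 ≤ etaf t := by
  rcases le_total t 1 with h | h
  · linarith [etaf_nonneg t]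
  · have e1 : etaf t = etaf 1 + ∫ x in (1:ℝ)..t, Real.smoothTransition x := by
      rw [etaf, etaf, intervalIntegral.integral_add_adjacent_intervals] <;>
      exact Real.smoothTransition.continuous.intervalIntegrable _ _
    have e2 : ∫ x in (1:ℝ)..t, Real.smoothTransition x = t - 1 := by
      rw [intervalIntegral.integral_congr (g := fun _ => (1:ℝ))]
      · simp
      · intro x hx
        rw [uIcc_of_le h] at hx
        exact Real.smoothTransition.one_of_one_le hx.1
    linarith [etaf_nonneg 1]

theorem wf_nonneg (p : ℝ) (f : ℂ → ℂ) (z : ℂ) : 0 ≤ wf p f z := Real.rpow_nonneg (by positivity) _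

theorem wf_norm (p : ℝ) (f : ℂ → ℂ) (z : ℂ) : wf p f z = (‖f z‖ ^ 2 + 1) ^ (p / 2) := by
  rw [wf, Complex.sq_norm, Complex.normSq_apply]; congr 2; ring

theorem wf_ge {p : ℝ} (hp : 0 ≤ p) (f : ℂ → ℂ) (z : ℂ) : ‖f z‖ ^ p ≤ wf p f z := by
  rw [wf_norm]
  calc ‖f z‖ ^ p = (‖f z‖ ^ 2) ^ (p / 2) := by
        rw [← Real.rpow_natCast, ← Real.rpow_mul (norm_nonneg _)]; congr 1; push_cast; ring
    _ ≤ _ := by gcongr; linarith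

theorem wf_ge1 {p : ℝ} (hp : 1 ≤ p) (f : ℂ → ℂ) (z : ℂ) : ‖f z‖ ≤ wf p f z := by
  rw [wf_norm]
  have h1 : 1 ≤ ‖f z‖ ^ 2 + 1 := by nlinarith [sq_nonneg ‖f z‖]
  calc ‖f z‖ = (‖f z‖ ^ 2) ^ (1 / 2 : ℝ) := by rw [← Real.sqrt_eq_rpow, Real.sqrt_sq (norm_nonneg _)]
    _ ≤ (‖f z‖ ^ 2 + 1) ^ (1 / 2 : ℝ) := by gcongr; linarith
    _ ≤ _ := Real.rpow_le_rpow_of_exponent_le h1 (by linarith)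

theorem wf_le {p : ℝ} (hp : 0 ≤ p) (f : ℂ → ℂ) (z : ℂ) : wf p f z ≤ 2 ^ p * (‖f z‖ ^ p + 1) := by
  rw [wf_norm]
  set a := ‖f z‖
  have ha : 0 ≤ a := norm_nonneg _
  have h1 : (a ^ 2 + 1) ^ (p / 2) ≤ (2 * max a 1) ^ p := by
    calc (a ^ 2 + 1) ^ (p / 2) ≤ ((2 * max a 1) ^ 2) ^ (p / 2) := by
          gcongr
          have : a ≤ max a 1 := le_max_left _ _
          have : 1 ≤ max a 1 := le_max_right _ _
          nlinarith
      _ = (2 * max a 1) ^ p := by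
          rw [← Real.rpow_natCast, ← Real.rpow_mul (by positivity)]; congr 1; push_cast; ring
  refine h1.trans ?_
  rw [Real.mul_rpow (by norm_num) (by positivity)]
  gcongr
  rcases le_total a 1 with h | h
  · rw [max_eq_right h, Real.one_rpow]; linarith [Real.rpow_nonneg ha p]
  · rw [max_eq_left h]; linarith

/-- the glued function -/
theorem glue {Ω : Set ℂ} (hΩ : IsOpen Ω) {ψ κ : ℂ → ℂ} (P : InvPack Ω ψ κ) {f : ℂ → ℂ} (hf : DifferentiableOn ℂ f Ω)
    {p : ℝ} (hp : 0 ≤ p) {s : ℝ} (hs0 : 0 < s) {Q : ℂ → ℂ} (hQ : Differentiable ℂ Q)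
    (hQw : ∀ ζ ∈ sphere (0:ℂ) 1, |(Q ζ).re - wf p f (ψ (s * ζ))| < 1 / 2) :
    ∃ v : ℂ → ℝ, (∀ z ∈ Ω, ContDiffAt ℝ 2 v z) ∧ (∀ z ∈ Ω, 0 ≤ v z) ∧ (∀ z ∈ Ω, 0 ≤ lap v z) ∧
      (∀ z ∈ Ω, ‖κ z‖ < s → (Q (κ z / s)).re - 2 ≤ v z) ∧ (∀ z ∈ Ω, s ≤ ‖κ z‖ → v z = wf p f z) := by
  classical
  set w := wf p f with hw
  set k : ℂ → ℝ := fun z => (Q (κ z / s)).re - (w z + 1) with hk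
  have hQκ : DifferentiableOn ℂ (fun z => Q (κ z / s)) Ω := 
    hQ.comp_differentiableOn (P.diff.div_const _)
  have hwc : ∀ z ∈ Ω, ContDiffAt ℝ 2 w z := fun z hz => wf_cd hΩ hf hz
  have hkc : ∀ z ∈ Ω, ContDiffAt ℝ 2 k z := fun z hz =>
    (re_cd hΩ hQκ hz).sub ((hwc z hz).add contDiffAt_const)
  have hkl : ∀ z ∈ Ω, lap k z = - lap w z := fun z hz => by
    rw [hk, lap_sub (re_cd hΩ hQκ hz) ((hwc z hz).add contDiffAt_const), lap_re hΩ hQκ hz,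
      lap_add (hwc z hz) contDiffAt_const, lap_const]; ring
  set v : ℂ → ℝ := fun z => if ‖κ z‖ < s then w z + etaf (k z) else w z with hv
  have hκc : ∀ z ∈ Ω, ContinuousAt (fun z => ‖κ z‖) z := fun z hz =>
    ((P.diff.continuousOn).continuousAt (hΩ.mem_nhds hz)).norm
  have hlt : ∀ z ∈ Ω, ‖κ z‖ < s → v =ᶠ[𝓝 z] fun z => w z + etaf (k z) := fun z hz h => by
    filter_upwards [(hκc z hz).eventually (gt_mem_nhds h)] with y hy
    simp only [hv, if_pos hy]
  have hge : ∀ z ∈ Ω, s ≤ ‖κ z‖ → v =ᶠ[𝓝 z] w := fun z hz h => by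
    rcases h.lt_or_eq with h | h
    · filter_upwards [(hκc z hz).eventually (lt_mem_nhds h)] with y hy
      simp only [hv, if_neg (not_lt.2 hy.le)]
    · have hneg : k z < 0 := by
        have hsp : κ z / s ∈ sphere (0:ℂ) 1 := by
          rw [mem_sphere_zero_iff_norm, norm_div, ← h, Complex.norm_real, Real.norm_of_nonneg hs0.le, div_self hs0.ne']
        have := hQw _ hsp
        rw [mul_div_cancel₀ _ (by exact_mod_cast hs0.ne'), P.right z hz, abs_lt] at this
        simp only [hk]; linarith [this.2]
      filter_upwards [(hkc z hz).continuousAt.eventually (gt_mem_nhds hneg)] with y hy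
      simp only [hv]
      rw [etaf_zero hy.le, add_zero, ite_self]
  have hηk : ∀ z ∈ Ω, ContDiffAt ℝ 2 (fun z => etaf (k z)) z := fun z hz =>
    etaf_cd.contDiffAt.comp z (hkc z hz)
  refine ⟨v, fun z hz => ?_, fun z hz => ?_, fun z hz => ?_, fun z hz h => ?_, fun z hz h => ?_⟩
  · rcases lt_or_ge ‖κ z‖ s with h | h
    · exact ((hwc z hz).add (hηk z hz)).congr_of_eventuallyEq (hlt z hz h)
    · exact (hwc z hz).congr_of_eventuallyEq (hge z hz h)
  · simp only [hv]
    split_ifs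
    · exact add_nonneg (wf_nonneg _ _ _) (etaf_nonneg _)
    · exact wf_nonneg _ _ _
  · have hwl : 0 ≤ lap w z := wf_lap hp hΩ hf hz
    rcases lt_or_ge ‖κ z‖ s with h | h
    · rw [lap_congr (hlt z hz h), lap_add (hwc z hz) (hηk z hz), lap_comp etaf_cd.contDiffAt (hkc z hz), hkl z hz, etaf_deriv]
      have h1 : 0 ≤ deriv Real.smoothTransition (k z) := Real.smoothTransition.monotone.deriv_nonneg
      have h2 := Real.smoothTransition.le_one (k z)
      have h3 : 0 ≤ deriv Real.smoothTransition (k z) * ((fderiv ℝ k z 1) ^ 2 + (fderiv ℝ k z I) ^ 2) := by positivity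
      nlinarith
    · rw [lap_congr (hge z hz h)]; exact hwl
  · simp only [hv, if_pos h]
    have := etaf_ge (k z)
    simp only [hk] at this ⊢
    linarith
  · simp only [hv, if_neg (not_lt.2 h)]

theorem W_cont {Ω : Set ℂ} (hΩ : IsOpen Ω) {ψ κ : ℂ → ℂ} (P : InvPack Ω ψ κ) {f : ℂ → ℂ}
    (hf : DifferentiableOn ℂ f Ω) (p : ℝ) {s : ℝ} (hs0 : 0 ≤ s) (hs1 : s < 1) :
    ContinuousOn (fun ζ : ℂ => wf p f (ψ (s * ζ))) (sphere 0 1) := by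
  have h1 : ContinuousOn (wf p f) Ω := fun z hz => (wf_cd hΩ hf hz).continuousAt.continuousWithinAt
  exact h1.comp (scaled_cont P.diffψ hs0 hs1) fun ζ hζ => P.mapsψ _ (smul_mem_ball hs0 hs1 hζ)

theorem cont_cInt {φ : ℂ → ℝ} (h : ContinuousOn φ (sphere 0 1)) : CircleIntegrable φ 0 1 :=
  h.circleIntegrable zero_le_one

theorem Herg_le_Q {φ : ℂ → ℝ} (hφ : ContinuousOn φ (sphere 0 1)) {Q : ℂ → ℂ} (hQ : Differentiable ℂ Q)
    (hQw : ∀ ζ ∈ sphere (0:ℂ) 1, |(Q ζ).re - φ ζ| < 1 / 2) {z : ℂ} (hz : z ∈ ball (0:ℂ) 1) :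
    (Herg φ z).re ≤ (Q z).re + 1 / 2 := by
  have hi := cont_cInt hφ
  have hQc : ContinuousOn (fun ζ => (Q ζ).re) (sphere (0:ℂ) 1) := 
    (Complex.continuous_re.comp hQ.continuous).continuousOn
  have h1 := poisson_re_entire (hQ.diffContOnCl (s := ball 0 1)) hz
  have h2 := circleAverage_poisson_one hz
  have hK := cont_cInt (poisson_continuousOn hz)
  rw [Herg_re hi hz, ← h1]
  have h3 : (1/2:ℝ) = Real.circleAverage (fun ζ => (1/2:ℝ) • poissonKernel 0 z ζ) 0 1 := by
    rw [Real.circleAverage_fun_smul, h2]; simp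
  have hK2 : CircleIntegrable (fun ζ => (1/2:ℝ) • poissonKernel 0 z ζ) 0 1 := hK.const_smul (a := (1/2:ℝ))
  rw [h3, ← Real.circleAverage_fun_add (poisson_mul_int (cont_cInt hQc) hz) hK2]
  refine cAvg_mono (poisson_mul_int hi hz) ((poisson_mul_int (cont_cInt hQc) hz).add hK2) fun ζ hζ => ?_
  have h4 := poisson_pos hz hζ
  have h5 := (abs_lt.1 (hQw ζ hζ)).1
  simp only [smul_eq_mul]
  nlinarith

theorem disc_bound {Ω : Set ℂ} {u : ℂ → ℝ} {ν νr : Measure ℂ} {r : ℝ} (C : Ctx Ω u ν r νr) {K : ℕ → Set ℂ} (E : Exh Ω K)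
    {ψ κ : ℂ → ℂ} (P : InvPack Ω ψ κ) {f : ℂ → ℂ}
    (hf : DifferentiableOn ℂ f Ω) {p : ℝ} (hp : 0 ≤ p) {s : ℝ} (hs0 : 0 < s) (hs1 : s < 1)
    (hsub : ∀ z ∈ Ω, ‖κ z‖ < s → u z < r) {M : ℝ≥0∞}
    (hM : ∫⁻ z, ENNReal.ofReal (‖f z‖ ^ p) ∂(νr - ν.restrict {z | z ∈ Ω ∧ r ≤ u z}) ≤ M) :
    ∫⁻ z in {z | z ∈ Ω ∧ ‖κ z‖ < s}, ENNReal.ofReal ((Herg (fun ζ => wf p f (ψ (s * ζ))) (κ z / s)).re) ∂ν ≤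
      ENNReal.ofReal (2 ^ p) * (M + ν univ) + 3 * ν univ := by
  have hWc := W_cont C.op P hf p hs0.le hs1
  obtain ⟨Q, hQ, hQw⟩ := trig_approx hWc (ε := 1 / 2) (by norm_num)
  obtain ⟨v, v2, v0, vl, vlt, vge⟩ := glue C.op P hf hp hs0 hQ hQw
  set D := {z | z ∈ Ω ∧ ‖κ z‖ < s} with hD
  set V := {z | z ∈ Ω ∧ u z < r} with hV
  set μ := νr - ν.restrict {z | z ∈ Ω ∧ r ≤ u z} with hμ
  have hDm : MeasurableSet D := 
    (P.diff.continuousOn.norm.isOpen_inter_preimage C.op isOpen_Iio).measurableSet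
  have hμle : μ ≤ νr := Measure.sub_le
  have haeμ : ∀ᵐ z ∂μ, v z = wf p f z := by
    have : ∀ᵐ z ∂νr, v z = wf p f z := by
      have h1 : ∀ᵐ z ∂νr, z ∈ Ω := ae_mem_of_compl C.hνr.1
      have h2 : ∀ᵐ z ∂νr, z ∉ V := measure_eq_zero_iff_ae_notMem.1 C.null
      filter_upwards [h1, h2] with z hz hzV
      exact vge z hz (not_lt.1 fun h => hzV ⟨hz, hsub z hz h⟩)
    exact hμle.absolutelyContinuous.ae_le this
  calc _ ≤ ∫⁻ z in D, (ENNReal.ofReal (v z) + 3) ∂ν := by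
        refine setLIntegral_mono' hDm fun z hz => ?_
        have hb : κ z / s ∈ ball (0:ℂ) 1 := by
          rw [mem_ball_zero_iff, norm_div, Complex.norm_real, Real.norm_of_nonneg hs0.le, div_lt_one hs0]
          exact hz.2
        have h1 := Herg_le_Q hWc hQ hQw hb
        have h2 := vlt z hz.1 hz.2
        have h3 : (3 : ℝ≥0∞) = ENNReal.ofReal 3 := by simp
        rw [h3, ← ENNReal.ofReal_add (v0 z hz.1) (by norm_num)]
        exact ENNReal.ofReal_le_ofReal (by linarith)
    _ = ∫⁻ z in D, ENNReal.ofReal (v z) ∂ν + 3 * ν D := by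
        rw [lintegral_add_right _ measurable_const, setLIntegral_const]
    _ ≤ ∫⁻ z in V, ENNReal.ofReal (v z) ∂ν + 3 * ν univ := by
        gcongr
        · exact fun z hz => ⟨hz.1, hsub z hz.1 hz.2⟩
        · exact subset_univ _
    _ ≤ ∫⁻ z, ENNReal.ofReal (v z) ∂μ + 3 * ν univ := add_le_add_left (C.sub_le E v2 v0 vl) _
    _ ≤ ∫⁻ z, ENNReal.ofReal (2 ^ p) * (ENNReal.ofReal (‖f z‖ ^ p) + 1) ∂μ + 3 * ν univ := by
        gcongr ?_ + _
        refine lintegral_mono_ae ?_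
        filter_upwards [haeμ] with z hz
        rw [hz, ← ENNReal.ofReal_one, ← ENNReal.ofReal_add (by positivity) zero_le_one, ← ENNReal.ofReal_mul (by positivity)]
        exact ENNReal.ofReal_le_ofReal (wf_le hp f z)
    _ ≤ _ := by
        rw [lintegral_const_mul' _ _ ENNReal.ofReal_ne_top, lintegral_add_right _ measurable_const, lintegral_one]
        refine add_le_add_left (mul_le_mul_right (add_le_add hM ?_) _) _
        exact (hμle univ).trans (C.mass E)

theorem sqn_mono : Monotone sqn := fun m n h => by
  simp only [sqn]
  have : (m:ℝ) ≤ n := by exact_mod_cast h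
  gcongr

theorem exh_of {Ω : Set ℂ} {ψ κ : ℂ → ℂ} (P : InvPack Ω ψ κ) : 
    Exh Ω (fun n => ψ '' closedBall 0 (sqn n)) := by
  refine ⟨fun m n h => image_mono (closedBall_subset_closedBall (sqn_mono h)), fun n => ?_, ?_⟩
  · exact (isCompact_closedBall _ _).image_of_continuousOn 
      (P.diffψ.continuousOn.mono (closedBall_subset_ball (sqn1 n)))
  · ext z
    simp only [mem_iUnion, mem_image]
    constructor
    · rintro ⟨n, w, hw, rfl⟩
      exact P.mapsψ _ (closedBall_subset_ball (sqn1 n) hw)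
    · intro hz
      have h1 := P.maps z hz
      rw [mem_ball_zero_iff] at h1
      obtain ⟨n, hn⟩ := (sqnl.eventually (lt_mem_nhds h1)).exists
      exact ⟨n, κ z, by rw [mem_closedBall_zero_iff]; exact hn.le, P.right z hz⟩

theorem poisson_ge {z ζ : ℂ} {t : ℝ} (hzt : ‖z‖ ≤ t) (ht : t < 1) (hζ : ζ ∈ sphere (0:ℂ) 1) :
    (1 - t) / 2 ≤ poissonKernel 0 z ζ := by
  have hz : z ∈ ball (0:ℂ) 1 := by rw [mem_ball_zero_iff]; linarith
  have h1 : ‖ζ‖ = 1 := by simpa using hζ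
  have h0 := norm_nonneg z
  have hd : ‖ζ - z‖ ≤ 1 + ‖z‖ := by rw [← h1]; exact norm_sub_le _ _
  have hpos : 0 < ‖ζ - z‖ := by
    rw [norm_pos_iff]; intro h
    rw [sub_eq_zero] at h; rw [← h, h1] at hzt; linarith
  have e : poissonKernel 0 z ζ = (1 - ‖z‖ ^ 2) / ‖ζ - z‖ ^ 2 := by
    simp only [poissonKernel_def, sub_zero, h1, one_pow]
  rw [e, div_le_div_iff₀ (by norm_num) (by positivity)]
  have h3 : ‖ζ - z‖ ^ 2 ≤ (1 + ‖z‖) ^ 2 := by gcongr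
  have h4 : (1 - t) * ‖ζ - z‖ ^ 2 ≤ (1 - t) * (1 + ‖z‖) ^ 2 := by gcongr
  have h5 : (1 - t) * (1 + ‖z‖) ^ 2 ≤ (1 - ‖z‖) * (1 + ‖z‖) ^ 2 := by gcongr
  have h6 : ((1 - ‖z‖) * (1 + ‖z‖)) * (1 + ‖z‖) ≤ ((1 - ‖z‖) * (1 + ‖z‖)) * 2 := by
    refine mul_le_mul_of_nonneg_left (by linarith) (mul_nonneg (by linarith) (by linarith))
  nlinarith

theorem avg_bound {Ω : Set ℂ} (hΩ : IsOpen Ω) {ν : Measure ℂ} (hν : ν Ωᶜ = 0) (hν0 : ν univ ≠ 0)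
    {ψ κ : ℂ → ℂ} (P : InvPack Ω ψ κ) {f : ℂ → ℂ}
    (hf : DifferentiableOn ℂ f Ω) {p : ℝ} {C2 : ℝ≥0∞} (hC2 : C2 < ⊤)
    (hB : ∀ s : ℝ, 0 < s → s < 1 → ∫⁻ z in {z | z ∈ Ω ∧ ‖κ z‖ < s},
      ENNReal.ofReal ((Herg (fun ζ => wf p f (ψ (s * ζ))) (κ z / s)).re) ∂ν ≤ C2) :
    ∃ ρ C : ℝ, 0 < ρ ∧ ρ < 1 ∧ ∀ s : ℝ, ρ ≤ s → s < 1 →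
      Real.circleAverage (fun ζ => wf p f (ψ (s * ζ))) 0 1 ≤ C := by
  have E := exh_of P
  have hN : ∃ N, ν (ψ '' closedBall 0 (sqn N)) ≠ 0 := by
    by_contra! h
    apply hν0
    rw [← union_compl_self Ω]
    refine measure_union_null ?_ hν
    rw [← E.un]
    exact measure_iUnion_null h
  obtain ⟨N, hN⟩ := hN
  set a := sqn N with ha
  have ha0 : 0 ≤ a := sqn0 N
  have ha1 : a < 1 := sqn1 N
  set ρ := (1 + a) / 2 with hρ
  have hρ0 : 0 < ρ := by rw [hρ]; linarith
  have haρ : a < ρ := by rw [hρ]; linarith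
  set t := a / ρ with ht
  have ht1 : t < 1 := by rw [ht, div_lt_one hρ0]; exact haρ
  set c := (1 - t) / 2 with hc
  have hc0 : 0 < c := by rw [hc]; linarith
  set Kn := ψ '' closedBall 0 a with hKn
  refine ⟨ρ, (C2 / ν Kn).toReal / c, hρ0, by rw [hρ]; linarith, fun s hs hs1 => ?_⟩
  have hs0 : 0 < s := hρ0.trans_le hs
  set A := Real.circleAverage (fun ζ => wf p f (ψ (s * ζ))) 0 1 with hA
  have hWc := W_cont hΩ P hf p hs0.le hs1
  have hWi := cont_cInt hWc
  have hKD : Kn ⊆ {z | z ∈ Ω ∧ ‖κ z‖ < s} := by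
    rintro z ⟨w, hw, rfl⟩
    have hwb := closedBall_subset_ball ha1 hw
    refine ⟨P.mapsψ _ hwb, ?_⟩
    rw [P.left w hwb]; rw [mem_closedBall_zero_iff] at hw; linarith
  have hKm : MeasurableSet Kn := (E.cpt N).isClosed.measurableSet
  have h1 : ENNReal.ofReal (c * A) * ν Kn ≤ C2 := by
    refine le_trans ?_ (hB s hs0 hs1)
    rw [← setLIntegral_const]
    refine le_trans (setLIntegral_mono' hKm fun z hz => ?_) (lintegral_mono_set hKD)
    refine ENNReal.ofReal_le_ofReal ?_
    have hzt : ‖κ z / s‖ ≤ t := by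
      obtain ⟨w, hw, rfl⟩ := hz
      have hwb := closedBall_subset_ball ha1 hw
      rw [P.left w hwb, norm_div, Complex.norm_real, Real.norm_of_nonneg hs0.le, ht]
      rw [mem_closedBall_zero_iff] at hw
      gcongr
    have hzb : κ z / s ∈ ball (0:ℂ) 1 := by rw [mem_ball_zero_iff]; linarith
    rw [Herg_re hWi hzb, hA, ← smul_eq_mul, ← Real.circleAverage_fun_smul]
    refine cAvg_mono hWi.const_smul (poisson_mul_int hWi hzb) fun ζ hζ => ?_
    rw [smul_eq_mul]
    exact mul_le_mul_of_nonneg_right (poisson_ge hzt ht1 hζ) (wf_nonneg _ _ _)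
  have h2 : ENNReal.ofReal (c * A) ≤ C2 / ν Kn := by
    rwa [ENNReal.le_div_iff_mul_le (Or.inl hN) (Or.inr hC2.ne)]
  rw [le_div_iff₀ hc0, mul_comm]
  exact (ENNReal.ofReal_le_iff_le_toReal (ENNReal.div_lt_top hC2.ne hN).ne).1 h2

theorem fatou_pt {α : Type*} [MeasurableSpace α] {μ : Measure α} {h : ℕ → α → ℝ} {H : α → ℝ}
    (hi : ∀ n, Integrable (h n) μ) (h0 : ∀ n, ∀ᵐ x ∂μ, 0 ≤ h n x) (hH : Integrable H μ)
    (hl : ∀ᵐ x ∂μ, Tendsto (fun n => h n x) atTop (𝓝 (H x))) :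
    ENNReal.ofReal (∫ x, H x ∂μ) ≤ liminf (fun n => ENNReal.ofReal (∫ x, h n x ∂μ)) atTop := by
  have hH0 : ∀ᵐ x ∂μ, 0 ≤ H x := by
    filter_upwards [hl, ae_all_iff.2 h0] with x hx h0x
    exact ge_of_tendsto' hx h0x
  rw [ofReal_integral_eq_lintegral_ofReal hH hH0]
  calc ∫⁻ x, ENNReal.ofReal (H x) ∂μ = ∫⁻ x, liminf (fun n => ENNReal.ofReal (h n x)) atTop ∂μ := by
        refine lintegral_congr_ae ?_
        filter_upwards [hl] with x hx
        exact ((ENNReal.continuous_ofReal.tendsto _).comp hx).liminf_eq.symm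
    _ ≤ liminf (fun n => ∫⁻ x, ENNReal.ofReal (h n x) ∂μ) atTop :=
        lintegral_liminf_le' fun n => (hi n).aemeasurable.ennreal_ofReal
    _ = _ := by
        congr 1; ext n
        rw [ofReal_integral_eq_lintegral_ofReal (hi n) (h0 n)]

theorem poisson_tendsto {w : ℂ} (hw : w ∈ ball (0:ℂ) 1) {s : ℕ → ℝ} (hs : Tendsto s atTop (𝓝 1)) {ζ : ℂ}
    (hζ : ζ ∈ sphere (0:ℂ) 1) :
    Tendsto (fun n => poissonKernel 0 (w / s n) ζ) atTop (𝓝 (poissonKernel 0 w ζ)) := by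
  have hw' : ‖w‖ < 1 := by simpa using hw
  have h1 : ‖ζ‖ = 1 := by simpa using hζ
  have hne : ζ - w ≠ 0 := by
    intro h
    rw [sub_eq_zero.1 h] at h1; linarith
  have hws : Tendsto (fun n => w / (s n : ℂ)) atTop (𝓝 w) := by
    have := ((Complex.continuous_ofReal.tendsto 1).comp hs)
    have h2 := (tendsto_const_nhds (x := w)).div this (by simp)
    rw [Complex.ofReal_one, div_one] at h2
    exact h2
  simp only [poissonKernel_def, sub_zero]
  refine Tendsto.div ?_ ?_ (pow_ne_zero _ (norm_ne_zero_iff.2 hne))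
  · exact (hws.norm.pow 2).const_sub _
  · exact ((hws.const_sub ζ).norm).pow 2

theorem Gp_int {Ω : Set ℂ} (hΩ : IsOpen Ω) {ψ κ : ℂ → ℂ} (P : InvPack Ω ψ κ) {f : ℂ → ℂ}
    (hf : DifferentiableOn ℂ f Ω) {p : ℝ} (hp : 0 ≤ p) {s : ℕ → ℝ} (hs0 : ∀ n, 0 < s n) (hs1 : ∀ n, s n < 1) {C : ℝ}
    (hC : ∀ n, Real.circleAverage (fun ζ => wf p f (ψ (s n * ζ))) 0 1 ≤ C) {G : ℂ → ℂ}
    (hG : ∀ᵐ θ ∂mC, Tendsto (fun n => f (ψ (s n * circleMap 0 1 θ))) atTop (𝓝 (G (circleMap 0 1 θ)))) :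
    CircleIntegrable (fun ζ => ‖G ζ‖ ^ p) 0 1 := by
  have hg : DifferentiableOn ℂ (fun z => f (ψ z)) (ball 0 1) := hf.comp P.diffψ P.mapsψ
  have hc : ∀ n, ContinuousOn (fun ζ : ℂ => ‖f (ψ (s n * ζ))‖ ^ p) (sphere 0 1) := fun n =>
    (scaled_cont hg (hs0 n).le (hs1 n)).norm.rpow_const fun _ _ => Or.inr hp
  have hi : ∀ n, Integrable (fun θ => ‖f (ψ (s n * circleMap 0 1 θ))‖ ^ p) mC := fun n =>
    (cInt_iff (fun ζ : ℂ => ‖f (ψ (s n * ζ))‖ ^ p)).1 (cont_cInt (hc n))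
  rw [cInt_iff]
  refine (fatou_real (f := fun n θ => ‖f (ψ (s n * circleMap 0 1 θ))‖ ^ p) (b := fun _ => 2 * π * C) (B := 2 * π * C)
    (Eventually.of_forall hi) (Eventually.of_forall fun n => Eventually.of_forall fun θ => by positivity)
    (fun n => (hi n).1) ?_ (Eventually.of_forall fun n => ?_) tendsto_const_nhds).1
  · filter_upwards [hG] with θ hθ
    exact hθ.norm.rpow_const (Or.inr hp)
  · have h1 := (cAvg_mono (cont_cInt (hc n)) (cont_cInt (W_cont hΩ P hf p (hs0 n).le (hs1 n))) 
      (fun ζ _ => wf_ge hp f _)).trans (hC n)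
    rw [cAvg_eq, inv_mul_le_iff₀ (by positivity)] at h1
    exact h1

theorem liminf_pt {Ω : Set ℂ} (hΩ : IsOpen Ω) {ψ κ : ℂ → ℂ} (P : InvPack Ω ψ κ) {f : ℂ → ℂ}
    (hf : DifferentiableOn ℂ f Ω) {p : ℝ} (hp : 0 ≤ p) {s : ℕ → ℝ} (hs0 : ∀ n, 0 < s n) (hs1 : ∀ n, s n < 1)
    (hs : Tendsto s atTop (𝓝 1)) {G : ℂ → ℂ}
    (hG : ∀ᵐ θ ∂mC, Tendsto (fun n => f (ψ (s n * circleMap 0 1 θ))) atTop (𝓝 (G (circleMap 0 1 θ))))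
    (hGp : CircleIntegrable (fun ζ => ‖G ζ‖ ^ p) 0 1) {w : ℂ} (hw : w ∈ ball (0:ℂ) 1) (hws : ∀ n, ‖w‖ < s n) :
    ENNReal.ofReal ((Herg (fun ζ => ‖G ζ‖ ^ p) w).re) ≤
      liminf (fun n => ENNReal.ofReal ((Herg (fun ζ => wf p f (ψ (s n * ζ))) (w / s n)).re)) atTop := by
  have hg : DifferentiableOn ℂ (fun z => f (ψ z)) (ball 0 1) := hf.comp P.diffψ P.mapsψ
  have hc : ∀ n, ContinuousOn (fun ζ : ℂ => ‖f (ψ (s n * ζ))‖ ^ p) (sphere 0 1) := fun n =>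
    (scaled_cont hg (hs0 n).le (hs1 n)).norm.rpow_const fun _ _ => Or.inr hp
  have hwb : ∀ n, w / s n ∈ ball (0:ℂ) 1 := fun n => by
    rw [mem_ball_zero_iff, norm_div, Complex.norm_real, Real.norm_of_nonneg (hs0 n).le, div_lt_one (hs0 n)]
    exact hws n
  have hsph : ∀ θ, circleMap 0 1 θ ∈ sphere (0:ℂ) 1 := fun θ => circleMap_mem_sphere _ zero_le_one _
  have hi : ∀ n, CircleIntegrable (fun ζ : ℂ => poissonKernel 0 (w / s n) ζ * ‖f (ψ (s n * ζ))‖ ^ p) 0 1 := fun n =>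
    poisson_mul_int (cont_cInt (hc n)) (hwb n)
  have hWi := fun n => cont_cInt (W_cont hΩ P hf p (hs0 n).le (hs1 n))
  have key := fatou_pt (μ := mC)
    (h := fun n θ => (2 * π)⁻¹ * (poissonKernel 0 (w / s n) (circleMap 0 1 θ) * ‖f (ψ (s n * circleMap 0 1 θ))‖ ^ p))
    (H := fun θ => (2 * π)⁻¹ * (poissonKernel 0 w (circleMap 0 1 θ) * ‖G (circleMap 0 1 θ)‖ ^ p))
    (fun n => ((cInt_iff _).1 (hi n)).const_mul _)
    (fun n => Eventually.of_forall fun θ => by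
      have := poisson_pos (hwb n) (hsph θ)
      positivity)
    (((cInt_iff _).1 (poisson_mul_int hGp hw)).const_mul _)
    (by
      filter_upwards [hG] with θ hθ
      exact ((poisson_tendsto hw hs (hsph θ)).mul (hθ.norm.rpow_const (Or.inr hp))).const_mul _)
  rw [integral_const_mul, ← cAvg_eq (fun ζ => poissonKernel 0 w ζ * ‖G ζ‖ ^ p), ← Herg_re hGp hw] at key
  refine key.trans (liminf_le_liminf (Eventually.of_forall fun n => ENNReal.ofReal_le_ofReal ?_))
  rw [integral_const_mul, ← cAvg_eq (fun ζ => poissonKernel 0 (w / s n) ζ * ‖f (ψ (s n * ζ))‖ ^ p),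
    Herg_re (hWi n) (hwb n)]
  exact cAvg_mono (hi n) (poisson_mul_int (hWi n) (hwb n)) fun ζ hζ =>
    mul_le_mul_of_nonneg_left (wf_ge hp f _) (poisson_pos (hwb n) hζ).le

theorem H_bound {Ω : Set ℂ} (hΩ : IsOpen Ω) {ν : Measure ℂ} (hν : ν Ωᶜ = 0)
    {ψ κ : ℂ → ℂ} (P : InvPack Ω ψ κ) {f : ℂ → ℂ}
    (hf : DifferentiableOn ℂ f Ω) {p : ℝ} (hp : 0 ≤ p) {C2 : ℝ≥0∞} 
    (hB : ∀ s : ℝ, 0 < s → s < 1 → ∫⁻ z in {z | z ∈ Ω ∧ ‖κ z‖ < s},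
      ENNReal.ofReal ((Herg (fun ζ => wf p f (ψ (s * ζ))) (κ z / s)).re) ∂ν ≤ C2)
    {s : ℕ → ℝ} (hs0 : ∀ n, 0 < s n) (hs1 : ∀ n, s n < 1)
    (hs : Tendsto s atTop (𝓝 1)) {G : ℂ → ℂ}
    (hG : ∀ᵐ θ ∂mC, Tendsto (fun n => f (ψ (s n * circleMap 0 1 θ))) atTop (𝓝 (G (circleMap 0 1 θ))))
    (hGp : CircleIntegrable (fun ζ => ‖G ζ‖ ^ p) 0 1) :
    ∫⁻ z, ENNReal.ofReal ((Herg (fun ζ => ‖G ζ‖ ^ p) (κ z)).re) ∂ν ≤ C2 := by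
  set D : ℕ → Set ℂ := fun n => {z | z ∈ Ω ∧ ‖κ z‖ < s n} with hD
  set R : ℕ → ℂ → ℝ≥0∞ := fun n z => ENNReal.ofReal ((Herg (fun ζ => wf p f (ψ (s n * ζ))) (κ z / s n)).re) with hR
  have hDm : ∀ n, MeasurableSet (D n) := fun n =>
    (P.diff.continuousOn.norm.isOpen_inter_preimage hΩ isOpen_Iio).measurableSet
  have hRm : ∀ n, AEMeasurable ((D n).indicator (R n)) ν := fun n => by
    rw [aemeasurable_indicator_iff (hDm n)]
    refine AEMeasurable.ennreal_ofReal (ContinuousOn.aemeasurable ?_ (hDm n))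
    refine Complex.continuous_re.comp_continuousOn ?_
    refine (Herg_diff (cont_cInt (W_cont hΩ P hf p (hs0 n).le (hs1 n)))).continuousOn.comp 
      ((P.diff.continuousOn.mono fun z hz => hz.1).div_const _) fun z hz => ?_
    rw [mem_ball_zero_iff, norm_div, Complex.norm_real, Real.norm_of_nonneg (hs0 n).le, div_lt_one (hs0 n)]
    exact hz.2
  calc _ ≤ ∫⁻ z, liminf (fun n => (D n).indicator (R n) z) atTop ∂ν := by
        refine lintegral_mono_ae ?_
        filter_upwards [ae_mem_of_compl hν] with z hz
        have hw := P.maps z hz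
        have hw' : ‖κ z‖ < 1 := by simpa using hw
        obtain ⟨N, hN⟩ := eventually_atTop.1 (hs.eventually (lt_mem_nhds hw'))
        rw [← liminf_nat_add (fun n => (D n).indicator (R n) z) N]
        have e : (fun n => (D (n + N)).indicator (R (n + N)) z) = fun n => R (n + N) z := by
          ext n
          have hm : z ∈ D (n + N) := ⟨hz, hN _ (Nat.le_add_left _ _)⟩
          rw [Set.indicator_of_mem hm]
        rw [e]
        refine liminf_pt hΩ P hf hp (s := fun n => s (n + N)) (fun n => hs0 _) (fun n => hs1 _) 
          (hs.comp (tendsto_add_atTop_nat N)) ?_ hGp hw (fun n => hN _ (Nat.le_add_left _ _))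
        filter_upwards [hG] with θ hθ using hθ.comp (tendsto_add_atTop_nat N)
    _ ≤ liminf (fun n => ∫⁻ z, (D n).indicator (R n) z ∂ν) atTop := lintegral_liminf_le' hRm
    _ ≤ liminf (fun n => C2) atTop := by
        refine liminf_le_liminf (Eventually.of_forall fun n => ?_)
        rw [lintegral_indicator (hDm n)]
        exact hB (s n) (hs0 n) (hs1 n)
    _ = C2 := liminf_const _

theorem arc_emb : MeasurableEmbedding ((Ioc 0 (2 * π)).domRestrict (circleMap 0 1)) :=
  ContinuousOn.measurableEmbedding measurableSet_Ioc (continuous_circleMap 0 1).continuousOn circleMap_injOn_Ioc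

theorem arc_map : arcLen (ball (0:ℂ) 1) = Measure.map ((Ioc 0 (2 * π)).domRestrict (circleMap 0 1))
    (Measure.comap (Subtype.val : Ioc 0 (2 * π) → ℝ) volume) := by
  have h : (mC : Measure ℝ) = Measure.map (Subtype.val : Ioc 0 (2 * π) → ℝ) (Measure.comap Subtype.val volume) :=
    (map_comap_subtype_coe measurableSet_Ioc volume).symm
  rw [arcLen_ball, h, Measure.map_map (continuous_circleMap 0 1).measurable measurable_subtype_coe]
  rfl

theorem ae_arc {Pr : ℂ → Prop} (h : ∀ᵐ θ ∂mC, Pr (circleMap 0 1 θ)) : ∀ᵐ ξ ∂(arcLen (ball (0:ℂ) 1)), Pr ξ := by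
  rw [arc_map, arc_emb.ae_map_iff]
  have h2 : (mC : Measure ℝ) = Measure.map (Subtype.val : Ioc 0 (2 * π) → ℝ) (Measure.comap Subtype.val volume) :=
    (map_comap_subtype_coe measurableSet_Ioc volume).symm
  rw [h2, (MeasurableEmbedding.subtype_coe measurableSet_Ioc).ae_map_iff] at h
  exact h

theorem int_arc (φ : ℂ → ℝ) : ∫ ξ, φ ξ ∂(arcLen (ball (0:ℂ) 1)) = ∫ θ, φ (circleMap 0 1 θ) ∂mC := by
  rw [arc_map, arc_emb.integral_map]
  have h2 : (mC : Measure ℝ) = Measure.map (Subtype.val : Ioc 0 (2 * π) → ℝ) (Measure.comap Subtype.val volume) :=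
    (map_comap_subtype_coe measurableSet_Ioc volume).symm
  rw [h2, (MeasurableEmbedding.subtype_coe measurableSet_Ioc).integral_map]
  rfl

theorem ps_of_bound {p : ℝ} {μfam : ℝ → Measure ℂ} {h : ℂ → ℂ} {B : ℝ≥0∞} (hB : B < ⊤)
    (H : ∀ᶠ r in 𝓝[<] (0:ℝ), ∫⁻ z, ENNReal.ofReal (‖h z‖ ^ p) ∂(μfam r) ≤ B) : psNormPow p μfam h < ⊤ :=
  (limsup_le_of_le (by isBoundedDefault) H).trans_lt hB

theorem herg_zero {φ : ℂ → ℝ} (h : CircleIntegrable φ 0 1) : (Herg φ 0).re = Real.circleAverage φ 0 1 := by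
  rw [Herg_re h (by simp)]
  refine Real.circleAverage_congr_sphere fun ζ hζ => ?_
  have h1 : ‖ζ‖ = 1 := by simpa using hζ
  simp [poissonKernel_def, h1]

/-- Every `f ∈ H^p_u(Ω)` factors as `f = I·F` with `I` `Ω`-inner and `F`
`Ω`-outer, and moreover `I, F ∈ H^p_u(Ω)`. -/
theorem stmt10 (Ω : Set ℂ) (hΩ : AnalyticJordanDomain Ω)
    (u : ℂ → ℝ) (hu : IsExhaustion u Ω)
    (ν : Measure ℂ) (hν : IsRieszMeasure u Ω ν) (hfin : ν Set.univ < ⊤)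
    (μfam : ℝ → Measure ℂ) (hμ : ∀ r : ℝ, r < 0 → IsMAMeasure u Ω ν r (μfam r))
    (ψ : ℂ → ℂ) (hψ : IsConformalOnto ψ Ω)
    (p : ℝ) (hp : 1 ≤ p)
    (f : ℂ → ℂ) (hf : MemPS p Ω μfam f) :
    ∃ I F : ℂ → ℂ, OmegaInner Ω ψ I ∧ OmegaOuter Ω ψ F ∧
      (∀ z ∈ Ω, f z = I z * F z) ∧ MemPS p Ω μfam I ∧ MemPS p Ω μfam F := by
  have hp0 : 0 ≤ p := by linarith
  have hop := hΩ.isOpen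
  obtain ⟨κ, P⟩ := exists_inv hop hψ
  have E := exh_of P
  -- contexts
  have hctx : ∀ᶠ r in 𝓝[<] (0:ℝ), ∃ νr, Ctx Ω u ν r νr ∧ μfam r = νr - ν.restrict {z | z ∈ Ω ∧ r ≤ u z} := by
    filter_upwards [self_mem_nhdsWithin, 
      mem_nhdsWithin_of_mem_nhds (lt_mem_nhds (hu.neg 0 hΩ.zero_mem))] with r hr hr0
    obtain ⟨νr, h1, h2⟩ := hμ r hr
    exact ⟨νr, ⟨hop, hu.subh.1, (hu.exh r hr).1, (hu.exh r hr).2, hν, hfin, h1, 0, hΩ.zero_mem, hr0⟩, h2⟩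
  have hν0 : ν univ ≠ 0 := by
    obtain ⟨r, νr, C, -⟩ := hctx.exists
    exact C.ν_ne E
  -- bounded functions
  have hbd : ∀ h : ℂ → ℂ, (∀ z ∈ Ω, ‖h z‖ ≤ 1) → psNormPow p μfam h < ⊤ := by
    intro h h1
    refine ps_of_bound hfin ?_
    filter_upwards [hctx] with r ⟨νr, C, hr⟩
    have hle : μfam r ≤ νr := hr ▸ Measure.sub_le
    calc _ ≤ ∫⁻ z, ENNReal.ofReal (‖h z‖ ^ p) ∂νr := lintegral_mono' hle le_rfl
      _ ≤ ∫⁻ z, 1 ∂νr := by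
        refine lintegral_mono_ae ?_
        filter_upwards [ae_mem_of_compl C.hνr.1] with z hz
        exact ENNReal.ofReal_le_one.2 (Real.rpow_le_one (norm_nonneg _) (h1 z hz) hp0)
      _ ≤ _ := by rw [lintegral_one]; exact C.mass E
  by_cases hne : ∃ z ∈ ball (0:ℂ) 1, f (ψ z) ≠ 0
  swap
  · push Not at hne
    have hf0 : ∀ z ∈ Ω, f z = 0 := fun z hz => by
      rw [← P.right z hz]; exact hne _ (P.maps z hz)
    refine ⟨fun _ => 1, fun _ => 0, ⟨differentiableOn_const _, Eventually.of_forall fun ξ => ⟨1, fun C hC => tendsto_const_nhds, by simp⟩⟩,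
      ⟨differentiableOn_const _, fun _ => 0, Eventually.of_forall fun ξ C hC => tendsto_const_nhds, by simp⟩, 
      fun z hz => by rw [hf0 z hz]; simp, ⟨differentiableOn_const _, hbd _ (by simp)⟩, 
      ⟨differentiableOn_const _, hbd _ (by simp)⟩⟩
  have hg : DifferentiableOn ℂ (fun z => f (ψ z)) (ball 0 1) := hf.1.comp P.diffψ P.mapsψ
  obtain ⟨M, hM1, hM2⟩ := exists_between hf.2
  have hMe : ∀ᶠ r in 𝓝[<] (0:ℝ), ∫⁻ z, ENNReal.ofReal (‖f z‖ ^ p) ∂(μfam r) < M :=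
    eventually_lt_of_limsup_lt hM1 (by isBoundedDefault)
  set C2 : ℝ≥0∞ := ENNReal.ofReal (2 ^ p) * (M + ν univ) + 3 * ν univ with hC2d
  have hC2 : C2 < ⊤ := ENNReal.add_lt_top.2 
    ⟨ENNReal.mul_lt_top ENNReal.ofReal_lt_top (ENNReal.add_lt_top.2 ⟨hM2, hfin⟩), 
      ENNReal.mul_lt_top (by simp) hfin⟩
  have hB : ∀ s : ℝ, 0 < s → s < 1 → ∫⁻ z in {z | z ∈ Ω ∧ ‖κ z‖ < s},
      ENNReal.ofReal ((Herg (fun ζ => wf p f (ψ (s * ζ))) (κ z / s)).re) ∂ν ≤ C2 := by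
    intro s hs0 hs1
    have hcb : closedBall (0:ℂ) s ⊆ ball 0 1 := closedBall_subset_ball hs1
    have hcc : ContinuousOn (fun w => u (ψ w)) (closedBall 0 s) :=
      hu.subh.1.comp (P.diffψ.continuousOn.mono hcb) fun w hw => P.mapsψ w (hcb hw)
    obtain ⟨w0, hw0, hw0m⟩ := (isCompact_closedBall (0:ℂ) s).exists_isMaxOn ⟨0, by simp [hs0.le]⟩ hcc
    have hneg : u (ψ w0) < 0 := hu.neg _ (P.mapsψ _ (hcb hw0))
    obtain ⟨r, ⟨νr, C, hr⟩, hrM, hrs⟩ := (hctx.and (hMe.and 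
      (mem_nhdsWithin_of_mem_nhds (lt_mem_nhds hneg)))).exists
    rw [hr] at hrM
    refine disc_bound C E P hf.1 hp0 hs0 hs1 (fun z hz hzs => ?_) hrM.le
    have h1 : κ z ∈ closedBall (0:ℂ) s := by rw [mem_closedBall_zero_iff]; exact hzs.le
    have h2 : u (ψ (κ z)) ≤ u (ψ w0) := hw0m h1
    rw [P.right z hz] at h2
    exact h2.trans_lt hrs
  obtain ⟨ρ, C, hρ0, hρ1, hC⟩ := avg_bound hop hν.1 hν0 P hf.1 hC2 hB
  set s : ℕ → ℝ := fun n => max ρ (sqn n) with hsd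
  have hs0 : ∀ n, 0 < s n := fun n => hρ0.trans_le (le_max_left _ _)
  have hs1 : ∀ n, s n < 1 := fun n => max_lt hρ1 (sqn1 n)
  have hs : Tendsto s atTop (𝓝 1) := by
    have := (tendsto_const_nhds (x := ρ)).max sqnl
    rwa [max_eq_right hρ1.le] at this
  have hCn : ∀ n, Real.circleAverage (fun ζ => wf p f (ψ (s n * ζ))) 0 1 ≤ C := fun n =>
    hC _ (le_max_left _ _) (hs1 n)
  have hCn1 : ∀ n, Real.circleAverage (fun ζ => ‖f (ψ (s n * ζ))‖) 0 1 ≤ C := fun n =>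
    (cAvg_mono (cont_cInt (scaled_cont hg (hs0 n).le (hs1 n)).norm) 
      (cont_cInt (W_cont hop P hf.1 p (hs0 n).le (hs1 n))) (fun ζ _ => wf_ge1 hp f _)).trans (hCn n)
  obtain ⟨G, Fd, Fb, DF⟩ := disc_fact hg (fun n => (hs0 n).le) hs1 hs hCn1 hne
  have hG : ∀ᵐ θ ∂mC, Tendsto (fun n => f (ψ (s n * circleMap 0 1 θ))) atTop (𝓝 (G (circleMap 0 1 θ))) := by
    filter_upwards [DF.NTg] with θ hθ using hθ.radial (fun n => (hs0 n).le) hs1 hs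
  have hGp := Gp_int hop P hf.1 hp0 hs0 hs1 hCn hG
  have hHb := H_bound hop hν.1 P hf.1 hp0 hB hs0 hs1 hs hG hGp
  have hFd : DifferentiableOn ℂ Fd (ball 0 1) := by
    have : Fd = fun z => Complex.exp (Herg (fun ζ => Real.log ‖G ζ‖) z) := funext DF.Fd_def
    rw [this]; exact (Herg_diff DF.Glog).cexp
  have hFd0 : ∀ z, Fd z ≠ 0 := fun z => by rw [DF.Fd_def]; exact Complex.exp_ne_zero _
  have hmaps : MapsTo κ Ω (ball 0 1) := P.maps
  set F : ℂ → ℂ := fun z => Fd (κ z) with hFdef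
  set I : ℂ → ℂ := fun z => f z / Fd (κ z) with hIdef
  have hFdiff : DifferentiableOn ℂ F Ω := hFd.comp P.diff hmaps
  have hIdiff : DifferentiableOn ℂ I Ω := hf.1.div hFdiff fun z _ => hFd0 _
  have hψ0 : ψ 0 = 0 := hψ.2.2.2
  have hκ0 : κ 0 = 0 := by
    have := P.left 0 (by simp)
    rwa [hψ0] at this
  refine ⟨I, F, ⟨hIdiff, ?_⟩, ⟨hFdiff, Fb, ?_, ?_⟩, fun z hz => ?_, ⟨hIdiff, hbd I fun z hz => ?_⟩, ⟨hFdiff, ?_⟩⟩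
  · apply ae_arc
    filter_upwards [DF.NTg, DF.G0, DF.NTF, DF.eq] with θ h1 h2 h3 h4
    have hb0 : Fb (circleMap 0 1 θ) ≠ 0 := by rw [← norm_ne_zero_iff, h4, norm_ne_zero_iff]; exact h2
    refine ⟨_, (h1.div h3 hb0).congr fun z hz => ?_, ?_⟩
    · simp only [Function.comp, hIdef, P.left z hz]
    · rw [norm_div, h4, div_self (norm_ne_zero_iff.2 h2)]
  · apply ae_arc
    filter_upwards [DF.NTF] with θ h
    refine h.congr fun z hz => ?_
    simp only [Function.comp, hFdef, P.left z hz]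
  · simp only [hFdef, hψ0, hκ0]
    rw [DF.Fd_def, Complex.norm_exp, Real.log_exp, herg_zero DF.Glog, cAvg_eq, int_arc (fun ξ => Real.log ‖Fb ξ‖)]
    congr 1
    refine integral_congr_ae ?_
    filter_upwards [DF.eq] with θ h
    rw [h]
  · simp only [hIdef, hFdef]
    rw [div_mul_cancel₀ _ (hFd0 _)]
  · simp only [hIdef]
    rw [norm_div]
    refine div_le_one_of_le₀ ?_ (norm_nonneg _)
    have := DF.le (κ z) (P.maps z hz)
    rwa [P.right z hz] at this
  · refine ps_of_bound hC2 ?_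
    have hHd : DifferentiableOn ℂ (fun z => Herg (fun ζ => ‖G ζ‖ ^ p) (κ z)) Ω := (Herg_diff hGp).comp P.diff hmaps
    have hpw : ∀ z ∈ Ω, ‖F z‖ ^ p ≤ (Herg (fun ζ => ‖G ζ‖ ^ p) (κ z)).re := fun z hz => DF.pow hGp (P.maps z hz)
    filter_upwards [hctx] with r ⟨νr, C, hr⟩
    have hle : μfam r ≤ νr := hr ▸ Measure.sub_le
    calc _ ≤ ∫⁻ z, ENNReal.ofReal (‖F z‖ ^ p) ∂νr := lintegral_mono' hle le_rfl
      _ ≤ ∫⁻ z, ENNReal.ofReal ((Herg (fun ζ => ‖G ζ‖ ^ p) (κ z)).re) ∂νr := by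
        refine lintegral_mono_ae ?_
        filter_upwards [ae_mem_of_compl C.hνr.1] with z hz
        exact ENNReal.ofReal_le_ofReal (hpw z hz)
      _ ≤ ∫⁻ z, ENNReal.ofReal ((Herg (fun ζ => ‖G ζ‖ ^ p) (κ z)).re) ∂ν := 
        C.harm_le E (fun z hz => re_cd hop hHd hz) 
          (fun z hz => (Real.rpow_nonneg (norm_nonneg _) _).trans (hpw z hz)) (fun z hz => lap_re hop hHd hz)
      _ ≤ C2 := hHb

end
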